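/- arXiv:1508.00464 — 2 statements merged into one kernel-verified Lean document; each statement's English description precedes it below -/
import Mathlib

section
/- The family of polarizations, parametrized by 𝕊^{d-1} × [0,∞), acting on the metric space ℳ(ℝ^d) of equivalence classes of Borel subsets of ℝ^d of finite Lebesgue measure with metric d₁(A,B) = m(A Δ B), is a ⋆-compatible symmetrization space; for every X ∈ ℳ(ℝ^d) the orbit X^𝒫 = {X^{s_1…s_n} : n ≥ 1, s_i ∈ 𝕊^{d-1} × [0,∞)} has compact closure in (ℳ(ℝ^d), d₁); and the function J(X) = ∫_X |x|²/(1+|x|²) dx is a ⋆-compatible asymmetry function on this symmetrization space which is strict on 𝕊^{d-1} × (0,∞). -/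
/-! A polarization acts separately on each pair `{x, σ x}` of points exchanged by the mirror
reflection `σ`: the larger of the two values of the indicator function is placed on the side
`⟪x, e⟫ ≤ r`, which for `r ≥ 0` is the side nearer to the origin. As `σ` preserves Lebesgue measure,
integrals are compared by comparing the sums over mirror pairs (`lintegral_le_of_pair`). Applied to
`(a, b) ↦ (max a b, min a b)`, which is nonexpansive in `ℓ¹`, this gives nonexpansiveness of
polarization; with the radially increasing weight `|x|² / (1 + |x|²)` it gives the decrease of `J`,
and strictness for `r > 0`, since then the weights differ off the mirror. Centered balls are
invariant because `σ` moves points of the side `⟪x, e⟫ ≤ r` away from the origin.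

Continuity in the parameter holds because `A^s` and `A^t` differ only where the reflected copies of
`A` differ, or where the half-spaces do; the former is small by continuity of the action of measure
preserving maps, the latter by dominated convergence, the hyperplane being null
(`tendsto_polarOp`).

If `A` has the measure of a ball `B` and is fixed by all polarizations but differs from `B`, then
`A \ B` and `B \ A` both have positive measure. The mirror exchanging a density point of one with
a density point of the other maps a set of positive measure of `B \ A` into `A \ B`, and the
corresponding polarization alters `A` (`symmDiff_ball_null_of_fixed`).

For the compactness of orbits, the indicator function of `X` is approximated in `L¹` by a continuous
compactly supported `g ≥ 0`. Polarizing `g` along with `X` preserves the `L¹` error, the support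
radius, the upper bound and the modulus of continuity, so every orbit element is close to a member
of a uniformly equicontinuous and bounded family. Rounding the values on a finite net shows that the
orbit is totally bounded in `L¹` (`exists_discretization`); a limit of indicator functions is turned
into a set by thresholding at `1 / 2`.

That `J` is strictly minimized by balls is the bathtub principle: with `c` the value of the weight
`w` on the boundary sphere of `B`, the function `(1_A - 1_B) (w - c)` is nonnegative and vanishes
only on that sphere and off `A Δ B`. -/

open MeasureTheory ProbabilityTheory Filter Topology RealInnerProductSpace NNReal

noncomputable section

abbrev Euc (d : ℕ) : Type := EuclideanSpace ℝ (Fin d)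

def polarize {d : ℕ} (e : Euc d) (r : ℝ) (X : Set (Euc d)) : Set (Euc d) :=
  {x | (⟪x, e⟫ ≤ r ∧ (x ∈ X ∨ x - (2 * (⟪x, e⟫ - r)) • e ∈ X)) ∨
       (r < ⟪x, e⟫ ∧ x ∈ X ∧ x - (2 * (⟪x, e⟫ - r)) • e ∈ X)}

def IsSphericalRearrangement {d : ℕ} (star : Set (Euc d) → Set (Euc d)) : Prop :=
  ∀ A : Set (Euc d), MeasurableSet A → volume A < ⊤ →
    (∃ R : ℝ, star A = Metric.ball (0 : Euc d) R) ∧ volume (star A) = volume A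

def InOrbit {P : Type*} {α : Type*} (op : P → α → α) (X Y : α) : Prop :=
  ∃ l : List P, l ≠ [] ∧ Y = l.foldl (fun B s => op s B) X

def asymmetryJ {d : ℕ} (A : Set (Euc d)) : ℝ :=
  ∫ x in A, ‖x‖ ^ 2 / (1 + ‖x‖ ^ 2)

/-- The polarization associated with a parameter in `𝕊^{d-1} × [0, ∞)`. -/
def polarOp {d : ℕ} (p : Metric.sphere (0 : Euc d) 1 × ℝ≥0) (X : Set (Euc d)) :
    Set (Euc d) :=
  polarize (p.1 : Euc d) (p.2 : ℝ) X


/-! ### Mirror reflections and polarization -/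

/-- The reflection across the hyperplane `{x | ⟪x, e⟫ = r}`, for a unit vector `e`. -/
def mirror {d : ℕ} (e : Euc d) (r : ℝ) (x : Euc d) : Euc d :=
  x - (2 * (⟪x, e⟫ - r)) • e

lemma inner_mirror {d : ℕ} {e : Euc d} (he : ‖e‖ = 1) (r : ℝ) (x : Euc d) :
    ⟪mirror e r x, e⟫ = 2 * r - ⟪x, e⟫ := by
  simp only [mirror, inner_sub_left, real_inner_smul_left, real_inner_self_eq_norm_sq, he]
  ring

lemma mirror_mirror {d : ℕ} {e : Euc d} (he : ‖e‖ = 1) (r : ℝ) (x : Euc d) :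
    mirror e r (mirror e r x) = x := by
  have h := inner_mirror he r x
  rw [mirror, h, mirror, sub_sub, ← add_smul]
  ring_nf
  simp

lemma mirror_eq_self {d : ℕ} {e : Euc d} {r : ℝ} {x : Euc d} (h : ⟪x, e⟫ = r) :
    mirror e r x = x := by
  simp [mirror, h]

lemma norm_sq_mirror {d : ℕ} {e : Euc d} (he : ‖e‖ = 1) (r : ℝ) (x : Euc d) :
    ‖mirror e r x‖ ^ 2 = ‖x‖ ^ 2 - 4 * r * (⟪x, e⟫ - r) := by
  rw [mirror, norm_sub_sq_real, real_inner_smul_right, norm_smul, he, mul_one,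
    Real.norm_eq_abs, sq_abs]
  ring

lemma dist_mirror_mirror {d : ℕ} {e : Euc d} (he : ‖e‖ = 1) (r : ℝ) (x y : Euc d) :
    dist (mirror e r x) (mirror e r y) = dist x y := by
  have h : mirror e r x - mirror e r y = mirror e 0 (x - y) := by
    simp only [mirror, inner_sub_left]
    module
  rw [dist_eq_norm, dist_eq_norm, h, ← sq_eq_sq₀ (norm_nonneg _) (norm_nonneg _),
    norm_sq_mirror he]
  ring

/-- For points on opposite sides of the mirror, reflecting one of them brings them closer. -/
lemma dist_mirror_le {d : ℕ} {e : Euc d} (he : ‖e‖ = 1) {r : ℝ} {x y : Euc d}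
    (hx : ⟪x, e⟫ ≤ r) (hy : r ≤ ⟪y, e⟫) : dist x (mirror e r y) ≤ dist x y := by
  rw [dist_eq_norm, dist_eq_norm, ← sq_le_sq₀ (norm_nonneg _) (norm_nonneg _)]
  have h : x - mirror e r y = (x - y) + (2 * (⟪y, e⟫ - r)) • e := by
    simp only [mirror]; module
  rw [h, norm_add_sq_real, real_inner_smul_right, norm_smul, he, mul_one,
    Real.norm_eq_abs, sq_abs, inner_sub_left]
  nlinarith [mul_nonneg (sub_nonneg.2 hx) (sub_nonneg.2 hy)]

lemma continuous_mirror {d : ℕ} (e : Euc d) (r : ℝ) : Continuous (mirror e r) := by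
  unfold mirror; fun_prop

/-- By the Mazur–Ulam theorem a mirror reflection is a linear isometry followed by a
translation, hence preserves Lebesgue measure. -/
lemma measurePreserving_mirror {d : ℕ} {e : Euc d} (he : ‖e‖ = 1) (r : ℝ) :
    MeasurePreserving (mirror e r) (volume : Measure (Euc d)) volume := by
  let f : Euc d ≃ᵢ Euc d :=
    { toFun := mirror e r
      invFun := mirror e r
      left_inv := mirror_mirror he r
      right_inv := mirror_mirror he r
      isometry_toFun := Isometry.of_dist_eq (dist_mirror_mirror he r) }
  have h := (measurePreserving_add_right volume (f 0)).comp
    (LinearIsometryEquiv.measurePreserving f.toRealLinearIsometryEquiv)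
  have hf : mirror e r = (fun x => x + f 0) ∘ f.toRealLinearIsometryEquiv := by
    funext x
    simp only [Function.comp_apply, IsometryEquiv.toRealLinearIsometryEquiv_apply,
      sub_add_cancel]
    rfl
  rwa [hf]

/-- Integrals may be compared after symmetrizing the integrands over the pairs
`{x, mirror e r x}`. -/
lemma lintegral_le_of_pair {d : ℕ} {e : Euc d} (he : ‖e‖ = 1) (r : ℝ) {f g : Euc d → ENNReal}
    (hf : Measurable f) (hg : Measurable g)
    (h : ∀ x, f x + f (mirror e r x) ≤ g x + g (mirror e r x)) :
    ∫⁻ x, f x ≤ ∫⁻ x, g x := by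
  have hm := measurePreserving_mirror he r
  have key : ∀ u : Euc d → ENNReal, Measurable u →
      ∫⁻ x, (u x + u (mirror e r x)) = 2 * ∫⁻ x, u x := by
    intro u hu
    rw [lintegral_add_left hu, hm.lintegral_comp hu, two_mul]
  have h2 := lintegral_mono (μ := volume) h
  rw [key f hf, key g hg] at h2
  exact (ENNReal.mul_le_mul_iff_right (by simp) (by simp)).1 h2

/-- The polarization of a real function: the larger of the two values on each mirror pair is
placed on the side `⟪x, e⟫ ≤ r`. -/
def polF {d : ℕ} (e : Euc d) (r : ℝ) (u : Euc d → ℝ) (x : Euc d) : ℝ :=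
  if ⟪x, e⟫ ≤ r then max (u x) (u (mirror e r x)) else min (u x) (u (mirror e r x))

/-- The real-valued indicator function of a set. -/
def ind {d : ℕ} (A : Set (Euc d)) : Euc d → ℝ := A.indicator (fun _ => 1)

lemma mem_polarize {d : ℕ} {e : Euc d} {r : ℝ} {X : Set (Euc d)} {x : Euc d} :
    x ∈ polarize e r X ↔ (⟪x, e⟫ ≤ r ∧ (x ∈ X ∨ mirror e r x ∈ X)) ∨
       (r < ⟪x, e⟫ ∧ x ∈ X ∧ mirror e r x ∈ X) := Iff.rfl

lemma ind_polarize {d : ℕ} (e : Euc d) (r : ℝ) (A : Set (Euc d)) :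
    ind (polarize e r A) = polF e r (ind A) := by
  classical
  ext x
  simp only [ind, polF, Set.indicator_apply, mem_polarize]
  by_cases h : ⟪x, e⟫ ≤ r
  · by_cases h1 : x ∈ A <;> by_cases h2 : mirror e r x ∈ A <;> simp [h, h1, h2, not_lt.2 h]
  · by_cases h1 : x ∈ A <;> by_cases h2 : mirror e r x ∈ A <;>
      simp [h, h1, h2, not_le.1 h]

/-- On a mirror pair, a polarized function takes the maximum and the minimum of the original
two values, on sides that do not depend on the function. -/
lemma polF_pair {d : ℕ} {e : Euc d} (he : ‖e‖ = 1) (r : ℝ) (x : Euc d) :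
    (∀ u, polF e r u x = max (u x) (u (mirror e r x)) ∧
      polF e r u (mirror e r x) = min (u x) (u (mirror e r x))) ∨
    (∀ u, polF e r u x = min (u x) (u (mirror e r x)) ∧
      polF e r u (mirror e r x) = max (u x) (u (mirror e r x))) := by
  rcases lt_trichotomy (⟪x, e⟫ : ℝ) r with h | h | h
  · left
    intro u
    simp only [polF, inner_mirror he, mirror_mirror he, h.le, if_true]
    rw [if_neg (by linarith), min_comm]
    simp
  · left
    intro u
    simp [polF, mirror_eq_self h]
  · right
    intro u
    simp only [polF, inner_mirror he, mirror_mirror he, h.not_ge, if_false]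
    rw [if_pos (by linarith), max_comm]
    simp

lemma measurable_polF {d : ℕ} (e : Euc d) (r : ℝ) {u : Euc d → ℝ} (hu : Measurable u) :
    Measurable (polF e r u) := by
  have h := hu.comp (continuous_mirror e r).measurable
  refine Measurable.ite (measurableSet_le (by fun_prop) measurable_const) (hu.max h) (hu.min h)

lemma measurable_ind {d : ℕ} {A : Set (Euc d)} (hA : MeasurableSet A) : Measurable (ind A) :=
  measurable_const.indicator hA

lemma measurableSet_polarize {d : ℕ} (e : Euc d) (r : ℝ) {A : Set (Euc d)}
    (hA : MeasurableSet A) : MeasurableSet (polarize e r A) := by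
  have hm := hA.preimage (continuous_mirror e r).measurable
  have h1 : MeasurableSet {x : Euc d | ⟪x, e⟫ ≤ r} :=
    measurableSet_le (by fun_prop) measurable_const
  have h2 : MeasurableSet {x : Euc d | r < ⟪x, e⟫} :=
    measurableSet_lt measurable_const (by fun_prop)
  exact (h1.inter (hA.union hm)).union (h2.inter (hA.inter hm))

/-- `(a, b) ↦ (max a b, min a b)` is nonexpansive for the `ℓ¹` norm. -/
lemma abs_max_sub_add_abs_min_sub_le (a b a' b' : ℝ) :
    |max a b - max a' b'| + |min a b - min a' b'| ≤ |a - a'| + |b - b'| := by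
  rcases le_total a b with h | h <;> rcases le_total a' b' with h' | h' <;>
    simp only [h, h', max_eq_left, max_eq_right, min_eq_left, min_eq_right] <;>
    grind

lemma lintegral_polF_sub_le {d : ℕ} {e : Euc d} (he : ‖e‖ = 1) (r : ℝ) {u v : Euc d → ℝ}
    (hu : Measurable u) (hv : Measurable v) :
    ∫⁻ x, ‖polF e r u x - polF e r v x‖ₑ ≤ ∫⁻ x, ‖u x - v x‖ₑ := by
  refine lintegral_le_of_pair he r
    ((measurable_polF e r hu).sub (measurable_polF e r hv)).enorm (hu.sub hv).enorm fun x => ?_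
  simp only [Real.enorm_eq_ofReal_abs]
  rw [← ENNReal.ofReal_add (abs_nonneg _) (abs_nonneg _),
    ← ENNReal.ofReal_add (abs_nonneg _) (abs_nonneg _)]
  refine ENNReal.ofReal_le_ofReal ?_
  have := abs_max_sub_add_abs_min_sub_le (u x) (u (mirror e r x)) (v x) (v (mirror e r x))
  rcases polF_pair he r x with h | h
  · rw [(h u).1, (h u).2, (h v).1, (h v).2]; exact this
  · rw [(h u).1, (h u).2, (h v).1, (h v).2, add_comm]; exact this

lemma volume_symmDiff_eq {d : ℕ} {A B : Set (Euc d)} (hA : MeasurableSet A)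
    (hB : MeasurableSet B) : volume (symmDiff A B) = ∫⁻ x, ‖ind A x - ind B x‖ₑ := by
  classical
  rw [← lintegral_indicator_one (hA.symmDiff hB)]
  congr 1
  ext x
  by_cases h1 : x ∈ A <;> by_cases h2 : x ∈ B <;> simp [ind, Set.mem_symmDiff, h1, h2]

lemma volume_symmDiff_polarize_le {d : ℕ} {e : Euc d} (he : ‖e‖ = 1) (r : ℝ)
    {A B : Set (Euc d)} (hA : MeasurableSet A) (hB : MeasurableSet B) :
    volume (symmDiff (polarize e r A) (polarize e r B)) ≤ volume (symmDiff A B) := by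
  rw [volume_symmDiff_eq hA hB, volume_symmDiff_eq (measurableSet_polarize e r hA)
    (measurableSet_polarize e r hB), ind_polarize, ind_polarize]
  exact lintegral_polF_sub_le he r (measurable_ind hA) (measurable_ind hB)

lemma polarize_polarize {d : ℕ} {e : Euc d} (he : ‖e‖ = 1) (r : ℝ) (A : Set (Euc d)) :
    polarize e r (polarize e r A) = polarize e r A := by
  ext x
  rcases lt_trichotomy (⟪x, e⟫ : ℝ) r with h | h | h
  · have h1 : r < 2 * r - ⟪x, e⟫ := by linarith
    simp only [mem_polarize, inner_mirror he, mirror_mirror he, h.le, h.not_gt, h1, h1.not_ge]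
    tauto
  · simp [mem_polarize, mirror_eq_self h, h]
  · have h1 : 2 * r - ⟪x, e⟫ < r := by linarith
    simp only [mem_polarize, inner_mirror he, mirror_mirror he, h, h.not_ge, h1.le, h1.not_gt]
    tauto

lemma volume_polarize {d : ℕ} {e : Euc d} (he : ‖e‖ = 1) (r : ℝ)
    {A : Set (Euc d)} (hA : MeasurableSet A) : volume (polarize e r A) = volume A := by
  have h0 : ∀ B : Set (Euc d), MeasurableSet B → volume B = ∫⁻ x, ENNReal.ofReal (ind B x) := by
    intro B hB
    rw [← lintegral_indicator_one hB]
    congr 1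
    ext x
    by_cases h1 : x ∈ B <;> simp [ind, h1]
  have hs := measurableSet_polarize e r hA
  have key : ∀ x, ENNReal.ofReal (ind (polarize e r A) x) +
      ENNReal.ofReal (ind (polarize e r A) (mirror e r x)) =
      ENNReal.ofReal (ind A x) + ENNReal.ofReal (ind A (mirror e r x)) := by
    intro x
    rw [ind_polarize]
    rcases polF_pair he r x with h | h <;> rw [(h _).1, (h _).2] <;>
      rcases le_total (ind A x) (ind A (mirror e r x)) with h' | h' <;>
      simp [h', add_comm]
  rw [h0 _ hA, h0 _ hs]
  exact le_antisymm
    (lintegral_le_of_pair he r (measurable_ind hs).ennreal_ofReal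
      (measurable_ind hA).ennreal_ofReal fun x => (key x).le)
    (lintegral_le_of_pair he r (measurable_ind hA).ennreal_ofReal
      (measurable_ind hs).ennreal_ofReal fun x => (key x).ge)

/-! ### Balls -/

/-- For `0 ≤ r`, the side `⟪x, e⟫ ≤ r` of a mirror pair is the one nearer to the origin. -/
lemma norm_le_norm_mirror {d : ℕ} {e : Euc d} (he : ‖e‖ = 1) {r : ℝ} (hr : 0 ≤ r) {x : Euc d}
    (hx : ⟪x, e⟫ ≤ r) : ‖x‖ ≤ ‖mirror e r x‖ := by
  rw [← sq_le_sq₀ (norm_nonneg _) (norm_nonneg _), norm_sq_mirror he]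
  nlinarith [mul_nonneg hr (sub_nonneg.2 hx)]

lemma norm_mirror_le_norm {d : ℕ} {e : Euc d} (he : ‖e‖ = 1) {r : ℝ} (hr : 0 ≤ r) {x : Euc d}
    (hx : r ≤ ⟪x, e⟫) : ‖mirror e r x‖ ≤ ‖x‖ := by
  rw [← sq_le_sq₀ (norm_nonneg _) (norm_nonneg _), norm_sq_mirror he]
  nlinarith [mul_nonneg hr (sub_nonneg.2 hx)]

lemma norm_mirror_lt_norm {d : ℕ} {e : Euc d} (he : ‖e‖ = 1) {r : ℝ} (hr : 0 < r) {x : Euc d}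
    (hx : r < ⟪x, e⟫) : ‖mirror e r x‖ < ‖x‖ := by
  rw [← sq_lt_sq₀ (norm_nonneg _) (norm_nonneg _), norm_sq_mirror he]
  nlinarith [mul_pos hr (sub_pos.2 hx)]

lemma polarize_ball {d : ℕ} {e : Euc d} (he : ‖e‖ = 1) {r : ℝ} (hr : 0 ≤ r) (R : ℝ) :
    polarize e r (Metric.ball (0 : Euc d) R) = Metric.ball 0 R := by
  ext x
  simp only [mem_polarize, mem_ball_zero_iff]
  rcases le_or_gt (⟪x, e⟫ : ℝ) r with h | h
  · have := norm_le_norm_mirror he hr h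
    simp only [h, h.not_gt, true_and, false_and, or_false]
    exact ⟨fun h => h.elim id fun h => this.trans_lt h, Or.inl⟩
  · have := norm_mirror_le_norm he hr h.le
    simp only [h, h.not_ge, true_and, false_and, false_or]
    exact ⟨fun h => h.1, fun h => ⟨h, this.trans_lt h⟩⟩

lemma volume_symmDiff_ball_ball {d : ℕ} {R R' : ℝ}
    (h : volume (Metric.ball (0 : Euc d) R) = volume (Metric.ball (0 : Euc d) R')) :
    volume (symmDiff (Metric.ball (0 : Euc d) R) (Metric.ball (0 : Euc d) R')) = 0 := by
  wlog hle : R ≤ R' generalizing R R'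
  · rw [symmDiff_comm]; exact this h.symm (le_of_not_ge hle)
  have hsub := Metric.ball_subset_ball (x := (0 : Euc d)) hle
  rw [Set.symmDiff_def, Set.sdiff_eq_empty.2 hsub, Set.empty_union,
    measure_sdiff hsub measurableSet_ball.nullMeasurableSet measure_ball_lt_top.ne, h,
    tsub_self]

lemma volume_sdiff_eq_of_volume_eq {d : ℕ} {A B : Set (Euc d)} (hA : MeasurableSet A)
    (hB : MeasurableSet B) (hAB : volume A = volume B) (hfin : volume B < ⊤) :
    volume (A \ B) = volume (B \ A) := by
  have h1 := measure_inter_add_sdiff (μ := volume) A hB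
  have h2 := measure_inter_add_sdiff (μ := volume) B hA
  have hf : volume (A ∩ B) ≠ ⊤ := ((measure_mono Set.inter_subset_right).trans_lt hfin).ne
  rw [Set.inter_comm, ← hAB, ← h1] at h2
  exact ((ENNReal.add_right_inj hf).1 h2).symm

/-- Given Lebesgue density points `x ≠ y` of `U` and `V`, the mirror exchanging `x` and `y`
maps a set of positive measure of `V` into `U`. -/
lemma exists_mirror_pos {d : ℕ} {U V : Set (Euc d)} (hU : MeasurableSet U)
    (hV : MeasurableSet V) (hU0 : volume U ≠ 0) (hV0 : volume V ≠ 0)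
    (hlt : ∀ x ∈ U, ∀ y ∈ V, ‖y‖ < ‖x‖) :
    ∃ e : Euc d, ‖e‖ = 1 ∧ ∃ r : ℝ, 0 ≤ r ∧ volume (V ∩ mirror e r ⁻¹' U) ≠ 0 := by
  have hex : ∀ W : Set (Euc d), MeasurableSet W → volume W ≠ 0 → ∃ x ∈ W,
      Tendsto (fun ρ => volume (W ∩ Metric.closedBall x ρ) / volume (Metric.closedBall x ρ))
        (𝓝[>] 0) (𝓝 1) := by
    intro W hWm hW
    have hne : NeBot (ae (volume.restrict W)) :=
      ae_neBot.2 (by rwa [ne_eq, Measure.restrict_eq_zero])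
    exact ((ae_restrict_mem hWm).and
      (Besicovitch.ae_tendsto_measure_inter_div (volume : Measure (Euc d)) W)).exists
  obtain ⟨x, hxU, hx⟩ := hex U hU hU0
  obtain ⟨y, hyV, hy⟩ := hex V hV hV0
  have hxy := hlt x hxU y hyV
  have hne : ‖x - y‖ ≠ 0 := by
    intro h
    rw [norm_sub_eq_zero_iff] at h
    rw [h] at hxy; exact lt_irrefl _ hxy
  have hpos : 0 < ‖x - y‖ := lt_of_le_of_ne (norm_nonneg _) hne.symm
  set e : Euc d := ‖x - y‖⁻¹ • (x - y) with he_def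
  set r : ℝ := (‖x‖ ^ 2 - ‖y‖ ^ 2) / (2 * ‖x - y‖) with hr_def
  have he : ‖e‖ = 1 := by rw [he_def, norm_smul, norm_inv, norm_norm, inv_mul_cancel₀ hne]
  have hr : 0 ≤ r := by
    refine div_nonneg ?_ (by positivity)
    nlinarith [norm_nonneg y]
  have hmir : mirror e r y = x := by
    have h1 : 2 * (⟪y, e⟫ - r) = - ‖x - y‖ := by
      rw [he_def, real_inner_smul_right, inner_sub_right, real_inner_self_eq_norm_sq, hr_def]
      have h2 := norm_sub_sq_real x y
      rw [real_inner_comm] at h2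
      field_simp
      linarith
    rw [mirror, h1, he_def, smul_smul, neg_mul, mul_inv_cancel₀ hne]
    module
  refine ⟨e, he, r, hr, ?_⟩
  obtain ⟨ρ, hρ, hUρ, hVρ⟩ : ∃ ρ : ℝ, 0 < ρ ∧
      1 / 2 < volume (U ∩ Metric.closedBall x ρ) / volume (Metric.closedBall x ρ) ∧
      1 / 2 < volume (V ∩ Metric.closedBall y ρ) / volume (Metric.closedBall y ρ) := by
    have h12 : (1 / 2 : ENNReal) < 1 := by simp
    have := (eventually_mem_nhdsWithin (a := (0 : ℝ)) (s := Set.Ioi 0)).and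
      ((hx.eventually (lt_mem_nhds h12)).and (hy.eventually (lt_mem_nhds h12)))
    exact this.exists
  have hm := measurePreserving_mirror he r
  have hpre : mirror e r ⁻¹' (Metric.closedBall x ρ) = Metric.closedBall y ρ := by
    ext z
    rw [Set.mem_preimage, Metric.mem_closedBall, Metric.mem_closedBall, ← hmir,
      dist_mirror_mirror he]
  have hvol : volume (Metric.closedBall x ρ) = volume (Metric.closedBall y ρ) := by
    rw [← hm.measure_preimage measurableSet_closedBall.nullMeasurableSet, hpre]
  have hc0 : volume (Metric.closedBall y ρ) ≠ 0 := (Metric.measure_closedBall_pos _ _ hρ).ne'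
  have hct : volume (Metric.closedBall y ρ) ≠ ⊤ := measure_closedBall_lt_top.ne
  have hUm : MeasurableSet (mirror e r ⁻¹' U ∩ Metric.closedBall y ρ) :=
    (hU.preimage hm.measurable).inter measurableSet_closedBall
  have hU' : volume (mirror e r ⁻¹' U ∩ Metric.closedBall y ρ) =
      volume (U ∩ Metric.closedBall x ρ) := by
    rw [← hpre, ← Set.preimage_inter,
      hm.measure_preimage (hU.inter measurableSet_closedBall).nullMeasurableSet]
  rw [hvol, ← hU', ENNReal.lt_div_iff_mul_lt (Or.inl hc0) (Or.inl hct)] at hUρ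
  rw [ENNReal.lt_div_iff_mul_lt (Or.inl hc0) (Or.inl hct)] at hVρ
  intro h0
  -- two subsets of one ball, each filling more than half of it, cannot be almost disjoint
  have h1 := measure_union_add_inter (μ := volume) (V ∩ Metric.closedBall y ρ) hUm
  have h2 : volume ((V ∩ Metric.closedBall y ρ) ∩
      (mirror e r ⁻¹' U ∩ Metric.closedBall y ρ)) = 0 :=
    measure_mono_null (t := V ∩ mirror e r ⁻¹' U) (fun z hz => ⟨hz.1.1, hz.2.1⟩) h0
  have h3 : volume ((V ∩ Metric.closedBall y ρ) ∪
      (mirror e r ⁻¹' U ∩ Metric.closedBall y ρ)) ≤ volume (Metric.closedBall y ρ) :=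
    measure_mono (Set.union_subset Set.inter_subset_right Set.inter_subset_right)
  have h4 := ENNReal.add_lt_add hVρ hUρ
  rw [← h1, h2, add_zero, ← add_mul, ENNReal.add_halves, one_mul] at h4
  exact absurd h3 (not_le.2 h4)

/-- A set fixed by all polarizations is a centered ball up to a null set. -/
lemma symmDiff_ball_null_of_fixed {d : ℕ} {A : Set (Euc d)} (hA : MeasurableSet A) {R : ℝ}
    (hvol : volume A = volume (Metric.ball (0 : Euc d) R))
    (hfix : ∀ e : Euc d, ‖e‖ = 1 → ∀ r : ℝ, 0 ≤ r →
      volume (symmDiff (polarize e r A) A) = 0) :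
    volume (symmDiff A (Metric.ball (0 : Euc d) R)) = 0 := by
  have hB : MeasurableSet (Metric.ball (0 : Euc d) R) := measurableSet_ball
  have hsd := volume_sdiff_eq_of_volume_eq hA hB hvol measure_ball_lt_top
  by_contra hne
  have hU0 : volume (A \ Metric.ball (0 : Euc d) R) ≠ 0 := by
    intro h0
    exact hne (measure_union_null h0 (hsd ▸ h0))
  obtain ⟨e, he, r, hr, hpos⟩ := exists_mirror_pos (hA.diff hB) (hB.diff hA) hU0
    (hsd ▸ hU0) (fun x hx y hy => by
      have h1 := hx.2
      have h2 := hy.1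
      rw [mem_ball_zero_iff] at h1 h2
      linarith)
  have hsub : (Metric.ball (0 : Euc d) R \ A) ∩ mirror e r ⁻¹' (A \ Metric.ball (0 : Euc d) R) ⊆
      symmDiff (polarize e r A) A := by
    intro z hz
    have h1 := hz.1.1
    have h2 := hz.2.2
    rw [mem_ball_zero_iff] at h1 h2
    refine Or.inl ⟨Or.inl ⟨?_, Or.inr hz.2.1⟩, hz.1.2⟩
    by_contra hlt
    have := norm_mirror_le_norm he hr (not_le.1 hlt).le
    linarith
  exact hpos (measure_mono_null hsub (hfix e he r hr))

/-! ### Joint continuity -/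

lemma volume_hyperplane {d : ℕ} {e : Euc d} (he : ‖e‖ = 1) (r : ℝ) :
    volume {x : Euc d | ⟪x, e⟫ = r} = 0 := by
  have hsub : {x : Euc d | ⟪x, e⟫ = r} ⊆
      (AffineSubspace.mk' (r • e) (LinearMap.ker (innerSL ℝ e).toLinearMap) : Set (Euc d)) := by
    intro x hx
    simp only [Set.mem_ofPred_eq] at hx
    simp [AffineSubspace.mem_mk', inner_sub_right, real_inner_smul_right, real_inner_comm x e,
      hx, he]
  refine measure_mono_null hsub (Measure.addHaar_affineSubspace _ _ fun h => ?_)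
  have h1 : r • e + e ∈
      AffineSubspace.mk' (r • e) (LinearMap.ker (innerSL ℝ e).toLinearMap) := by
    rw [h]; trivial
  simp [AffineSubspace.mem_mk', he] at h1

/-- For fixed `A`, the map `s ↦ A^s` is continuous. -/
lemma tendsto_polarOp {d : ℕ} {A : Set (Euc d)} (hA : MeasurableSet A) (hAf : volume A < ⊤)
    (s : Metric.sphere (0 : Euc d) 1 × ℝ≥0) :
    Tendsto (fun t => volume (symmDiff (polarOp s A) (polarOp t A))) (𝓝 s) (𝓝 0) := by
  have hn : ∀ t : Metric.sphere (0 : Euc d) 1 × ℝ≥0, ‖(t.1 : Euc d)‖ = 1 := fun t => by simp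
  let M : C(Metric.sphere (0 : Euc d) 1 × ℝ≥0, C(Euc d, Euc d)) :=
    ContinuousMap.curry ⟨fun p => mirror (p.1.1 : Euc d) (p.1.2 : ℝ) p.2, by
      unfold mirror; fun_prop⟩
  have hM : ∀ t, (M t : Euc d → Euc d) = mirror (t.1 : Euc d) (t.2 : ℝ) := fun t => rfl
  have h1 : Tendsto (fun t => volume (symmDiff (mirror (t.1 : Euc d) (t.2 : ℝ) ⁻¹' A)
      (mirror (s.1 : Euc d) (s.2 : ℝ) ⁻¹' A))) (𝓝 s) (𝓝 0) := by
    have := tendsto_measure_symmDiff_preimage_nhds_zero (μ := (volume : Measure (Euc d)))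
      (ν := volume) (f := fun t => M t) (g := M s) (s := A) (l := 𝓝 s)
      (M.continuous.tendsto s)
      (Eventually.of_forall fun t => by
        rw [hM]; exact measurePreserving_mirror (hn t) _)
      (by rw [hM]; exact measurePreserving_mirror (hn s) _)
      hA.nullMeasurableSet hAf.ne
    exact this
  set C : Set (Euc d) := A ∪ mirror (s.1 : Euc d) (s.2 : ℝ) ⁻¹' A with hC
  have hms := measurePreserving_mirror (hn s) (s.2 : ℝ)
  have hCm : MeasurableSet C := hA.union (hA.preimage hms.measurable)
  have hCf : volume C ≠ ⊤ := by
    refine ((measure_union_le _ _).trans_lt ?_).ne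
    rw [hms.measure_preimage hA.nullMeasurableSet]
    exact ENNReal.add_lt_top.2 ⟨hAf, hAf⟩
  let H : Metric.sphere (0 : Euc d) 1 × ℝ≥0 → Set (Euc d) :=
    fun t => {x | ⟪x, (t.1 : Euc d)⟫ ≤ (t.2 : ℝ)}
  have hHm : ∀ t, MeasurableSet (H t) := fun t =>
    measurableSet_le (by fun_prop) measurable_const
  have h2 : Tendsto (fun t => volume (C ∩ symmDiff (H s) (H t))) (𝓝 s) (𝓝 0) := by
    have h := tendsto_measure_of_ae_tendsto_indicator (μ := (volume : Measure (Euc d))) (𝓝 s)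
      (As := fun t => C ∩ symmDiff (H s) (H t)) (A := ∅) MeasurableSet.empty
      (fun t => hCm.inter ((hHm s).symmDiff (hHm t))) hCm hCf
      (Eventually.of_forall fun t => Set.inter_subset_left) ?_
    · simpa using h
    have hnull : ∀ᵐ x : Euc d, ⟪x, (s.1 : Euc d)⟫ ≠ (s.2 : ℝ) :=
      measure_eq_zero_iff_ae_notMem.1 (volume_hyperplane (hn s) _)
    filter_upwards [hnull] with x hx
    have hc1 : Continuous fun t : Metric.sphere (0 : Euc d) 1 × ℝ≥0 =>
      (⟪x, (t.1 : Euc d)⟫ : ℝ) := by fun_prop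
    have hc2 : Continuous fun t : Metric.sphere (0 : Euc d) 1 × ℝ≥0 => (t.2 : ℝ) := by fun_prop
    rcases lt_or_gt_of_ne hx with hx | hx
    · filter_upwards [hc1.continuousAt.eventually_lt hc2.continuousAt hx] with t ht
      simp [H, Set.mem_symmDiff, hx.le, ht.le]
    · filter_upwards [hc2.continuousAt.eventually_lt hc1.continuousAt hx] with t ht
      simp [H, Set.mem_symmDiff, hx, ht]
  refine tendsto_of_tendsto_of_tendsto_of_le_of_le tendsto_const_nhds
    (by simpa using h1.add h2) (fun _ => zero_le) fun t => ?_
  refine (measure_mono ?_).trans (measure_union_le _ _)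
  intro x hx
  simp only [polarOp, Set.mem_symmDiff, mem_polarize] at hx
  simp only [hC, H, Set.mem_union, Set.mem_inter_iff, Set.mem_symmDiff, Set.mem_preimage,
    Set.mem_ofPred_eq]
  simp only [← not_le] at hx
  tauto

lemma polarOp_joint_continuity {d : ℕ} {A : Set (Euc d)} (hA : MeasurableSet A)
    (hAf : volume A < ⊤) (s : Metric.sphere (0 : Euc d) 1 × ℝ≥0) {ε : ℝ} (hε : 0 < ε) :
    ∃ δ : ℝ, 0 < δ ∧ ∀ (B : Set (Euc d)) (t : Metric.sphere (0 : Euc d) 1 × ℝ≥0),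
      MeasurableSet B → volume B < ⊤ →
      volume (symmDiff A B) < ENNReal.ofReal δ → dist s t < δ →
      volume (symmDiff (polarOp s A) (polarOp t B)) < ENNReal.ofReal ε := by
  have h := (tendsto_polarOp hA hAf s).eventually
    (gt_mem_nhds (ENNReal.ofReal_pos.2 (half_pos hε)))
  obtain ⟨η, hη, hball⟩ := Metric.eventually_nhds_iff.1 h
  refine ⟨min η (ε / 2), lt_min hη (half_pos hε), fun B t hB _ hAB hst => ?_⟩
  have h1 := hball (show dist t s < η by rw [dist_comm]; exact hst.trans_le (min_le_left _ _))
  have h2 : volume (symmDiff (polarOp t A) (polarOp t B)) < ENNReal.ofReal (ε / 2) :=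
    (volume_symmDiff_polarize_le (by simp) _ hA hB).trans_lt
      (hAB.trans_le (ENNReal.ofReal_le_ofReal (min_le_right _ _)))
  calc volume (symmDiff (polarOp s A) (polarOp t B))
      ≤ volume (symmDiff (polarOp s A) (polarOp t A)) +
        volume (symmDiff (polarOp t A) (polarOp t B)) := measure_symmDiff_le _ _ _
    _ < ENNReal.ofReal (ε / 2) + ENNReal.ofReal (ε / 2) := ENNReal.add_lt_add h1 h2
    _ = ENNReal.ofReal ε := by
      rw [← ENNReal.ofReal_add (half_pos hε).le (half_pos hε).le, add_halves]

/-! ### The functional `J` -/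

/-- The weight `|x|² / (1 + |x|²)` in the definition of `J`. -/
def wt {d : ℕ} (x : Euc d) : ℝ := ‖x‖ ^ 2 / (1 + ‖x‖ ^ 2)

lemma wt_nonneg {d : ℕ} (x : Euc d) : 0 ≤ wt x := by unfold wt; positivity

lemma wt_le_one {d : ℕ} (x : Euc d) : wt x ≤ 1 := by
  unfold wt
  rw [div_le_one (by positivity)]
  linarith

lemma continuous_wt {d : ℕ} : Continuous (wt (d := d)) := by
  unfold wt
  exact Continuous.div (by fun_prop) (by fun_prop) fun x => by positivity

lemma sq_div_lt_iff {a b : ℝ} (ha : 0 ≤ a) (hb : 0 ≤ b) :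
    a ^ 2 / (1 + a ^ 2) < b ^ 2 / (1 + b ^ 2) ↔ a < b := by
  rw [div_lt_div_iff₀ (by positivity) (by positivity), ← sq_lt_sq₀ ha hb]
  constructor <;> intro h <;> linarith

lemma wt_lt_wt {d : ℕ} {x y : Euc d} : wt x < wt y ↔ ‖x‖ < ‖y‖ :=
  sq_div_lt_iff (norm_nonneg _) (norm_nonneg _)

lemma wt_le_wt {d : ℕ} {x y : Euc d} : wt x ≤ wt y ↔ ‖x‖ ≤ ‖y‖ := by
  rw [← not_lt, wt_lt_wt, not_lt]

lemma ind_nonneg {d : ℕ} (A : Set (Euc d)) (x : Euc d) : 0 ≤ ind A x :=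
  Set.indicator_nonneg (fun _ _ => zero_le_one) x

lemma integrable_ind {d : ℕ} {A : Set (Euc d)} (hA : MeasurableSet A) (hAf : volume A < ⊤) :
    Integrable (ind A) :=
  (integrable_indicator_iff hA).2 (integrableOn_const hAf.ne)

lemma integral_ind {d : ℕ} {A : Set (Euc d)} (hA : MeasurableSet A) :
    ∫ x, ind A x = (volume A).toReal := by
  unfold ind
  rw [integral_indicator hA]
  simp [Measure.real]

lemma integrable_ind_mul_wt {d : ℕ} {A : Set (Euc d)} (hA : MeasurableSet A)
    (hAf : volume A < ⊤) : Integrable fun x => ind A x * wt x := by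
  refine (integrable_ind hA hAf).mono'
    ((measurable_ind hA).mul continuous_wt.measurable).aestronglyMeasurable
    (ae_of_all _ fun x => ?_)
  rw [Real.norm_of_nonneg (mul_nonneg (ind_nonneg A x) (wt_nonneg x))]
  exact mul_le_of_le_one_right (ind_nonneg A x) (wt_le_one x)

lemma asymmetryJ_eq {d : ℕ} {A : Set (Euc d)} (hA : MeasurableSet A) :
    asymmetryJ A = ∫ x, ind A x * wt x := by
  unfold asymmetryJ
  rw [← integral_indicator hA]
  congr 1
  ext x
  by_cases h : x ∈ A <;> simp [ind, wt, h]

/-- `J` is `1`-Lipschitz for the metric `d₁`. -/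
lemma abs_asymmetryJ_sub_lt {d : ℕ} {A B : Set (Euc d)} (hA : MeasurableSet A)
    (hAf : volume A < ⊤) (hB : MeasurableSet B) (hBf : volume B < ⊤) {ε : ℝ}
    (h : volume (symmDiff A B) < ENNReal.ofReal ε) : |asymmetryJ A - asymmetryJ B| < ε := by
  rw [asymmetryJ_eq hA, asymmetryJ_eq hB,
    ← integral_sub (integrable_ind_mul_wt hA hAf) (integrable_ind_mul_wt hB hBf)]
  have h1 : volume (symmDiff A B) ≠ ⊤ := (h.trans ENNReal.ofReal_lt_top).ne
  have h2 : (volume (symmDiff A B)).toReal < ε :=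
    (ENNReal.lt_ofReal_iff_toReal_lt h1).1 h
  refine lt_of_le_of_lt ?_ h2
  rw [volume_symmDiff_eq hA hB, ← integral_norm_eq_lintegral_enorm
    (f := fun x => ind A x - ind B x)
    ((measurable_ind hA).sub (measurable_ind hB)).aestronglyMeasurable, ← Real.norm_eq_abs]
  refine norm_integral_le_of_norm_le
    ((integrable_ind hA hAf).sub (integrable_ind hB hBf)).norm (ae_of_all _ fun x => ?_)
  rw [← sub_mul, norm_mul, Real.norm_of_nonneg (wt_nonneg x)]
  exact mul_le_of_le_one_right (norm_nonneg _) (wt_le_one x)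

/-- Polarization decreases the weighted content of each mirror pair, strictly if it alters the
pair and `r > 0`. -/
lemma ind_polarize_pair {d : ℕ} {e : Euc d} (he : ‖e‖ = 1) {r : ℝ} (hr : 0 ≤ r)
    (A : Set (Euc d)) (x : Euc d) :
    ind (polarize e r A) x * wt x + ind (polarize e r A) (mirror e r x) * wt (mirror e r x) ≤
      ind A x * wt x + ind A (mirror e r x) * wt (mirror e r x) ∧
    (0 < r → ind (polarize e r A) x * wt x +
        ind (polarize e r A) (mirror e r x) * wt (mirror e r x) =
      ind A x * wt x + ind A (mirror e r x) * wt (mirror e r x) →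
      (x ∈ polarize e r A ↔ x ∈ A)) := by
  rcases lt_trichotomy (⟪x, e⟫ : ℝ) r with h | h | h
  · have h1 : r < 2 * r - ⟪x, e⟫ := by linarith
    have hle := wt_le_wt.2 (norm_le_norm_mirror he hr h.le)
    have hlt : 0 < r → wt x < wt (mirror e r x) := fun hr' => wt_lt_wt.2 (by
      have := norm_mirror_lt_norm he hr' (x := mirror e r x) (by rwa [inner_mirror he])
      rwa [mirror_mirror he] at this)
    by_cases hx : x ∈ A <;> by_cases hy : mirror e r x ∈ A <;>
      simp [ind, mem_polarize, inner_mirror he, mirror_mirror he, h.le, h.not_gt, h1,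
        h1.not_ge, hx, hy, hle]
    exact fun hr' => (hlt hr').ne
  · by_cases hx : x ∈ A <;> simp [ind, mem_polarize, mirror_eq_self h, h, hx]
  · have h1 : 2 * r - ⟪x, e⟫ < r := by linarith
    have hle := wt_le_wt.2 (norm_mirror_le_norm he hr h.le)
    have hlt : 0 < r → wt (mirror e r x) < wt x := fun hr' =>
      wt_lt_wt.2 (norm_mirror_lt_norm he hr' h)
    by_cases hx : x ∈ A <;> by_cases hy : mirror e r x ∈ A <;>
      simp [ind, mem_polarize, inner_mirror he, mirror_mirror he, h, h.not_ge, h1.le,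
        h1.not_gt, hx, hy, hle]
    exact fun hr' => (hlt hr').ne

lemma asymmetryJ_polarize {d : ℕ} {e : Euc d} (he : ‖e‖ = 1) {r : ℝ} (hr : 0 ≤ r)
    {A : Set (Euc d)} (hA : MeasurableSet A) (hAf : volume A < ⊤) :
    asymmetryJ (polarize e r A) ≤ asymmetryJ A ∧
      (0 < r → asymmetryJ (polarize e r A) = asymmetryJ A →
        volume (symmDiff (polarize e r A) A) = 0) := by
  have hP := measurableSet_polarize e r hA
  have hPf : volume (polarize e r A) < ⊤ := by rwa [volume_polarize he r hA]
  have hm := measurePreserving_mirror he r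
  have hme : MeasurableEmbedding (mirror e r) :=
    MeasurableEmbedding.of_measurable_inverse hm.measurable
      (by rw [Set.range_eq_univ.2 fun x => ⟨_, mirror_mirror he r x⟩]; exact .univ)
      hm.measurable (mirror_mirror he r)
  have hpair : ∀ u : Euc d → ℝ, Integrable u →
      Integrable (fun x => u x + u (mirror e r x)) ∧
      ∫ x, (u x + u (mirror e r x)) = 2 * ∫ x, u x := by
    intro u hu
    have hu' : Integrable (fun x => u (mirror e r x)) := hm.integrable_comp_of_integrable hu
    refine ⟨hu.add hu', ?_⟩
    rw [integral_add hu hu', hm.integral_comp hme, two_mul]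
  obtain ⟨hi1, he1⟩ := hpair _ (integrable_ind_mul_wt hA hAf)
  obtain ⟨hi2, he2⟩ := hpair _ (integrable_ind_mul_wt hP hPf)
  rw [← asymmetryJ_eq hA] at he1
  rw [← asymmetryJ_eq hP] at he2
  constructor
  · have := integral_mono hi2 hi1 fun x => (ind_polarize_pair he hr A x).1
    rw [he1, he2] at this
    linarith
  · intro hr' heq
    have h0 := integral_sub hi1 hi2
    rw [he1, he2, heq, sub_self, integral_eq_zero_iff_of_nonneg
      (fun x => sub_nonneg.2 (ind_polarize_pair he hr A x).1) (hi1.sub hi2)] at h0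
    refine measure_mono_null ?_ (ae_iff.1 h0)
    intro x hx h
    have := (ind_polarize_pair he hr A x).2 hr' (sub_eq_zero.1 h).symm
    rw [Set.mem_symmDiff] at hx
    tauto

/-- The bathtub principle: among sets of the same finite measure, the ball strictly minimizes
`J`. -/
lemma symmDiff_ball_null_of_asymmetryJ_le {d : ℕ} (hd : 1 ≤ d) {A : Set (Euc d)}
    (hA : MeasurableSet A) {R : ℝ} (hvol : volume A = volume (Metric.ball (0 : Euc d) R))
    (h : asymmetryJ A ≤ asymmetryJ (Metric.ball (0 : Euc d) R)) :
    volume (symmDiff A (Metric.ball (0 : Euc d) R)) = 0 := by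
  have : Nonempty (Fin d) := ⟨⟨0, hd⟩⟩
  rcases le_or_gt R 0 with hR | hR
  · rw [Metric.ball_eq_empty.2 hR] at hvol ⊢
    simpa using hvol
  set B := Metric.ball (0 : Euc d) R with hBdef
  have hB : MeasurableSet B := measurableSet_ball
  have hBf : volume B < ⊤ := measure_ball_lt_top
  have hAf : volume A < ⊤ := hvol ▸ hBf
  have hiA := integrable_ind hA hAf
  have hiB := integrable_ind hB hBf
  have hjA := integrable_ind_mul_wt hA hAf
  have hjB := integrable_ind_mul_wt hB hBf
  -- the value of the weight on the boundary sphere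
  set c : ℝ := R ^ 2 / (1 + R ^ 2) with hc
  have hw1 : ∀ x : Euc d, wt x < c ↔ ‖x‖ < R := fun x => sq_div_lt_iff (norm_nonneg _) hR.le
  have hw2 : ∀ x : Euc d, c < wt x ↔ R < ‖x‖ := fun x => sq_div_lt_iff hR.le (norm_nonneg _)
  have hnn : ∀ x, 0 ≤ (ind A x * wt x - ind B x * wt x) - c * (ind A x - ind B x) := by
    intro x
    have hb : x ∈ B ↔ wt x < c := by rw [hw1, hBdef, mem_ball_zero_iff]
    by_cases h1 : x ∈ A <;> by_cases h2 : x ∈ B <;> simp [ind, h1, h2] <;>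
      rw [hb] at h2 <;> linarith
  have hdiff : Integrable fun x => (ind A x * wt x - ind B x * wt x) - c * (ind A x - ind B x) :=
    (hjA.sub hjB).sub ((hiA.sub hiB).const_mul c)
  have hval : ∫ x, ((ind A x * wt x - ind B x * wt x) - c * (ind A x - ind B x)) =
      asymmetryJ A - asymmetryJ B := by
    have h1 : Integrable fun x => ind A x * wt x - ind B x * wt x := hjA.sub hjB
    have h2 : Integrable fun x => c * (ind A x - ind B x) := (hiA.sub hiB).const_mul c
    rw [integral_sub h1 h2, integral_sub hjA hjB,
      integral_const_mul, integral_sub hiA hiB, integral_ind hA, integral_ind hB, hvol,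
      asymmetryJ_eq hA, asymmetryJ_eq hB]
    ring
  have hzero : ∫ x, ((ind A x * wt x - ind B x * wt x) - c * (ind A x - ind B x)) = 0 :=
    le_antisymm (by rw [hval]; linarith) (integral_nonneg hnn)
  rw [integral_eq_zero_iff_of_nonneg hnn hdiff] at hzero
  refine measure_mono_null (t := {x | ¬ _ = _} ∪ Metric.sphere 0 R) ?_
    (measure_union_null (ae_iff.1 hzero) (Measure.addHaar_sphere _ _ _))
  intro x hx
  by_cases hs : ‖x‖ = R
  · right; simpa using hs
  left
  rcases lt_or_gt_of_ne hs with hlt | hlt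
  · have hxB : x ∈ B := by rw [hBdef, mem_ball_zero_iff]; exact hlt
    have hxA : x ∉ A := by rw [Set.mem_symmDiff] at hx; tauto
    have := (hw1 x).2 hlt
    simp only [Set.mem_ofPred_eq]
    simp [ind, hxA, hxB]
    linarith
  · have hxB : x ∉ B := by rw [hBdef, mem_ball_zero_iff]; exact hlt.not_gt
    have hxA : x ∈ A := by rw [Set.mem_symmDiff] at hx; tauto
    have := (hw2 x).2 hlt
    simp only [Set.mem_ofPred_eq]
    simp [ind, hxA, hxB]
    linarith

/-! ### Precompactness of orbits -/

/-- `Tracks δ η M R κ F G`: the function `G` approximates the indicator function of the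
finite-measure set `F` up to `κ` in `L¹`, takes values in `[0, M]`, is supported in the ball of
radius `R`, and has oscillation at most `η` at scale `δ`. -/
structure Tracks {d : ℕ} (δ η M R : ℝ) (κ : ENNReal) (F : Set (Euc d)) (G : Euc d → ℝ) :
    Prop where
  measSet : MeasurableSet F
  vol : volume F < ⊤
  meas : Measurable G
  osc : ∀ x y, dist x y < δ → |G x - G y| ≤ η
  nonneg : ∀ x, 0 ≤ G x
  le : ∀ x, G x ≤ M
  supp : ∀ x, R ≤ ‖x‖ → G x = 0
  approx : ∫⁻ x, ‖ind F x - G x‖ₑ ≤ κ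

/-- Polarization of a function does not increase its modulus of continuity. -/
lemma polF_osc {d : ℕ} {e : Euc d} (he : ‖e‖ = 1) (r : ℝ) {δ η : ℝ} {G : Euc d → ℝ}
    (hG : ∀ x y, dist x y < δ → |G x - G y| ≤ η) (x y : Euc d) (hxy : dist x y < δ) :
    |polF e r G x - polF e r G y| ≤ η := by
  have h1 := hG x y hxy
  have h2 := hG (mirror e r x) (mirror e r y) (by rwa [dist_mirror_mirror he])
  by_cases hx : ⟪x, e⟫ ≤ r <;> by_cases hy : ⟪y, e⟫ ≤ r
  · simp only [polF, hx, hy, if_true]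
    exact (abs_max_sub_max_le_max _ _ _ _).trans (max_le h1 h2)
  · have hd := (dist_mirror_le he hx (not_le.1 hy).le).trans_lt hxy
    have h3 := hG x (mirror e r y) hd
    have h4 := hG (mirror e r x) y (by rwa [← dist_mirror_mirror he r, mirror_mirror he])
    simp only [polF, hx, hy, if_true, if_false]
    rcases max_choice (G x) (G (mirror e r x)) with h | h <;>
      rcases min_choice (G y) (G (mirror e r y)) with h' | h' <;> rw [h, h'] <;> assumption
  · rw [dist_comm] at hxy
    have hd := (dist_mirror_le he hy (not_le.1 hx).le).trans_lt hxy
    have h3 := hG y (mirror e r x) hd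
    have h4 := hG (mirror e r y) x (by rwa [← dist_mirror_mirror he r, mirror_mirror he])
    simp only [polF, hx, hy, if_true, if_false]
    rw [abs_sub_comm] at h1 h2 h3 h4 ⊢
    rw [abs_sub_comm] at h3 h4 ⊢
    rcases min_choice (G x) (G (mirror e r x)) with h | h <;>
      rcases max_choice (G y) (G (mirror e r y)) with h' | h' <;> rw [h, h'] <;>
      first | assumption | (rw [abs_sub_comm]; assumption)
  · simp only [polF, hx, hy, if_false]
    exact (abs_min_sub_min_le_max _ _ _ _).trans (max_le h1 h2)

/-- Polarizing the set and the function simultaneously preserves tracking. -/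
lemma Tracks.step {d : ℕ} {δ η M R : ℝ} {κ : ENNReal} {F : Set (Euc d)} {G : Euc d → ℝ}
    (h : Tracks δ η M R κ F G) (s : Metric.sphere (0 : Euc d) 1 × ℝ≥0) :
    Tracks δ η M R κ (polarOp s F) (polF (s.1 : Euc d) (s.2 : ℝ) G) := by
  have he : ‖(s.1 : Euc d)‖ = 1 := by simp
  have hr : (0 : ℝ) ≤ s.2 := s.2.2
  refine ⟨measurableSet_polarize _ _ h.measSet, ?_, measurable_polF _ _ h.meas,
    polF_osc he _ h.osc, fun x => ?_, fun x => ?_, fun x hx => ?_, ?_⟩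
  · unfold polarOp
    rw [volume_polarize he _ h.measSet]; exact h.vol
  · unfold polF
    split_ifs
    · exact le_max_of_le_left (h.nonneg _)
    · exact le_min (h.nonneg _) (h.nonneg _)
  · unfold polF
    split_ifs
    · exact max_le (h.le _) (h.le _)
    · exact min_le_of_left_le (h.le _)
  · unfold polF
    split_ifs with hx'
    · rw [h.supp x hx, h.supp _ (hx.trans (norm_le_norm_mirror he hr hx')), max_self]
    · rw [h.supp x hx, min_eq_left (h.nonneg _)]
  · unfold polarOp
    rw [ind_polarize]
    exact (lintegral_polF_sub_le he _ (measurable_ind h.measSet) h.meas).trans h.approx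

lemma Tracks.orbit {d : ℕ} {δ η M R : ℝ} {κ : ENNReal} {X : Set (Euc d)} {g : Euc d → ℝ}
    (h : Tracks δ η M R κ X g) {F : Set (Euc d)} (hF : InOrbit (polarOp (d := d)) X F) :
    ∃ G, Tracks δ η M R κ F G := by
  obtain ⟨l, -, rfl⟩ := hF
  induction l generalizing X g with
  | nil => exact ⟨g, h⟩
  | cons s l ih => exact ih (h.step s)

/-- A single continuous compactly supported function `g` tracks `X`, with `M` and `R` independent
of the oscillation bound `η`. -/
lemma exists_tracks {d : ℕ} {X : Set (Euc d)} (hX : MeasurableSet X) (hXf : volume X < ⊤)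
    {κ : ENNReal} (hκ : κ ≠ 0) :
    ∃ (M R : ℝ) (g : Euc d → ℝ), ∀ η : ℝ, 0 < η → ∃ δ : ℝ, 0 < δ ∧ Tracks δ η M R κ X g := by
  obtain ⟨g₀, hg₀s, hg₀a, hg₀c, -⟩ :=
    (integrable_ind hX hXf).exists_hasCompactSupport_lintegral_sub_le hκ
  have hgc : Continuous fun x => max (g₀ x) 0 := hg₀c.max continuous_const
  have hgs : HasCompactSupport fun x => max (g₀ x) 0 :=
    hg₀s.comp_left (g := fun t : ℝ => max t 0) (by simp)
  obtain ⟨M, hM⟩ := hgs.exists_bound_of_continuous hgc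
  obtain ⟨R, hR⟩ := hgs.isCompact.isBounded.subset_ball (0 : Euc d)
  refine ⟨M, R, fun x => max (g₀ x) 0, fun η hη => ?_⟩
  obtain ⟨δ, hδ, hδ'⟩ :=
    Metric.uniformContinuous_iff.1 (hgs.uniformContinuous_of_continuous hgc) η hη
  refine ⟨δ, hδ, hX, hXf, hgc.measurable, fun x y hxy => ?_, fun x => le_max_right _ _,
    fun x => (le_abs_self _).trans (hM x), fun x hx => ?_,
    le_trans (lintegral_mono fun x => ?_) hg₀a⟩
  · have := hδ' hxy
    rw [Real.dist_eq] at this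
    exact this.le
  · by_contra hne
    have := hR (subset_tsupport _ (Function.mem_support.2 hne))
    rw [mem_ball_zero_iff] at this
    linarith
  · rw [enorm_le_iff_norm_le, Real.norm_eq_abs, Real.norm_eq_abs]
    have h1 : ind X x = max (ind X x) 0 := (max_eq_left (ind_nonneg X x)).symm
    conv_lhs => rw [h1]
    exact abs_max_sub_max_le_abs _ _ _

/-- The orbit of `X` is covered by finitely many classes of small diameter: round the values of
a tracking function at the points of a finite net. -/
lemma exists_discretization {d : ℕ} {X : Set (Euc d)} (hX : MeasurableSet X)
    (hXf : volume X < ⊤) {ε : ℝ} (hε : 0 < ε) :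
    ∃ (β : Type) (_ : Fintype β) (code : {F : Set (Euc d) // InOrbit polarOp X F} → β),
      ∀ F F', code F = code F' → volume (symmDiff F.1 F'.1) < ENNReal.ofReal ε := by
  classical
  obtain ⟨M, R, g, hg⟩ := exists_tracks hX hXf (κ := ENNReal.ofReal (ε / 4))
    (ENNReal.ofReal_pos.2 (by positivity)).ne'
  set V : ℝ := (volume (Metric.ball (0 : Euc d) R)).toReal with hV
  have hV0 : 0 ≤ V := ENNReal.toReal_nonneg
  -- three errors of size `η` over a ball of volume `V` contribute at most `ε / 4`
  set η : ℝ := ε / (12 * (V + 1)) with hη_def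
  have hη : 0 < η := by positivity
  obtain ⟨δ, hδ, htr⟩ := hg η hη
  obtain ⟨t, -, htf, hcov⟩ :=
    (isCompact_closedBall (0 : Euc d) R).finite_cover_balls hδ
  have := htf.fintype
  choose G hG using fun F : {F : Set (Euc d) // InOrbit polarOp X F} => htr.orbit F.2
  refine ⟨t → Fin (⌊M / η⌋₊ + 1), inferInstance, fun F p => ⟨⌊G F p / η⌋₊, ?_⟩, ?_⟩
  · exact Nat.lt_succ_of_le (Nat.floor_le_floor (by gcongr; exact (hG F).le _))
  intro F F' hcode
  have hpt : ∀ p ∈ t, |G F p - G F' p| ≤ η := by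
    intro p hp
    have h1 := congrArg Fin.val (congrFun hcode ⟨p, hp⟩)
    simp only at h1
    have h2 := Nat.floor_le (div_nonneg ((hG F).nonneg p) hη.le)
    have h3 := Nat.lt_floor_add_one (G F p / η)
    have h4 := Nat.floor_le (div_nonneg ((hG F').nonneg p) hη.le)
    have h5 := Nat.lt_floor_add_one (G F' p / η)
    rw [h1] at h2 h3
    have h6 : |G F p / η - G F' p / η| ≤ 1 := by rw [abs_le]; constructor <;> linarith
    rwa [show G F p / η - G F' p / η = (G F p - G F' p) / η by ring, abs_div, abs_of_pos hη,
      div_le_one hη] at h6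
  have hclose : ∀ x, ‖G F x - G F' x‖ₑ ≤
      (Metric.ball (0 : Euc d) R).indicator (fun _ => ENNReal.ofReal (3 * η)) x := by
    intro x
    by_cases hx : x ∈ Metric.ball (0 : Euc d) R
    · rw [Set.indicator_of_mem hx, Real.enorm_eq_ofReal_abs]
      apply ENNReal.ofReal_le_ofReal
      obtain ⟨p, hp, hxp⟩ := Set.mem_iUnion₂.1 (hcov (Metric.ball_subset_closedBall hx))
      have h1 := (hG F).osc x p hxp
      have h2 := (hG F').osc x p hxp
      have h3 := hpt p hp
      rw [abs_le] at *
      constructor <;> linarith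
    · have hx' : R ≤ ‖x‖ := by simpa using hx
      rw [(hG F).supp x hx', (hG F').supp x hx']
      simp
  have hmid : ∫⁻ x, ‖G F x - G F' x‖ₑ ≤ ENNReal.ofReal (ε / 4) := by
    refine (lintegral_mono hclose).trans ?_
    rw [lintegral_indicator_const measurableSet_ball,
      ← ENNReal.ofReal_toReal (measure_ball_lt_top (μ := volume)).ne, ← hV,
      ← ENNReal.ofReal_mul (by positivity)]
    apply ENNReal.ofReal_le_ofReal
    have : 3 * η * (V + 1) = ε / 4 := by rw [hη_def]; field_simp; norm_num
    nlinarith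
  have hF := hG F
  have hF' := hG F'
  have hm1 := ((measurable_ind hF.measSet).sub hF.meas).enorm
  have hm2 := (hF.meas.sub hF'.meas).enorm
  rw [volume_symmDiff_eq hF.measSet hF'.measSet]
  calc ∫⁻ x, ‖ind F.1 x - ind F'.1 x‖ₑ
      ≤ ∫⁻ x, (‖ind F.1 x - G F x‖ₑ + ‖G F x - G F' x‖ₑ + ‖ind F'.1 x - G F' x‖ₑ) := by
        refine lintegral_mono fun x => ?_
        have : ind F.1 x - ind F'.1 x =
            (ind F.1 x - G F x) + (G F x - G F' x) - (ind F'.1 x - G F' x) := by ring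
        rw [this]
        refine enorm_sub_le.trans (add_le_add_left (enorm_add_le _ _) _)
    _ = (∫⁻ x, ‖ind F.1 x - G F x‖ₑ) + (∫⁻ x, ‖G F x - G F' x‖ₑ) +
          ∫⁻ x, ‖ind F'.1 x - G F' x‖ₑ := by
        have h1 : ∀ w : Euc d → ENNReal,
            ∫⁻ x, (‖ind F.1 x - G F x‖ₑ + ‖G F x - G F' x‖ₑ + w x) =
              (∫⁻ x, (‖ind F.1 x - G F x‖ₑ + ‖G F x - G F' x‖ₑ)) + ∫⁻ x, w x :=
          fun w => lintegral_add_left (hm1.add hm2) w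
        have h2 : ∀ w : Euc d → ENNReal,
            ∫⁻ x, (‖ind F.1 x - G F x‖ₑ + w x) =
              (∫⁻ x, ‖ind F.1 x - G F x‖ₑ) + ∫⁻ x, w x :=
          fun w => lintegral_add_left hm1 w
        rw [h1, h2]
    _ ≤ ENNReal.ofReal (ε / 4) + ENNReal.ofReal (ε / 4) + ENNReal.ofReal (ε / 4) :=
        add_le_add (add_le_add hF.approx hmid) hF'.approx
    _ = ENNReal.ofReal (ε / 4 + ε / 4 + ε / 4) := by
        rw [ENNReal.ofReal_add (by positivity) (by positivity),
          ENNReal.ofReal_add (by positivity) (by positivity)]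
    _ < ENNReal.ofReal ε := (ENNReal.ofReal_lt_ofReal_iff hε).2 (by linarith)

/-- The orbit is totally bounded in `L¹`, whence sequences in it subconverge. -/
lemma orbit_subseq {d : ℕ} {X : Set (Euc d)} (hX : MeasurableSet X) (hXf : volume X < ⊤)
    (F : ℕ → Set (Euc d)) (hF : ∀ n, InOrbit (polarOp (d := d)) X (F n)) :
    ∃ (Y : Set (Euc d)) (φ : ℕ → ℕ), MeasurableSet Y ∧ volume Y < ⊤ ∧ StrictMono φ ∧
      Tendsto (fun k => volume (symmDiff (F (φ k)) Y)) atTop (nhds 0) := by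
  have hmeas : ∀ n, MeasurableSet (F n) ∧ volume (F n) < ⊤ := by
    obtain ⟨M, R, g, hg⟩ := exists_tracks hX hXf one_ne_zero
    obtain ⟨δ, -, htr⟩ := hg 1 one_pos
    intro n
    obtain ⟨G, hG⟩ := htr.orbit (hF n)
    exact ⟨hG.measSet, hG.vol⟩
  let f : ℕ → Lp ℝ 1 (volume : Measure (Euc d)) := fun n =>
    indicatorConstLp 1 (hmeas n).1 (hmeas n).2.ne (1 : ℝ)
  have hdist : ∀ m n, dist (f m) (f n) = (volume (symmDiff (F m) (F n))).toReal := by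
    intro m n
    rw [dist_indicatorConstLp_eq_norm, norm_indicatorConstLp one_ne_zero ENNReal.one_ne_top]
    simp [Measure.real]
  have htb : TotallyBounded (Set.range f) := by
    refine Metric.totallyBounded_of_finite_discretization fun ε hε => ?_
    obtain ⟨β, hβ, code, hcode⟩ := exists_discretization hX hXf hε
    choose idx hidx using fun x : Set.range f => x.2
    refine ⟨β, hβ, fun x => code ⟨F (idx x), hF _⟩, fun x y hxy => ?_⟩
    have h := hcode _ _ hxy
    rw [← hidx x, ← hidx y, hdist]
    exact (ENNReal.lt_ofReal_iff_toReal_lt (h.trans ENNReal.ofReal_lt_top).ne).1 h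
  have hcpt : IsCompact (closure (Set.range f)) :=
    htb.closure.isCompact_of_isClosed isClosed_closure
  obtain ⟨h, -, φ, hφ, hlim⟩ := hcpt.tendsto_subseq fun n => subset_closure ⟨n, rfl⟩
  have hhm : Measurable h := (Lp.stronglyMeasurable h).measurable
  -- thresholding at `1/2` turns the `L¹` limit of indicator functions into a set
  let Y : Set (Euc d) := {x | 1 / 2 < h x}
  have hY : MeasurableSet Y := measurableSet_lt measurable_const hhm
  have hle : ∀ n, volume (symmDiff (F n) Y) ≤ 2 * edist (f n) h := by
    intro n
    rw [volume_symmDiff_eq (hmeas n).1 hY, Lp.edist_def, eLpNorm_one_eq_lintegral_enorm,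
      ← lintegral_const_mul' _ _ (by simp)]
    have hae : (f n : Euc d → ℝ) =ᵐ[volume] ind (F n) := indicatorConstLp_coeFn
    refine lintegral_mono_ae ?_
    filter_upwards [hae] with x hx
    have h2 : (2 : ENNReal) * ENNReal.ofReal |ind (F n) x - h x| =
        ENNReal.ofReal (2 * |ind (F n) x - h x|) := by
      rw [ENNReal.ofReal_mul (by norm_num)]; simp
    rw [Pi.sub_apply, hx, Real.enorm_eq_ofReal_abs, Real.enorm_eq_ofReal_abs, h2]
    apply ENNReal.ofReal_le_ofReal
    by_cases h1 : x ∈ F n <;> by_cases h2 : x ∈ Y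
    · simp [ind, h1, h2]
    · have h3 : h x ≤ 1 / 2 := not_lt.1 h2
      simp only [ind, h1, h2, Set.indicator_of_mem, Set.indicator_of_notMem, not_false_eq_true]
      rw [abs_of_nonneg (by linarith), abs_of_nonneg (by linarith)]
      linarith
    · have h3 : 1 / 2 < h x := h2
      simp only [ind, h1, h2, Set.indicator_of_mem, Set.indicator_of_notMem, not_false_eq_true]
      rw [abs_of_nonpos (by linarith), abs_of_nonpos (by linarith)]
      linarith
    · simp [ind, h1, h2]
  have hconv : Tendsto (fun k => volume (symmDiff (F (φ k)) Y)) atTop (nhds 0) := by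
    have h1 := ENNReal.Tendsto.const_mul (a := 2) (tendsto_iff_edist_tendsto_0.1 hlim)
      (Or.inr (by simp))
    rw [mul_zero] at h1
    exact tendsto_of_tendsto_of_tendsto_of_le_of_le tendsto_const_nhds h1
      (fun _ => zero_le) fun k => hle (φ k)
  refine ⟨Y, φ, hY, ?_, hφ, hconv⟩
  obtain ⟨k, hk⟩ := (hconv.eventually (gt_mem_nhds one_pos)).exists
  have hsub : Y ⊆ F (φ k) ∪ symmDiff (F (φ k)) Y := by
    intro x hx
    by_cases h1 : x ∈ F (φ k)
    · exact Or.inl h1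
    · exact Or.inr (Or.inr ⟨hx, h1⟩)
  exact (measure_mono hsub).trans_lt ((measure_union_le _ _).trans_lt
    (ENNReal.add_lt_top.2 ⟨(hmeas _).2, hk.trans ENNReal.one_lt_top⟩))

/-! ### Symmetrization space -/

/-- Polarizations on `(ℳ(ℝ^d), d₁)` form a `⋆`-compatible
symmetrization space with compact orbit closures, and `J` is a `⋆`-compatible asymmetry
function on it, strict on `𝕊^{d-1} × (0, ∞)`. -/
theorem statement13 {d : ℕ} (hd : 1 ≤ d)
    (star : Set (Euc d) → Set (Euc d)) (hstar : IsSphericalRearrangement star) :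
    -- nonexpansiveness
    (∀ (s : Metric.sphere (0 : Euc d) 1 × ℝ≥0) (A B : Set (Euc d)),
      MeasurableSet A → volume A < ⊤ → MeasurableSet B → volume B < ⊤ →
      volume (symmDiff (polarOp s A) (polarOp s B)) ≤ volume (symmDiff A B)) ∧
    -- idempotence (in `ℳ(ℝ^d)`)
    (∀ (s : Metric.sphere (0 : Euc d) 1 × ℝ≥0) (A : Set (Euc d)),
      MeasurableSet A → volume A < ⊤ →
      volume (symmDiff (polarOp s (polarOp s A)) (polarOp s A)) = 0) ∧
    -- joint continuity of the action in `(X, s)`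
    (∀ (A : Set (Euc d)), MeasurableSet A → volume A < ⊤ →
      ∀ (s : Metric.sphere (0 : Euc d) 1 × ℝ≥0) (ε : ℝ), 0 < ε → ∃ δ : ℝ, 0 < δ ∧
        ∀ (B : Set (Euc d)) (t : Metric.sphere (0 : Euc d) 1 × ℝ≥0),
          MeasurableSet B → volume B < ⊤ →
          volume (symmDiff A B) < ENNReal.ofReal δ → dist s t < δ →
          volume (symmDiff (polarOp s A) (polarOp t B)) < ENNReal.ofReal ε) ∧
    -- `⋆`-compatibility of the symmetrization space
    (∀ (s : Metric.sphere (0 : Euc d) 1 × ℝ≥0) (A : Set (Euc d)),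
      MeasurableSet A → volume A < ⊤ →
      volume (symmDiff (star (polarOp s A)) (star A)) = 0 ∧
      volume (symmDiff (polarOp s (star A)) (star A)) = 0) ∧
    (∀ A : Set (Euc d), MeasurableSet A → volume A < ⊤ →
      (∀ s : Metric.sphere (0 : Euc d) 1 × ℝ≥0, volume (symmDiff (polarOp s A) A) = 0) →
      volume (symmDiff A (star A)) = 0) ∧
    -- compact closure of orbits
    (∀ (X : Set (Euc d)), MeasurableSet X → volume X < ⊤ →
      ∀ F : ℕ → Set (Euc d), (∀ n, InOrbit (polarOp (d := d)) X (F n)) →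
        ∃ (Y : Set (Euc d)) (φ : ℕ → ℕ), MeasurableSet Y ∧ volume Y < ⊤ ∧
          StrictMono φ ∧
          Tendsto (fun k => volume (symmDiff (F (φ k)) Y)) atTop (nhds 0)) ∧
    -- `J` is continuous on `(ℳ(ℝ^d), d₁)`
    (∀ A : Set (Euc d), MeasurableSet A → volume A < ⊤ → ∀ ε : ℝ, 0 < ε → ∃ δ : ℝ,
      0 < δ ∧ ∀ B : Set (Euc d), MeasurableSet B → volume B < ⊤ →
        volume (symmDiff A B) < ENNReal.ofReal δ → |asymmetryJ A - asymmetryJ B| < ε) ∧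
    -- `J` decreases along polarizations, strictly when the parameter satisfies `r > 0`
    (∀ (s : Metric.sphere (0 : Euc d) 1 × ℝ≥0) (A : Set (Euc d)),
      MeasurableSet A → volume A < ⊤ →
      asymmetryJ (polarOp s A) ≤ asymmetryJ A ∧
      (0 < s.2 → asymmetryJ (polarOp s A) = asymmetryJ A →
        volume (symmDiff (polarOp s A) A) = 0)) ∧
    -- `J` is `⋆`-compatible
    (∀ A : Set (Euc d), MeasurableSet A → volume A < ⊤ →
      asymmetryJ A ≤ asymmetryJ (star A) → volume (symmDiff A (star A)) = 0) := by
  have hs1 : ∀ s : Metric.sphere (0 : Euc d) 1 × ℝ≥0, ‖(s.1 : Euc d)‖ = 1 := fun s => by simp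
  have hs2 : ∀ s : Metric.sphere (0 : Euc d) 1 × ℝ≥0, (0 : ℝ) ≤ s.2 := fun s => s.2.2
  refine ⟨fun s A B hA _ hB _ => volume_symmDiff_polarize_le (hs1 s) _ hA hB,
    fun s A _ _ => ?_, fun A hA hAf s ε hε => polarOp_joint_continuity hA hAf s hε,
    fun s A hA hAf => ?_, fun A hA hAf hfix => ?_,
    fun X hX hXf F hF => orbit_subseq hX hXf F hF,
    fun A hA hAf ε hε => ⟨ε, hε, fun B hB hBf h => abs_asymmetryJ_sub_lt hA hAf hB hBf h⟩,
    fun s A hA hAf => ?_, fun A hA hAf hJ => ?_⟩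
  · unfold polarOp
    rw [polarize_polarize (hs1 s), symmDiff_self]
    simp
  · have hv : volume (polarOp s A) = volume A := volume_polarize (hs1 s) _ hA
    obtain ⟨⟨R, hR⟩, hvR⟩ := hstar A hA hAf
    obtain ⟨⟨R', hR'⟩, hvR'⟩ := hstar (polarOp s A) (measurableSet_polarize _ _ hA) (hv ▸ hAf)
    rw [hR] at hvR ⊢
    rw [hR'] at hvR' ⊢
    refine ⟨volume_symmDiff_ball_ball (by rw [hvR', hv, hvR]), ?_⟩
    unfold polarOp
    rw [polarize_ball (hs1 s) (hs2 s), symmDiff_self]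
    simp
  · obtain ⟨⟨R, hR⟩, hv⟩ := hstar A hA hAf
    rw [hR] at hv ⊢
    exact symmDiff_ball_null_of_fixed hA hv.symm fun e he r hr =>
      hfix (⟨e, by simpa using he⟩, ⟨r, hr⟩)
  · obtain ⟨h1, h2⟩ := asymmetryJ_polarize (hs1 s) (hs2 s) hA hAf
    exact ⟨h1, fun h0 h => h2 h0 h⟩
  · obtain ⟨⟨R, hR⟩, hv⟩ := hstar A hA hAf
    rw [hR] at hv hJ ⊢
    exact symmDiff_ball_null_of_asymmetryJ_le hd hA hv.symm hJ
end
end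

section
/- The family of cap symmetrizations, parametrized by 𝕊^{d-1} × [0,∞), acting on the metric space ℳ(ℝ^d) of equivalence classes of Borel subsets of ℝ^d of finite Lebesgue measure with metric d₁(A,B) = m(A Δ B), is a ⋆-compatible symmetrization space; for every X ∈ ℳ(ℝ^d) the orbit X^𝒞 = {X^{s_1…s_n} : n ≥ 1, s_i ∈ 𝕊^{d-1} × [0,∞)} has compact closure in (ℳ(ℝ^d), d₁); and the function J(X) = ∫_X |x|²/(1+|x|²) dx is a ⋆-compatible asymmetry function on this symmetrization space which is strict on 𝕊^{d-1} × (0,∞). -/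
open MeasureTheory ProbabilityTheory Filter Topology RealInnerProductSpace NNReal

noncomputable section

def IsCapSymmOf {d : ℕ} (e : Euc d) (r : ℝ) (X Y : Set (Euc d)) : Prop :=
  MeasurableSet Y ∧
  ∀ t : ℝ, 0 < t →
    (∃ c : ℝ, Y ∩ Metric.sphere (r • e) t =
      {y ∈ Metric.sphere (r • e) t | c < ⟪y - r • e, -e⟫}) ∧
    μH[(d : ℝ) - 1] (Y ∩ Metric.sphere (r • e) t) =
      μH[(d : ℝ) - 1] (X ∩ Metric.sphere (r • e) t)

def IsCapOp {d : ℕ}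
    (op : Metric.sphere (0 : Euc d) 1 × ℝ≥0 → Set (Euc d) → Set (Euc d)) : Prop :=
  ∀ (e : Metric.sphere (0 : Euc d) 1) (r : ℝ≥0) (X : Set (Euc d)), MeasurableSet X →
    IsCapSymmOf (e : Euc d) (r : ℝ) X (op (e, r) X)

/-!
Work on the spheres about the centre `p = r e` through polar coordinates: `volume A` is the integral
over `t` of the surface measure of the slice of `A` by the sphere of radius `t`. Hausdorff measure
on a sphere is a multiple of surface measure, because both are finite (charts by Lipschitz graphs)
and rotation invariant (`smul_eq_smul_of_homogeneous`, `sig_eq_of_hausdorff_eq`). So the cap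
symmetrization of `A` is, up to null sets, the only set `Y` with `Cap e p Y` and `Equi p A Y`: its
slices are caps around the direction `-e`, with the same surface measures as those of `A`.

* Caps in one direction are nested, whence nonexpansiveness (`volume_symmDiff_le`) and uniqueness
  (`cap_unique`); uniqueness gives idempotence and the invariance of balls about the origin.
* The integrand of `J` is radially increasing and on a sphere about `p` it increases with `⟪x, e⟫`,
  strictly if `r > 0`. The bathtub principle on slices gives `J (Y) ≤ J (A)` with its equality case,
  and the bathtub principle on the whole space compares `A` with the ball.
* For `(e', r')` close to `(e, r)` an isometry close to the identity carries caps about `r e` to caps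
  about `r' e'`; nonexpansiveness and the continuity of isometries acting on `L¹` give joint
  continuity (`cap_continuous`).
* If `A` is not equivalent to the ball `B` of the same volume, a point reflection `z ↦ 2 p - z` maps
  a positive amount of `B \ A` into `A \ B`. Then `A` is not a cap about `p` (`ball_of_fixed`).
* Compactness of orbits: let `InK X` be the class of measurable sets `C` with no more mass than `X`
  outside each ball about the origin and with nonlocal perimeters `nlp δ` at most those of `X`. As
  `nlp δ X` is small compared to the volume of a `δ`-ball, the Kolmogorov–Riesz argument shows that
  this class is sequentially compact (`exists_subseq_of_inK`). Polarization, in a hyperplane through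
  `p` towards the side of the origin, preserves the class (`inK_pol`) and the slice measures. Let `Y`
  be the cap symmetrization of a member `C` of the class. By compactness there is a member with
  the slice measures of `C` that is closest to `Y`. If it differed from `Y`, polarizing in the
  bisector of suitable density points of the two differences, on a common sphere about `p`, would
  bring it strictly closer (`exists_better`). Hence `Y` is in the class (`inK_of_cap`), and so are
  the orbits.
-/

namespace CapSymm

open Set Metric
open scoped ENNReal symmDiff

/-! ### Uniqueness of invariant measures on homogeneous spaces -/

section Uniqueness

variable {X : Type*} [MetricSpace X] [CompactSpace X] [MeasurableSpace X] [BorelSpace X]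

/-- Christensen's argument: both `μ` and `ν` give the same mass to all balls of a given radius, so
Tonelli's theorem applied to `{(x, y) | dist x y < δ}` compares `μ F` with `ν` of a thickening
of `F`. -/
theorem measure_mul_le_of_homogeneous (μ ν : Measure X) [IsFiniteMeasure μ] [IsFiniteMeasure ν]
    (h : ∀ x y : X, ∃ f : X ≃ᵢ X, f x = y ∧ MeasurePreserving f μ μ ∧ MeasurePreserving f ν ν)
    {F : Set X} (hF : IsClosed F) : μ F * ν univ ≤ μ univ * ν F := by
  rcases isEmpty_or_nonempty X with hX | ⟨⟨x₀⟩⟩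
  · simp [Set.eq_empty_of_isEmpty F]
  have ball_eq : ∀ (x : X) (δ : ℝ), μ (ball x δ) = μ (ball x₀ δ) ∧ ν (ball x δ) = ν (ball x₀ δ) := by
    intro x δ
    obtain ⟨f, hf, h1, h2⟩ := h x₀ x
    have hb : f ⁻¹' ball x δ = ball x₀ δ := by rw [← hf, IsometryEquiv.preimage_ball]; simp
    rw [← hb, h1.measure_preimage isOpen_ball.measurableSet.nullMeasurableSet,
      h2.measure_preimage isOpen_ball.measurableSet.nullMeasurableSet]
    exact ⟨rfl, rfl⟩
  have key : ∀ δ : ℝ, 0 < δ → μ F * ν univ ≤ μ univ * ν (thickening δ F) := by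
    intro δ hδ
    set a := μ (ball x₀ δ) with ha
    set b := ν (ball x₀ δ) with hb
    have gen : ∀ F : Set X, MeasurableSet F → b * μ F ≤ a * ν (thickening δ F) := by
      intro F hFm
      have hS : MeasurableSet {q : X × X | q.1 ∈ F ∧ dist q.1 q.2 < δ} :=
        (measurable_fst hFm).inter (isOpen_lt continuous_dist continuous_const).measurableSet
      have h1 : (μ.prod ν) {q : X × X | q.1 ∈ F ∧ dist q.1 q.2 < δ} = b * μ F := by
        rw [Measure.prod_apply hS, ← setLIntegral_const, ← lintegral_indicator hFm]
        refine lintegral_congr fun x => ?_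
        by_cases hx : x ∈ F
        · rw [indicator_of_mem hx, hb, ← (ball_eq x δ).2]
          congr 1; ext y; simp [hx, dist_comm]
        · simp [hx]
      have h2 : (μ.prod ν) {q : X × X | q.1 ∈ F ∧ dist q.1 q.2 < δ} ≤ a * ν (thickening δ F) := by
        have hT : MeasurableSet (thickening δ F) := isOpen_thickening.measurableSet
        rw [Measure.prod_apply_symm hS, ← setLIntegral_const, ← lintegral_indicator hT]
        refine lintegral_mono fun y => ?_
        by_cases hy : y ∈ thickening δ F
        · rw [indicator_of_mem hy, ha, ← (ball_eq y δ).1]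
          exact measure_mono fun x hx => hx.2
        · have : ((fun x => (x, y)) ⁻¹' {q : X × X | q.1 ∈ F ∧ dist q.1 q.2 < δ}) = ∅ := by
            ext x
            simp only [mem_preimage, mem_ofPred_eq, mem_empty_iff_false, iff_false, not_and]
            intro hx hd
            exact hy (mem_thickening_iff.2 ⟨x, hx, by rwa [dist_comm]⟩)
          simp [this]
      exact h1 ▸ h2
    have heq : b * μ univ = a * ν univ := by
      have hS : MeasurableSet {q : X × X | dist q.1 q.2 < δ} :=
        (isOpen_lt continuous_dist continuous_const).measurableSet
      have e1 := Measure.prod_apply (μ := μ) (ν := ν) hS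
      have e2 := Measure.prod_apply_symm (μ := μ) (ν := ν) hS
      have e3 : ∀ x : X, ν (Prod.mk x ⁻¹' {q : X × X | dist q.1 q.2 < δ}) = b := by
        intro x
        rw [hb, ← (ball_eq x δ).2]; congr 1; ext y; simp [dist_comm]
      have e4 : ∀ y : X, μ ((fun x => (x, y)) ⁻¹' {q : X × X | dist q.1 q.2 < δ}) = a := by
        intro x
        rw [ha, ← (ball_eq x δ).1]; congr 1
      simp_rw [e3] at e1
      simp_rw [e4] at e2
      rw [lintegral_const] at e1 e2
      rw [← e1, ← e2]
    rcases eq_or_ne b 0 with hb0 | hb0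
    · have : ν univ = 0 := by
        obtain ⟨t, -, ht⟩ := (isCompact_univ (X := X)).elim_finite_subcover_image
          (b := univ) (c := fun x => ball x δ) (fun _ _ => isOpen_ball)
          (fun x _ => mem_iUnion₂.2 ⟨x, mem_univ _, mem_ball_self hδ⟩)
        refine measure_mono_null ht.2 ((measure_biUnion_null_iff ht.1.countable).2 ?_)
        intro x _
        rw [(ball_eq x δ).2]; exact hb0
      simp [this]
    · have hbt : b ≠ ⊤ := measure_ne_top _ _
      rw [← ENNReal.mul_le_mul_iff_right hb0 hbt]
      calc b * (μ F * ν univ) = (b * μ F) * ν univ := by ring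
        _ ≤ (a * ν (thickening δ F)) * ν univ := by
          gcongr ?_ * _; exact gen F hF.measurableSet
        _ = (a * ν univ) * ν (thickening δ F) := by ring
        _ = b * (μ univ * ν (thickening δ F)) := by rw [← heq]; ring
  have hlim : Tendsto (fun δ => μ univ * ν (thickening δ F)) (𝓝[>] 0) (𝓝 (μ univ * ν F)) :=
    ENNReal.Tendsto.const_mul
      (tendsto_measure_thickening_of_isClosed ⟨1, one_pos, measure_ne_top _ _⟩ hF)
      (Or.inr (measure_ne_top _ _))
  refine ge_of_tendsto hlim ?_
  filter_upwards [self_mem_nhdsWithin] with δ hδ using key δ hδ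

/-- Two finite measures on a compact metric space that are invariant under a transitive family of
isometries are proportional. -/
theorem smul_eq_smul_of_homogeneous (μ ν : Measure X) [IsFiniteMeasure μ] [IsFiniteMeasure ν]
    (h : ∀ x y : X, ∃ f : X ≃ᵢ X, f x = y ∧ MeasurePreserving f μ μ ∧ MeasurePreserving f ν ν)
    (A : Set X) : μ A * ν univ = ν A * μ univ := by
  have hfin : IsFiniteMeasure (ν univ • μ) := μ.smul_finite (measure_ne_top _ _)
  have : ν univ • μ = μ univ • ν := by
    refine ext_of_generate_finite {s | IsClosed s} ?_ isPiSystem_isClosed ?_ ?_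
    · rw [BorelSpace.measurable_eq (α := X), borel_eq_generateFrom_isClosed]
    · intro F hF
      simp only [Measure.smul_apply, smul_eq_mul]
      apply le_antisymm
      · rw [mul_comm (ν univ)]; exact measure_mul_le_of_homogeneous μ ν h hF
      · have := measure_mul_le_of_homogeneous ν μ
          (fun x y => by obtain ⟨f, a, b, c⟩ := h x y; exact ⟨f, a, c, b⟩) hF
        rwa [mul_comm] at this
    · simp [mul_comm]
  have h2 := congrArg (fun m : Measure X => m A) this
  simpa [mul_comm] using h2

end Uniqueness

/-! ### Rearrangement inequalities for sets in a measure space -/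

section Abstract

variable {α : Type*} [MeasurableSpace α]

theorem measure_sdiff_comm_of_eq {μ : Measure α} {A C : Set α} (hA : MeasurableSet A)
    (hC : MeasurableSet C) (hAC : μ A = μ C) (hfin : μ A ≠ ⊤) : μ (C \ A) = μ (A \ C) := by
  have h1 := measure_inter_add_sdiff (μ := μ) A hC
  have h2 := measure_inter_add_sdiff (μ := μ) C hA
  rw [← hAC, ← h1, inter_comm] at h2
  exact (ENNReal.add_right_inj (ne_top_of_le_ne_top hfin (measure_mono inter_subset_left))).1 h2

/-- Bathtub principle: if `w` is smaller on `C \ A` than on `A \ C` and `A`, `C` have the same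
measure, then passing from `A` to `C` lowers the integral of `w`. -/
theorem bathtub_le {μ : Measure α} {A C : Set α} (hA : MeasurableSet A) (hC : MeasurableSet C)
    {w : α → ℝ≥0∞} (hAC : μ A = μ C) (hfin : μ A ≠ ⊤)
    (h : ∀ x ∈ C \ A, ∀ y ∈ A \ C, w x ≤ w y) :
    ∫⁻ x in C, w x ∂μ ≤ ∫⁻ x in A, w x ∂μ := by
  have hm : μ (C \ A) = μ (A \ C) := measure_sdiff_comm_of_eq hA hC hAC hfin
  rw [← lintegral_inter_add_sdiff w C hA, ← lintegral_inter_add_sdiff w A hC, inter_comm A C]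
  refine add_le_add_right ?_ _
  calc ∫⁻ x in C \ A, w x ∂μ ≤ ∫⁻ x in C \ A, (⨆ x ∈ C \ A, w x) ∂μ :=
        setLIntegral_mono' (hC.diff hA) fun x hx => le_iSup₂ (f := fun x _ => w x) x hx
    _ = ∫⁻ x in A \ C, (⨆ x ∈ C \ A, w x) ∂μ := by simp only [setLIntegral_const, hm]
    _ ≤ ∫⁻ x in A \ C, w x ∂μ :=
        setLIntegral_mono' (hA.diff hC) fun y hy => iSup₂_le fun x hx => h x hx y hy

theorem bathtub_eq {μ : Measure α} {A C : Set α} (hA : MeasurableSet A) (hC : MeasurableSet C)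
    {w : α → ℝ≥0∞} (hw : Measurable w) (hAC : μ A = μ C) (hfin : μ A ≠ ⊤)
    (h : ∀ x ∈ C \ A, ∀ y ∈ A \ C, w x < w y) (hwfin : ∫⁻ x in A, w x ∂μ ≠ ⊤)
    (heq : ∫⁻ x in A, w x ∂μ ≤ ∫⁻ x in C, w x ∂μ) : μ (C \ A) = 0 := by
  by_contra h0
  have hm : μ (C \ A) = μ (A \ C) := measure_sdiff_comm_of_eq hA hC hAC hfin
  have hle := bathtub_le hA hC hAC hfin fun x hx y hy => (h x hx y hy).le
  have hAfin : ∫⁻ x in A \ C, w x ∂μ ≠ ⊤ :=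
    ne_top_of_le_ne_top hwfin (lintegral_mono_set sdiff_subset)
  have hCfin : ∫⁻ x in C \ A, w x ∂μ ≠ ⊤ :=
    ne_top_of_le_ne_top (ne_top_of_le_ne_top hwfin hle) (lintegral_mono_set sdiff_subset)
  have hif : ∫⁻ x in C ∩ A, w x ∂μ ≠ ⊤ :=
    ne_top_of_le_ne_top hwfin (lintegral_mono_set inter_subset_right)
  rw [← lintegral_inter_add_sdiff w C hA, ← lintegral_inter_add_sdiff w A hC, inter_comm A C,
    ENNReal.add_le_add_iff_left hif] at heq
  obtain ⟨x, hx, hx'⟩ := exists_setLAverage_le h0 (hC.diff hA).nullMeasurableSet hCfin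
  obtain ⟨y, hy, hy'⟩ := exists_le_setLAverage (μ := μ) (s := A \ C) (f := w) (hm ▸ h0)
    (ne_top_of_le_ne_top hfin (measure_mono sdiff_subset)) hw.aemeasurable
  refine absurd (h x hx y hy) (not_lt.2 ?_)
  refine hy'.trans (le_trans ?_ hx')
  rw [setLAverage_eq, setLAverage_eq, hm]
  gcongr

/-- Two-point principle: an inequality between sums over the orbits of a measure-preserving
involution integrates. -/
theorem lintegral_le_of_two_point {μ : Measure α} {τ : α → α} (hτ : MeasurePreserving τ μ μ)
    (hinv : ∀ x, τ (τ x) = x) {H : Set α} (hH : ∀ x, x ∈ H ∨ τ x ∈ H) {F G : α → ℝ≥0∞}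
    (hF : Measurable F) (hG : Measurable G) (h : ∀ x ∈ H, F x + F (τ x) ≤ G x + G (τ x)) :
    ∫⁻ x, F x ∂μ ≤ ∫⁻ x, G x ∂μ := by
  have h' : ∀ x, F x + F (τ x) ≤ G x + G (τ x) := by
    intro x
    rcases hH x with hx | hx
    · exact h x hx
    · have := h _ hx
      rw [hinv] at this
      rwa [add_comm, add_comm (G x)]
  have h2 : 2 * ∫⁻ x, F x ∂μ ≤ 2 * ∫⁻ x, G x ∂μ := by
    calc 2 * ∫⁻ x, F x ∂μ = ∫⁻ x, F x + F (τ x) ∂μ := by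
          rw [lintegral_add_left hF, hτ.lintegral_comp hF, two_mul]
      _ ≤ ∫⁻ x, G x + G (τ x) ∂μ := lintegral_mono h'
      _ = 2 * ∫⁻ x, G x ∂μ := by
          rw [lintegral_add_left hG, hτ.lintegral_comp hG, two_mul]
  rwa [ENNReal.mul_le_mul_iff_right (by norm_num) (by norm_num)] at h2

/-- A sequence of measurable sets that is fast Cauchy for `μ (A ∆ B)` converges. -/
theorem exists_limit_of_fast_cauchy {μ : Measure α} {F : ℕ → Set α}
    (hF : ∀ n, MeasurableSet (F n)) (hc : ∀ n, μ (F n ∆ F (n + 1)) ≤ 2⁻¹ ^ n) :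
    ∃ Y, MeasurableSet Y ∧ Tendsto (fun n => μ (F n ∆ Y)) atTop (𝓝 0) := by
  refine ⟨⋂ n, ⋃ k, F (n + k), .iInter fun n => .iUnion fun k => hF _, ?_⟩
  have hb : ∀ n, μ (F n ∆ ⋂ n, ⋃ k, F (n + k)) ≤ ∑' k, (2⁻¹ : ℝ≥0∞) ^ (k + n) := by
    intro n
    have hsub : F n ∆ (⋂ n, ⋃ k, F (n + k)) ⊆ ⋃ k, (F (k + n) ∆ F (k + n + 1)) := by
      intro x hx
      by_contra hx'
      simp only [mem_iUnion, not_exists] at hx'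
      have hst : ∀ k, (x ∈ F (k + n) ↔ x ∈ F n) := by
        intro k
        induction k with
        | zero => simp
        | succ k ih =>
          have := hx' k
          rw [mem_symmDiff] at this
          rw [← ih, show k + 1 + n = k + n + 1 by ring]
          tauto
      have : x ∈ F n ↔ x ∈ ⋂ n, ⋃ k, F (n + k) := by
        simp only [mem_iInter, mem_iUnion]
        constructor
        · intro h m
          exact ⟨n, by rw [hst m]; exact h⟩
        · intro h
          obtain ⟨k, hk⟩ := h n
          rwa [add_comm, hst k] at hk
      rw [mem_symmDiff] at hx
      tauto
    exact (measure_mono hsub).trans ((measure_iUnion_le _).trans (ENNReal.tsum_le_tsum fun k => hc _))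
  refine tendsto_of_tendsto_of_tendsto_of_le_of_le tendsto_const_nhds
    (ENNReal.tendsto_sum_nat_add (fun k => (2⁻¹ : ℝ≥0∞) ^ k) ?_) (fun _ => zero_le) hb
  rw [ENNReal.tsum_geometric]
  simp

end Abstract

/-! ### Polar coordinates and slices -/

/-- The unit sphere of `ℝ^d`. -/
abbrev Sph (d : ℕ) : Type := sphere (0 : Euc d) 1

/-- The surface measure on the unit sphere for which polar coordinates hold. -/
abbrev sig (d : ℕ) : Measure (Sph d) := (volume : Measure (Euc d)).toSphere

/-- The radial measure `t ^ (d - 1) dt` on `(0, ∞)`. -/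
abbrev rad (d : ℕ) : Measure (Ioi (0 : ℝ)) :=
  Measure.volumeIoiPow (Module.finrank ℝ (Euc d) - 1)

/-- The slice of `A` by the sphere of centre `p` and radius `t`, rescaled to the unit sphere. -/
def sl {d : ℕ} (p : Euc d) (A : Set (Euc d)) (t : ℝ) : Set (Sph d) :=
  {u | p + t • (u : Euc d) ∈ A}

theorem mem_sl {d : ℕ} {p : Euc d} {A : Set (Euc d)} {t : ℝ} {u : Sph d} :
    u ∈ sl p A t ↔ p + t • (u : Euc d) ∈ A := Iff.rfl

theorem measurableSet_sl {d : ℕ} (p : Euc d) {A : Set (Euc d)} (hA : MeasurableSet A) (t : ℝ) :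
    MeasurableSet (sl p A t) :=
  (by fun_prop : Measurable fun u : Sph d => p + t • (u : Euc d)) hA

theorem lintegral_polar {d : ℕ} [NeZero d] (p : Euc d) {f : Euc d → ℝ≥0∞} (hf : Measurable f) :
    ∫⁻ x, f x = ∫⁻ t, ∫⁻ u, f (p + t.1 • (u : Euc d)) ∂(sig d) ∂(rad d) := by
  have hmp := (volume : Measure (Euc d)).measurePreserving_homeomorphUnitSphereProd
  have hsymm := hmp.symm (homeomorphUnitSphereProd (Euc d)).toMeasurableEquiv
  have hg : Measurable fun q : Sph d × Ioi (0 : ℝ) => f (p + q.2.1 • (q.1 : Euc d)) := by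
    fun_prop
  rw [← lintegral_prod_symm' _ hg, ← lintegral_add_left_eq_self f p]
  have h0 : ∫⁻ x, f (p + x) = ∫⁻ x : ({0}ᶜ : Set (Euc d)), f (p + x.1)
      ∂(volume.comap (Subtype.val : ({0}ᶜ : Set (Euc d)) → Euc d)) := by
    rw [lintegral_subtype_comap (measurableSet_singleton _).compl fun x => f (p + x)]
    rw [Measure.restrict_eq_self_of_ae_mem]
    exact Measure.ae_ne volume 0
  rw [h0, ← hsymm.lintegral_comp (by fun_prop)]
  rfl

theorem measurable_sl {d : ℕ} (p : Euc d) {A : Set (Euc d)} (hA : MeasurableSet A) :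
    Measurable fun t : Ioi (0 : ℝ) => sig d (sl p A t.1) := by
  have h : MeasurableSet {q : Ioi (0 : ℝ) × Sph d | p + q.1.1 • (q.2 : Euc d) ∈ A} :=
    (by fun_prop : Measurable fun q : Ioi (0 : ℝ) × Sph d => p + q.1.1 • (q.2 : Euc d)) hA
  exact measurable_measure_prodMk_left h

theorem volume_eq_slices {d : ℕ} [NeZero d] (p : Euc d) {A : Set (Euc d)} (hA : MeasurableSet A) :
    volume A = ∫⁻ t, sig d (sl p A t.1) ∂(rad d) := by
  rw [← lintegral_indicator_one hA, lintegral_polar p (measurable_one.indicator hA)]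
  refine lintegral_congr fun t => ?_
  rw [← lintegral_indicator_one (measurableSet_sl p hA t.1)]
  rfl

theorem setLIntegral_eq_slices {d : ℕ} [NeZero d] (p : Euc d) {A : Set (Euc d)}
    (hA : MeasurableSet A) {w : Euc d → ℝ≥0∞} (hw : Measurable w) :
    ∫⁻ x in A, w x
      = ∫⁻ t, ∫⁻ u in sl p A t.1, w (p + t.1 • (u : Euc d)) ∂(sig d) ∂(rad d) := by
  rw [← lintegral_indicator hA, lintegral_polar p (hw.indicator hA)]
  refine lintegral_congr fun t => ?_
  rw [← lintegral_indicator (measurableSet_sl p hA t.1)]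
  rfl

/-! ### The surface measure and the Hausdorff measure on the sphere -/

/-- The isometry of the unit sphere induced by a linear isometry. -/
def sphIso {d : ℕ} (T : Euc d ≃ₗᵢ[ℝ] Euc d) : Sph d ≃ᵢ Sph d where
  toFun u := ⟨T u, by simp⟩
  invFun u := ⟨T.symm u, by simp⟩
  left_inv u := by simp
  right_inv u := by simp
  isometry_toFun := Isometry.of_dist_eq fun u v => by
    simp only [Subtype.dist_eq]; exact T.dist_map _ _

theorem coe_sphIso {d : ℕ} (T : Euc d ≃ₗᵢ[ℝ] Euc d) (u : Sph d) :
    (sphIso T u : Euc d) = T u := rfl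

open scoped Pointwise in
theorem measurePreserving_sphIso {d : ℕ} (T : Euc d ≃ₗᵢ[ℝ] Euc d) :
    MeasurePreserving (sphIso T) (sig d) (sig d) := by
  refine ⟨(sphIso T).continuous.measurable, Measure.ext fun s hs => ?_⟩
  rw [Measure.map_apply (sphIso T).continuous.measurable hs, Measure.toSphere_apply' _ hs,
    Measure.toSphere_apply' _ ((sphIso T).continuous.measurable hs)]
  congr 1
  have : Ioo (0 : ℝ) 1 • ((↑) '' (sphIso T ⁻¹' s) : Set (Euc d))
      = T ⁻¹' (Ioo (0 : ℝ) 1 • ((↑) '' s : Set (Euc d))) := by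
    ext x
    simp only [Set.mem_smul, mem_image, mem_preimage]
    constructor
    · rintro ⟨r, hr, -, ⟨u, hu, rfl⟩, rfl⟩
      exact ⟨r, hr, T u, ⟨sphIso T u, hu, rfl⟩, by simp⟩
    · rintro ⟨r, hr, -, ⟨u, hu, rfl⟩, h⟩
      refine ⟨r, hr, T.symm u, ⟨(sphIso T).symm u, by simpa using hu, rfl⟩, ?_⟩
      apply T.injective
      simpa using h
  rw [this]
  exact T.measurePreserving.measure_preimage_equiv (f := T.toMeasurableEquiv) _

theorem exists_isometry {d : ℕ} {u v : Euc d} (h : ‖u‖ = ‖v‖) :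
    ∃ T : Euc d ≃ₗᵢ[ℝ] Euc d, T u = v :=
  ⟨(ℝ ∙ (u - v))ᗮ.reflection, Submodule.reflection_sub h⟩

/-- The point of the upper half-sphere whose last `n` coordinates are `w`, for `‖w‖ < 1`. -/
def lift {n : ℕ} (w : Euc n) : Euc (n + 1) :=
  WithLp.toLp 2 (Fin.cons (√(1 - ‖w‖ ^ 2)) w.ofLp)

/-- Projection of `ℝ^(n+1)` onto the last `n` coordinates. -/
def tail {n : ℕ} (x : Euc (n + 1)) : Euc n := WithLp.toLp 2 fun i => x i.succ

theorem norm_sq_tail {n : ℕ} (x : Euc (n + 1)) : ‖x‖ ^ 2 = x 0 ^ 2 + ‖tail x‖ ^ 2 := by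
  simp [EuclideanSpace.real_norm_sq_eq, Fin.sum_univ_succ, tail]

theorem tail_lift {n : ℕ} (w : Euc n) : tail (lift w) = w := by
  ext i; simp [tail, lift]

theorem lift_tail {n : ℕ} {x : Euc (n + 1)} (hx : ‖x‖ = 1) (h0 : 0 < x 0) :
    lift (tail x) = x := by
  have h := norm_sq_tail x
  rw [hx] at h
  have h1 : 1 - ‖tail x‖ ^ 2 = x 0 ^ 2 := by linarith
  ext i
  refine Fin.cases ?_ (fun j => ?_) i
  · simp [lift, h1, Real.sqrt_sq h0.le]
  · simp [lift, tail]

theorem norm_lift {n : ℕ} {w : Euc n} (hw : ‖w‖ ≤ 1) : ‖lift w‖ = 1 := by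
  have h := norm_sq_tail (lift w)
  have h0 : lift w 0 ^ 2 = 1 - ‖w‖ ^ 2 := by
    simp only [lift, Fin.cons_zero]
    rw [Real.sq_sqrt]
    nlinarith [norm_nonneg w]
  rw [tail_lift, h0] at h
  have h2 : ‖lift w‖ ^ 2 = 1 := by linarith
  nlinarith [norm_nonneg (lift w)]

theorem contDiffAt_lift {n : ℕ} : ContDiffAt ℝ 1 (lift (n := n)) 0 := by
  rw [contDiffAt_euclidean]
  intro i
  refine Fin.cases ?_ (fun j => ?_) i
  · simp only [lift, Fin.cons_zero]
    refine ContDiffAt.sqrt ?_ (by simp)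
    exact contDiffAt_const.sub (contDiff_norm_sq ℝ).contDiffAt
  · simp only [lift, Fin.cons_succ]
    exact contDiffAt_euclidean.1 contDiffAt_id j

theorem lipschitz_tail {n : ℕ} : LipschitzWith 1 (tail (n := n)) := by
  refine LipschitzWith.of_dist_le_mul fun x y => ?_
  have h := norm_sq_tail (x - y)
  have h2 : tail (x - y) = tail x - tail y := by ext; simp [tail]
  rw [dist_eq_norm, dist_eq_norm, ← h2]
  simp only [NNReal.coe_one, one_mul]
  nlinarith [norm_nonneg (x - y), norm_nonneg (tail (x - y)), sq_nonneg ((x - y) 0)]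

theorem haar_hausdorff {n : ℕ} : (μH[(n : ℝ)] : Measure (Euc n)).IsAddHaarMeasure := by
  have := isAddHaarMeasure_hausdorffMeasure (E := Euc n)
  simpa using this

theorem hausdorff_sph_ne_zero (n : ℕ) : (μH[(n : ℝ)] : Measure (Sph (n + 1))) univ ≠ 0 := by
  intro h0
  have := haar_hausdorff (n := n)
  have h1 : ball (0 : Euc n) 1 ⊆ (fun u : Sph (n + 1) => tail (u : Euc (n + 1))) '' univ := by
    intro w hw
    rw [mem_ball_zero_iff] at hw
    exact ⟨⟨lift w, by simpa using norm_lift hw.le⟩, mem_univ _, tail_lift w⟩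
  have h2 := ((lipschitz_tail (n := n)).comp
    (LipschitzWith.subtype_val (sphere (0 : Euc (n + 1)) 1))).hausdorffMeasure_image_le
    (Nat.cast_nonneg n) univ
  rw [h0, mul_zero] at h2
  have h3 := (measure_mono h1).trans h2
  exact (measure_ball_pos μH[(n : ℝ)] (0 : Euc n) one_pos).not_ge h3

theorem hausdorff_sph_finite (n : ℕ) : IsFiniteMeasure (μH[(n : ℝ)] : Measure (Sph (n + 1))) := by
  have := haar_hausdorff (n := n)
  obtain ⟨K, N, hN, hL⟩ := (contDiffAt_lift (n := n)).exists_lipschitzOnWith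
  -- a neighbourhood of the north pole on which the sphere is a Lipschitz graph
  let V : Set (Sph (n + 1)) :=
    {u | 0 < (u : Euc (n + 1)) 0 ∧ tail (u : Euc (n + 1)) ∈ interior N ∩ ball 0 1}
  have hVo : IsOpen V := by
    have hc : Continuous fun u : Sph (n + 1) => (u : Euc (n + 1)) 0 := by fun_prop
    refine IsOpen.inter (isOpen_lt continuous_const hc) ?_
    exact (isOpen_interior.inter isOpen_ball).preimage
      (lipschitz_tail.continuous.comp continuous_subtype_val)
  let e : Sph (n + 1) := ⟨lift 0, by simpa using norm_lift (n := n) (w := 0) (by simp)⟩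
  have heV : e ∈ V := by
    refine ⟨by simp [e, lift], ?_⟩
    simp only [e, tail_lift]
    exact ⟨mem_interior_iff_mem_nhds.2 hN, mem_ball_self one_pos⟩
  have hV : (μH[(n : ℝ)] : Measure (Sph (n + 1))) V < ⊤ := by
    rw [← isometry_subtype_coe.hausdorffMeasure_image (Or.inl (Nat.cast_nonneg n))]
    have hsub : ((↑) '' V : Set (Euc (n + 1))) ⊆ lift '' (N ∩ ball 0 1) := by
      rintro _ ⟨u, hu, rfl⟩
      exact ⟨tail u, ⟨interior_subset hu.2.1, hu.2.2⟩, lift_tail (by simp) hu.1⟩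
    refine (measure_mono hsub).trans_lt ?_
    refine ((hL.mono inter_subset_left).hausdorffMeasure_image_le (Nat.cast_nonneg n)).trans_lt ?_
    refine ENNReal.mul_lt_top (ENNReal.rpow_lt_top_of_nonneg (Nat.cast_nonneg n) (by simp)) ?_
    exact (measure_mono inter_subset_right).trans_lt measure_ball_lt_top
  refine ⟨isCompact_univ.measure_lt_top_of_nhdsWithin fun u _ => ?_⟩
  obtain ⟨T, hT⟩ := exists_isometry (u := (u : Euc (n + 1))) (v := e) (by simp)
  rw [nhdsWithin_univ]
  refine ⟨sphIso T ⁻¹' V, ?_, ?_⟩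
  · refine (hVo.preimage (sphIso T).continuous).mem_nhds ?_
    rw [mem_preimage, show sphIso T u = e from Subtype.ext hT]
    exact heV
  · rw [IsometryEquiv.hausdorffMeasure_preimage]
    exact hV

open scoped Pointwise in
/-- Up to scaling by `t ^ (d - 1)` and a positive constant, the Hausdorff measure of a part of the
sphere of radius `t` is the surface measure of its rescaling. -/
theorem sig_eq_of_hausdorff_eq {d : ℕ} [NeZero d] {p : Euc d} {t : ℝ} (ht : 0 < t)
    {A B : Set (Euc d)}
    (h : μH[(d : ℝ) - 1] (A ∩ sphere p t) = μH[(d : ℝ) - 1] (B ∩ sphere p t)) :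
    sig d (sl p A t) = sig d (sl p B t) := by
  obtain ⟨n, rfl⟩ : ∃ n, d = n + 1 := ⟨d - 1, (Nat.succ_pred (NeZero.ne d)).symm⟩
  rw [show ((n + 1 : ℕ) : ℝ) - 1 = n by push_cast; ring] at h
  have hslice : ∀ A : Set (Euc (n + 1)), μH[(n : ℝ)] (A ∩ sphere p t)
      = ‖t‖₊ ^ (n : ℝ) • (μH[(n : ℝ)] : Measure (Sph (n + 1))) (sl p A t) := by
    intro A
    have hset : A ∩ sphere p t
        = (fun x => p + x) '' (t • ((↑) '' sl p A t : Set (Euc (n + 1)))) := by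
      ext x
      simp only [mem_inter_iff, mem_image, Set.mem_smul_set]
      constructor
      · rintro ⟨hx, hxs⟩
        rw [mem_sphere_iff_norm] at hxs
        refine ⟨x - p, ⟨t⁻¹ • (x - p), ⟨⟨t⁻¹ • (x - p), ?_⟩, ?_, rfl⟩, ?_⟩, by simp⟩
        · simp [norm_smul, hxs, ht.ne', abs_of_pos ht]
        · simpa [mem_sl, smul_smul, ht.ne'] using hx
        · simp [smul_smul, ht.ne']
      · rintro ⟨-, ⟨-, ⟨u, hu, rfl⟩, rfl⟩, rfl⟩
        refine ⟨hu, ?_⟩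
        simp [norm_smul, abs_of_pos ht]
    rw [hset, (isometry_add_left p).hausdorffMeasure_image (Or.inl (Nat.cast_nonneg n)),
      Measure.hausdorffMeasure_smul₀ (Nat.cast_nonneg n) ht.ne',
      (isometry_subtype_coe (s := sphere (0 : Euc (n + 1)) 1)).hausdorffMeasure_image
        (Or.inl (Nat.cast_nonneg n))]
  rw [hslice, hslice] at h
  have htn : (‖t‖₊ ^ (n : ℝ) : ℝ≥0) ≠ 0 := by simp [NNReal.rpow_natCast, ht.ne']
  have h' : (μH[(n : ℝ)] : Measure (Sph (n + 1))) (sl p A t) = μH[(n : ℝ)] (sl p B t) := by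
    rw [ENNReal.smul_def, ENNReal.smul_def, smul_eq_mul, smul_eq_mul] at h
    exact (ENNReal.mul_right_inj (by exact_mod_cast htn) (by simp)).1 h
  have := hausdorff_sph_finite n
  have key := smul_eq_smul_of_homogeneous (sig (n + 1)) (μH[(n : ℝ)] : Measure (Sph (n + 1)))
    (fun u v => by
      obtain ⟨T, hT⟩ := exists_isometry (u := (u : Euc (n + 1))) (v := v) (by simp)
      exact ⟨sphIso T, Subtype.ext hT, measurePreserving_sphIso T,
        (sphIso T).measurePreserving_hausdorffMeasure _⟩)
  have h0 := hausdorff_sph_ne_zero n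
  refine (ENNReal.mul_left_inj h0 (measure_ne_top _ _)).1 ?_
  rw [key, key, h']

/-! ### Caps and equimeasurable slices -/

/-- `Y` is measurable and meets each sphere about `p` in a cap pointing in the direction `-e`,
possibly empty, full, open or closed: it contains every point at least as far in the
direction `-e` as one of its points on the same sphere. -/
structure Cap {d : ℕ} (e p : Euc d) (Y : Set (Euc d)) : Prop where
  meas : MeasurableSet Y
  mem : ∀ x y, x ≠ p → ‖x - p‖ = ‖y - p‖ → ⟪x - p, e⟫ ≤ ⟪y - p, e⟫ → y ∈ Y → x ∈ Y

/-- Almost all spheres about `p` meet `A` and `B` in sets of the same surface measure. -/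
def Equi {d : ℕ} (p : Euc d) (A B : Set (Euc d)) : Prop :=
  ∀ᵐ t ∂(rad d), sig d (sl p A t.1) = sig d (sl p B t.1)

theorem Equi.refl {d : ℕ} (p : Euc d) (A : Set (Euc d)) : Equi p A A := ae_of_all _ fun _ => rfl

theorem Equi.symm {d : ℕ} {p : Euc d} {A B : Set (Euc d)} (h : Equi p A B) : Equi p B A :=
  Filter.Eventually.mono h fun _ h => h.symm

theorem Equi.trans {d : ℕ} {p : Euc d} {A B C : Set (Euc d)} (h : Equi p A B) (h' : Equi p B C) :
    Equi p A C := by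
  filter_upwards [h, h'] with t h h' using h.trans h'

theorem cap_of_isCapSymmOf {d : ℕ} {e : Euc d} {r : ℝ} {X Y : Set (Euc d)}
    (h : IsCapSymmOf e r X Y) : Cap e (r • e) Y := by
  refine ⟨h.1, fun x y hx hxy hle hy => ?_⟩
  obtain ⟨⟨c, hc⟩, -⟩ := h.2 ‖x - r • e‖ (norm_pos_iff.2 (sub_ne_zero.2 hx))
  have hy' : y ∈ Y ∩ sphere (r • e) ‖x - r • e‖ := ⟨hy, by rw [mem_sphere_iff_norm, hxy]⟩
  have hx' : x ∈ Y ∩ sphere (r • e) ‖x - r • e‖ := by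
    rw [hc] at hy' ⊢
    refine ⟨by rw [mem_sphere_iff_norm], hy'.2.trans_le ?_⟩
    simpa [inner_neg_right] using hle
  exact hx'.1

theorem equi_of_isCapSymmOf {d : ℕ} [NeZero d] {e : Euc d} {r : ℝ} {X Y : Set (Euc d)}
    (h : IsCapSymmOf e r X Y) : Equi (r • e) X Y :=
  ae_of_all _ fun t => (sig_eq_of_hausdorff_eq t.2 (h.2 t.1 t.2).2).symm

theorem Cap.mem_sl {d : ℕ} {e p : Euc d} {Y : Set (Euc d)} (h : Cap e p Y) {t : ℝ} (ht : 0 < t)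
    {u v : Sph d} (huv : ⟪(u : Euc d), e⟫ ≤ ⟪(v : Euc d), e⟫) (hv : v ∈ sl p Y t) :
    u ∈ sl p Y t := by
  refine h.mem _ _ ?_ ?_ ?_ hv
  · have : (u : Euc d) ≠ 0 := norm_ne_zero_iff.1 (by simp)
    simpa using ⟨ht.ne', this⟩
  · simp [norm_smul]
  · simp only [add_sub_cancel_left, real_inner_smul_left]
    gcongr

theorem Cap.sl_nested {d : ℕ} {e p : Euc d} {Y Z : Set (Euc d)} (hY : Cap e p Y) (hZ : Cap e p Z)
    {t : ℝ} (ht : 0 < t) : sl p Y t ⊆ sl p Z t ∨ sl p Z t ⊆ sl p Y t := by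
  by_contra! h
  obtain ⟨u, hu, hu'⟩ := not_subset.1 h.1
  obtain ⟨v, hv, hv'⟩ := not_subset.1 h.2
  rcases le_total ⟪(u : Euc d), e⟫ ⟪(v : Euc d), e⟫ with h | h
  · exact hu' (hZ.mem_sl ht h hv)
  · exact hv' (hY.mem_sl ht h hu)

theorem cap_ball {d : ℕ} {e : Euc d} {r : ℝ} (hr : 0 ≤ r) (R : ℝ) :
    Cap e (r • e) (ball 0 R) := by
  refine ⟨measurableSet_ball, fun x y _ hxy hle hy => ?_⟩
  rw [mem_ball_zero_iff] at hy ⊢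
  refine lt_of_le_of_lt ?_ hy
  have hx : ‖x‖ ^ 2 = ‖x - r • e‖ ^ 2 + 2 * (r * ⟪x - r • e, e⟫) + ‖r • e‖ ^ 2 := by
    rw [← real_inner_smul_right, ← norm_add_sq_real]; simp
  have hy : ‖y‖ ^ 2 = ‖y - r • e‖ ^ 2 + 2 * (r * ⟪y - r • e, e⟫) + ‖r • e‖ ^ 2 := by
    rw [← real_inner_smul_right, ← norm_add_sq_real]; simp
  have := mul_le_mul_of_nonneg_left hle hr
  rw [hxy] at hx
  nlinarith [norm_nonneg x, norm_nonneg y]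

theorem volume_eq_of_equi {d : ℕ} [NeZero d] {p : Euc d} {A B : Set (Euc d)}
    (hA : MeasurableSet A) (hB : MeasurableSet B) (h : Equi p A B) : volume A = volume B := by
  rw [volume_eq_slices p hA, volume_eq_slices p hB]
  exact lintegral_congr_ae h

/-- Caps about the same point in the same direction have nested slices, so that
`σ (Y_t \ Z_t) = (σ Y_t - σ Z_t)₊ = (σ A_t - σ B_t)₊ ≤ σ (A_t \ B_t)`. -/
theorem volume_sdiff_le {d : ℕ} [NeZero d] {e p : Euc d} {A B Y Z : Set (Euc d)}
    (hA : MeasurableSet A) (hB : MeasurableSet B) (hY : Cap e p Y) (hZ : Cap e p Z)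
    (hAY : Equi p A Y) (hBZ : Equi p B Z) : volume (Y \ Z) ≤ volume (A \ B) := by
  rw [volume_eq_slices p (hY.meas.diff hZ.meas), volume_eq_slices p (hA.diff hB)]
  refine lintegral_mono_ae ?_
  filter_upwards [hAY, hBZ] with t h1 h2
  change sig d (sl p Y t.1 \ sl p Z t.1) ≤ sig d (sl p A t.1 \ sl p B t.1)
  rcases hY.sl_nested hZ t.2 with h | h
  · rw [sdiff_eq_empty.2 h]; simp
  · rw [measure_sdiff h (measurableSet_sl p hZ.meas _).nullMeasurableSet (measure_ne_top _ _),
      ← h1, ← h2]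
    exact le_measure_sdiff

theorem volume_symmDiff_eq_add {d : ℕ} {A B : Set (Euc d)} (hA : MeasurableSet A)
    (hB : MeasurableSet B) : volume (A ∆ B) = volume (A \ B) + volume (B \ A) :=
  measure_symmDiff_eq hA.nullMeasurableSet hB.nullMeasurableSet

theorem volume_symmDiff_le {d : ℕ} [NeZero d] {e p : Euc d} {A B Y Z : Set (Euc d)}
    (hA : MeasurableSet A) (hB : MeasurableSet B) (hY : Cap e p Y) (hZ : Cap e p Z)
    (hAY : Equi p A Y) (hBZ : Equi p B Z) : volume (Y ∆ Z) ≤ volume (A ∆ B) := by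
  rw [volume_symmDiff_eq_add hY.meas hZ.meas, volume_symmDiff_eq_add hA hB]
  exact add_le_add (volume_sdiff_le hA hB hY hZ hAY hBZ) (volume_sdiff_le hB hA hZ hY hBZ hAY)

theorem cap_unique {d : ℕ} [NeZero d] {e p : Euc d} {Y Z : Set (Euc d)} (hY : Cap e p Y)
    (hZ : Cap e p Z) (h : Equi p Y Z) : volume (Y ∆ Z) = 0 := by
  have := volume_symmDiff_le hZ.meas hZ.meas hY hZ h.symm (Equi.refl p Z)
  simpa using this

/-- Two open balls about the origin with the same finite volume agree up to a null set. -/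
theorem symmDiff_ball_eq_zero {d : ℕ} {R R' : ℝ}
    (h : volume (ball (0 : Euc d) R) = volume (ball (0 : Euc d) R')) :
    volume (ball (0 : Euc d) R ∆ ball (0 : Euc d) R') = 0 := by
  wlog hR : R ≤ R' generalizing R R'
  · rw [symmDiff_comm]; exact this h.symm (le_of_not_ge hR)
  have hs := ball_subset_ball (x := (0 : Euc d)) hR
  rw [volume_symmDiff_eq_add measurableSet_ball measurableSet_ball, sdiff_eq_empty.2 hs,
    measure_empty, zero_add, measure_sdiff hs measurableSet_ball.nullMeasurableSet
    measure_ball_lt_top.ne, h, tsub_self]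

/-! ### The functional `J` -/

/-- The density of `J`. -/
def wt {d : ℕ} (x : Euc d) : ℝ≥0∞ := ENNReal.ofReal (‖x‖ ^ 2 / (1 + ‖x‖ ^ 2))

theorem measurable_wt {d : ℕ} : Measurable (wt (d := d)) := by
  unfold wt; fun_prop

theorem wt_le_one {d : ℕ} (x : Euc d) : wt x ≤ 1 := by
  rw [wt, ← ENNReal.ofReal_one]
  refine ENNReal.ofReal_le_ofReal ?_
  rw [div_le_one (by positivity)]
  linarith

theorem wt_le {d : ℕ} {x y : Euc d} (h : ‖x‖ ^ 2 ≤ ‖y‖ ^ 2) : wt x ≤ wt y := by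
  refine ENNReal.ofReal_le_ofReal ?_
  rw [div_le_div_iff₀ (by positivity) (by positivity)]
  nlinarith

theorem wt_lt {d : ℕ} {x y : Euc d} (h : ‖x‖ ^ 2 < ‖y‖ ^ 2) : wt x < wt y := by
  have hy : 0 < ‖y‖ ^ 2 := lt_of_le_of_lt (sq_nonneg _) h
  refine (ENNReal.ofReal_lt_ofReal_iff (by positivity)).2 ?_
  rw [div_lt_div_iff₀ (by positivity) (by positivity)]
  nlinarith

theorem lintegral_wt_le {d : ℕ} (A : Set (Euc d)) : ∫⁻ x in A, wt x ≤ volume A := by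
  calc ∫⁻ x in A, wt x ≤ ∫⁻ _ in A, 1 := lintegral_mono fun x => wt_le_one x
    _ = volume A := by simp

theorem asymmetryJ_eq {d : ℕ} (A : Set (Euc d)) :
    asymmetryJ A = (∫⁻ x in A, wt x).toReal := by
  rw [asymmetryJ, integral_eq_lintegral_of_nonneg_ae (ae_of_all _ fun x => by positivity)]
  · rfl
  · exact (by fun_prop : Measurable fun x : Euc d => ‖x‖ ^ 2 / (1 + ‖x‖ ^ 2)).aestronglyMeasurable

theorem lintegral_wt_ne_top {d : ℕ} {A : Set (Euc d)} (h : volume A < ⊤) :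
    ∫⁻ x in A, wt x ≠ ⊤ := ((lintegral_wt_le A).trans_lt h).ne

theorem asymmetryJ_sub_le {d : ℕ} {A B : Set (Euc d)} (hA : volume A < ⊤) (hB : volume B < ⊤) :
    asymmetryJ A - asymmetryJ B ≤ (volume (A ∆ B)).toReal := by
  have hs : volume (A ∆ B) < ⊤ :=
    (measure_mono symmDiff_subset_union).trans_lt (measure_union_lt_top hA hB)
  rw [asymmetryJ_eq, asymmetryJ_eq, sub_le_iff_le_add',
    ← ENNReal.toReal_add (lintegral_wt_ne_top hB) hs.ne]
  refine ENNReal.toReal_mono (ENNReal.add_ne_top.2 ⟨lintegral_wt_ne_top hB, hs.ne⟩) ?_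
  calc ∫⁻ x in A, wt x ≤ ∫⁻ x in B ∪ A ∆ B, wt x := lintegral_mono_set fun x hx => by
        by_cases h : x ∈ B
        · exact Or.inl h
        · exact Or.inr (Or.inl ⟨hx, h⟩)
    _ ≤ (∫⁻ x in B, wt x) + ∫⁻ x in A ∆ B, wt x := lintegral_union_le _ _ _
    _ ≤ _ := by gcongr; exact lintegral_wt_le _

theorem abs_asymmetryJ_sub_le {d : ℕ} {A B : Set (Euc d)} (hA : volume A < ⊤)
    (hB : volume B < ⊤) : |asymmetryJ A - asymmetryJ B| ≤ (volume (A ∆ B)).toReal := by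
  rw [abs_sub_le_iff]
  exact ⟨asymmetryJ_sub_le hA hB, by rw [symmDiff_comm]; exact asymmetryJ_sub_le hB hA⟩

theorem norm_sq_slice {d : ℕ} (e : Euc d) (r t : ℝ) (u : Sph d) :
    ‖r • e + t • (u : Euc d)‖ ^ 2 = ‖r • e‖ ^ 2 + 2 * (t * (r * ⟪(u : Euc d), e⟫)) + t ^ 2 := by
  rw [norm_add_sq_real, real_inner_smul_left, real_inner_smul_right, norm_smul t]
  have hu : ‖(u : Euc d)‖ = 1 := by simp
  rw [hu, mul_one, Real.norm_eq_abs, sq_abs, real_inner_comm]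
  ring

theorem Cap.inner_lt {d : ℕ} {e p : Euc d} {Y : Set (Euc d)} (h : Cap e p Y) {t : ℝ} (ht : 0 < t)
    {u v : Sph d} (hu : u ∈ sl p Y t) (hv : v ∉ sl p Y t) :
    ⟪(u : Euc d), e⟫ < ⟪(v : Euc d), e⟫ := by
  by_contra! hle
  exact hv (h.mem_sl ht hle hu)

theorem lintegral_wt_le_of_cap {d : ℕ} [NeZero d] {e : Euc d} {r : ℝ} (hr : 0 ≤ r)
    {A C : Set (Euc d)} (hA : MeasurableSet A) (hC : Cap e (r • e) C) (h : Equi (r • e) A C) :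
    ∀ᵐ t ∂(rad d), ∫⁻ u in sl (r • e) C t.1, wt (r • e + t.1 • (u : Euc d)) ∂(sig d)
      ≤ ∫⁻ u in sl (r • e) A t.1, wt (r • e + t.1 • (u : Euc d)) ∂(sig d) := by
  filter_upwards [h] with t ht
  refine bathtub_le (measurableSet_sl _ hA _) (measurableSet_sl _ hC.meas _) ht
    (measure_ne_top _ _) fun u hu v hv => wt_le ?_
  rw [norm_sq_slice, norm_sq_slice]
  have := hC.inner_lt t.2 hu.1 hv.2
  have ht0 : (0 : ℝ) < t.1 := t.2
  gcongr

theorem J_le_of_cap {d : ℕ} [NeZero d] {e : Euc d} {r : ℝ} (hr : 0 ≤ r) {A C : Set (Euc d)}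
    (hA : MeasurableSet A) (hfin : volume A < ⊤) (hC : Cap e (r • e) C)
    (h : Equi (r • e) A C) : asymmetryJ C ≤ asymmetryJ A := by
  rw [asymmetryJ_eq, asymmetryJ_eq]
  refine ENNReal.toReal_mono (lintegral_wt_ne_top hfin) ?_
  rw [setLIntegral_eq_slices (r • e) hA measurable_wt,
    setLIntegral_eq_slices (r • e) hC.meas measurable_wt]
  exact lintegral_mono_ae (lintegral_wt_le_of_cap hr hA hC h)

theorem J_strict_of_cap {d : ℕ} [NeZero d] {e : Euc d} {r : ℝ} (hr : 0 < r) {A C : Set (Euc d)}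
    (hA : MeasurableSet A) (hfin : volume A < ⊤) (hC : Cap e (r • e) C)
    (h : Equi (r • e) A C) (hJ : asymmetryJ C = asymmetryJ A) : volume (C ∆ A) = 0 := by
  have hvol : volume A = volume C := volume_eq_of_equi hA hC.meas h
  rw [asymmetryJ_eq, asymmetryJ_eq, ENNReal.toReal_eq_toReal_iff'
    (lintegral_wt_ne_top (hvol ▸ hfin)) (lintegral_wt_ne_top hfin)] at hJ
  have hCt := lintegral_wt_ne_top (hvol ▸ hfin)
  rw [setLIntegral_eq_slices (r • e) hA measurable_wt,
    setLIntegral_eq_slices (r • e) hC.meas measurable_wt] at hJ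
  rw [setLIntegral_eq_slices (r • e) hC.meas measurable_wt] at hCt
  have hmeas : Measurable fun t : Ioi (0 : ℝ) =>
      ∫⁻ u in sl (r • e) A t.1, wt (r • e + t.1 • (u : Euc d)) ∂(sig d) := by
    have hf : Measurable fun q : Ioi (0 : ℝ) × Sph d =>
        A.indicator wt (r • e + q.1.1 • (q.2 : Euc d)) :=
      (measurable_wt.indicator hA).comp (by fun_prop)
    convert hf.lintegral_prod_right' (ν := sig d) using 2 with t
    rw [← lintegral_indicator (measurableSet_sl (r • e) hA t.1)]
    rfl
  have hae := ae_eq_of_ae_le_of_lintegral_le (lintegral_wt_le_of_cap hr.le hA hC h) hCt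
    hmeas.aemeasurable hJ.ge
  have h0 : volume (C \ A) = 0 := by
    rw [volume_eq_slices (r • e) (hC.meas.diff hA), ← lintegral_zero (μ := rad d)]
    refine lintegral_congr_ae ?_
    filter_upwards [hae, h] with t h1 h2
    refine bathtub_eq (w := fun u : Sph d => wt (r • e + t.1 • (u : Euc d)))
      (measurableSet_sl _ hA _) (measurableSet_sl _ hC.meas _)
      (measurable_wt.comp (by fun_prop)) h2 (measure_ne_top _ _) (fun u hu v hv => wt_lt ?_)
      (ne_top_of_le_ne_top (measure_ne_top (sig d) univ) ?_) h1.ge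
    · rw [norm_sq_slice, norm_sq_slice]
      have := hC.inner_lt t.2 hu.1 hv.2
      have ht0 : (0 : ℝ) < t.1 := t.2
      gcongr
    · calc _ ≤ ∫⁻ _ in sl (r • e) A t.1, 1 ∂(sig d) := lintegral_mono fun u => wt_le_one _
        _ ≤ _ := by rw [setLIntegral_one]; exact measure_mono (subset_univ _)
  rw [volume_symmDiff_eq_add hC.meas hA, h0,
    ← measure_sdiff_comm_of_eq hA hC.meas hvol hfin.ne, h0, add_zero]

theorem J_star {d : ℕ} {A : Set (Euc d)} {R : ℝ} (hA : MeasurableSet A) (hfin : volume A < ⊤)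
    (hvol : volume (ball (0 : Euc d) R) = volume A)
    (hJ : asymmetryJ A ≤ asymmetryJ (ball (0 : Euc d) R)) :
    volume (A ∆ ball (0 : Euc d) R) = 0 := by
  rw [asymmetryJ_eq, asymmetryJ_eq, ENNReal.toReal_le_toReal (lintegral_wt_ne_top hfin)
    (lintegral_wt_ne_top (hvol ▸ hfin))] at hJ
  have h0 := bathtub_eq hA measurableSet_ball measurable_wt hvol.symm hfin.ne
    (fun x hx y hy => wt_lt ?_) (lintegral_wt_ne_top hfin) hJ
  · rw [volume_symmDiff_eq_add hA measurableSet_ball, h0,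
      ← measure_sdiff_comm_of_eq hA measurableSet_ball hvol.symm hfin.ne, h0, add_zero]
  · have h1 := mem_ball_zero_iff.1 hx.1
    have h2 : ¬ ‖y‖ < R := fun h => hy.2 (mem_ball_zero_iff.2 h)
    have := norm_nonneg x
    gcongr
    linarith

/-! ### Sets fixed by all cap symmetrizations -/

/-- If `D` and `E` have positive measure, then so does `{z ∈ D | v - z ∈ E}` for some `v`. -/
theorem exists_reflect {d : ℕ} {D E : Set (Euc d)} (hD : MeasurableSet D) (hE : MeasurableSet E)
    (hD0 : volume D ≠ 0) (hE0 : volume E ≠ 0) :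
    ∃ v : Euc d, volume {z | z ∈ D ∧ v - z ∈ E} ≠ 0 := by
  by_contra! h
  have hS : MeasurableSet {q : Euc d × Euc d | q.2 ∈ D ∧ q.1 - q.2 ∈ E} :=
    (measurable_snd hD).inter ((by fun_prop : Measurable fun q : Euc d × Euc d => q.1 - q.2) hE)
  have h0 : (volume.prod volume) {q : Euc d × Euc d | q.2 ∈ D ∧ q.1 - q.2 ∈ E} = 0 := by
    rw [Measure.measure_prod_null hS]
    exact ae_of_all _ fun v => h v
  rw [Measure.prod_apply_symm hS] at h0
  have h1 : volume E * volume D ≤ 0 := by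
    rw [← h0, ← setLIntegral_const, ← lintegral_indicator hD]
    refine lintegral_mono fun z => ?_
    by_cases hz : z ∈ D
    · rw [indicator_of_mem hz]
      rw [← (measurePreserving_sub_right (volume : Measure (Euc d)) z).measure_preimage
        hE.nullMeasurableSet]
      exact measure_mono fun v hv => ⟨hz, hv⟩
    · simp [hz]
  rcases mul_eq_zero.1 (nonpos_iff_eq_zero.1 h1) with h | h
  · exact hE0 h
  · exact hD0 h

/-- A set `A` agreeing up to null sets with a cap about every point `p ≠ 0` is a ball: otherwise
some point reflection `z ↦ 2 p - z` maps a positive amount of `ball 0 R \ A` into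
`A \ ball 0 R`, that is, points outside the cap about `p` to points inside it that are less far
in the direction `-p`. -/
theorem ball_of_fixed {d : ℕ} {A : Set (Euc d)} {R : ℝ} (hA : MeasurableSet A)
    (hfin : volume A < ⊤) (hvol : volume (ball (0 : Euc d) R) = volume A)
    (h : ∀ e : Euc d, ‖e‖ = 1 → ∀ r : ℝ, 0 ≤ r → ∃ C, Cap e (r • e) C ∧ volume (C ∆ A) = 0) :
    volume (A ∆ ball (0 : Euc d) R) = 0 := by
  have hm := measure_sdiff_comm_of_eq hA measurableSet_ball hvol.symm hfin.ne
  rw [volume_symmDiff_eq_add hA measurableSet_ball, hm]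
  by_contra hne
  have hne : volume (A \ ball 0 R) ≠ 0 := fun h => hne (by simp [h])
  obtain ⟨v, hv⟩ := exists_reflect (measurableSet_ball.diff hA) (hA.diff measurableSet_ball)
    (hm ▸ hne) hne
  have hv0 : v ≠ 0 := by
    rintro rfl
    refine hv (measure_mono_null (t := ∅) ?_ (by simp))
    rintro z ⟨⟨hz, -⟩, -, hz'⟩
    exact hz' (by simpa using hz)
  have hvn : 0 < ‖v‖ := norm_pos_iff.2 hv0
  obtain ⟨C, hC, hCA⟩ := h (‖v‖⁻¹ • v) (by simp [norm_smul, hvn.ne']) (‖v‖ / 2) (by positivity)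
  have hp : (‖v‖ / 2) • ‖v‖⁻¹ • v = (2⁻¹ : ℝ) • v := by
    rw [smul_smul]; congr 1; field_simp
  rw [hp] at hC
  have hae : ∀ᵐ z, z ∉ C ∆ A := measure_eq_zero_iff_ae_notMem.1 hCA
  have hae' : ∀ᵐ z, v - z ∉ C ∆ A :=
    (Measure.measurePreserving_sub_left (volume : Measure (Euc d)) v).quasiMeasurePreserving.ae hae
  obtain ⟨z, ⟨⟨hzB, hzA⟩, hyA, hyB⟩, h1, h2⟩ :
      ∃ z, z ∈ {z | z ∈ ball 0 R \ A ∧ v - z ∈ A \ ball 0 R} ∧ z ∉ C ∆ A ∧ v - z ∉ C ∆ A := by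
    by_contra! hcon
    refine hv (measure_eq_zero_iff_ae_notMem.2 ?_)
    filter_upwards [hae, hae'] with z h1 h2 h3 using h2 (hcon z h3 h1)
  rw [mem_symmDiff] at h1 h2
  have hzC : z ∉ C := by tauto
  have hyC : v - z ∈ C := by tauto
  rw [mem_ball_zero_iff] at hzB hyB
  have hlt : ‖z‖ < ‖v - z‖ := by linarith
  refine hzC (hC.mem z (v - z) ?_ ?_ ?_ hyC)
  · rintro rfl
    refine hlt.ne ?_
    congr 1
    module
  · rw [← norm_neg (z - _)]
    congr 1
    module
  · have h3 : v - z - (2⁻¹ : ℝ) • v = - (z - (2⁻¹ : ℝ) • v) := by module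
    have h4 : ‖v - z‖ ^ 2 = ‖v‖ ^ 2 - 2 * ⟪z, v⟫ + ‖z‖ ^ 2 := by
      rw [norm_sub_sq_real, real_inner_comm]
    have h5 : ‖z‖ ^ 2 < ‖v - z‖ ^ 2 := by gcongr
    have h6 : ⟪z - (2⁻¹ : ℝ) • v, ‖v‖⁻¹ • v⟫ ≤ 0 := by
      rw [real_inner_smul_right, inner_sub_left, real_inner_smul_left, real_inner_self_eq_norm_sq]
      refine mul_nonpos_of_nonneg_of_nonpos (by positivity) ?_
      linarith
    rw [h3, inner_neg_left]
    linarith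

/-! ### Continuous dependence on the parameter -/

/-- The isometry of `ℝ^d` with linear part `T` that maps `p` to `p'`. -/
def affIso {d : ℕ} (T : Euc d ≃ₗᵢ[ℝ] Euc d) (p p' : Euc d) (x : Euc d) : Euc d := p' + T (x - p)

theorem measurePreserving_affIso {d : ℕ} (T : Euc d ≃ₗᵢ[ℝ] Euc d) (p p' : Euc d) :
    MeasurePreserving (affIso T p p') volume volume :=
  (measurePreserving_add_left volume p').comp
    (T.measurePreserving.comp (measurePreserving_sub_right volume p))

theorem sl_affIso {d : ℕ} (T : Euc d ≃ₗᵢ[ℝ] Euc d) (p p' : Euc d) (A : Set (Euc d)) (t : ℝ) :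
    sl p (affIso T p p' ⁻¹' A) t = sphIso T ⁻¹' sl p' A t := by
  ext u
  simp [mem_sl, affIso, coe_sphIso]

theorem Equi.affIso {d : ℕ} (T : Euc d ≃ₗᵢ[ℝ] Euc d) {p p' : Euc d} {A B : Set (Euc d)}
    (hA : MeasurableSet A) (hB : MeasurableSet B) (h : Equi p' A B) :
    Equi p (affIso T p p' ⁻¹' A) (affIso T p p' ⁻¹' B) := by
  filter_upwards [h] with t ht
  rw [sl_affIso, sl_affIso, (measurePreserving_sphIso T).measure_preimage
    (measurableSet_sl _ hA _).nullMeasurableSet, (measurePreserving_sphIso T).measure_preimage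
    (measurableSet_sl _ hB _).nullMeasurableSet, ht]

theorem Cap.affIso {d : ℕ} (T : Euc d ≃ₗᵢ[ℝ] Euc d) {e p p' : Euc d} {C : Set (Euc d)}
    (h : Cap (T e) p' C) : Cap e p (affIso T p p' ⁻¹' C) := by
  refine ⟨(measurePreserving_affIso T p p').measurable h.meas, fun x y hx hxy hle hy => ?_⟩
  refine h.mem _ _ ?_ ?_ ?_ hy
  · simpa [CapSymm.affIso, sub_eq_zero] using hx
  · simp only [CapSymm.affIso, add_sub_cancel_left, LinearIsometryEquiv.norm_map, hxy]
  · simpa only [CapSymm.affIso, add_sub_cancel_left, LinearIsometryEquiv.inner_map_map] using hle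

/-- A rotation taking `e` to `e'`, depending continuously on `e'` away from `-e` and equal to the
identity for `e' = e`: the product of the reflections fixing `e` and `e + e'`. -/
def rot {d : ℕ} (e e' : Euc d) : Euc d ≃ₗᵢ[ℝ] Euc d :=
  (ℝ ∙ e).reflection.trans (ℝ ∙ (e + e')).reflection

theorem rot_apply_self {d : ℕ} {e e' : Euc d} (he : ‖e‖ = 1) (he' : ‖e'‖ = 1) :
    rot e e' e = e' := by
  have h1 : (ℝ ∙ e).reflection e = e :=
    Submodule.reflection_mem_subspace_eq_self (Submodule.mem_span_singleton_self e)
  simp only [rot, LinearIsometryEquiv.trans_apply, h1]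
  have h2 := Submodule.reflection_sub (v := e) (w := -e') (by rw [norm_neg, he, he'])
  rw [sub_neg_eq_add] at h2
  rw [Submodule.reflection_orthogonal_apply] at h2
  exact neg_injective h2

theorem rot_self {d : ℕ} (e x : Euc d) : rot e e x = x := by
  have : (ℝ ∙ (e + e)) = (ℝ ∙ e) := by
    rw [← two_smul ℝ e]
    exact Submodule.span_singleton_smul_eq (by norm_num) e
  simp [rot, this]

/-- Pairs `(e', r')` with `e'` different from `-e`, where `rot e e'` depends continuously on `e'`. -/
abbrev NonAnti {d : ℕ} (e : Euc d) : Type := {q : Euc d × ℝ // e + q.1 ≠ 0}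

theorem tendsto_affIso {d : ℕ} {e : Euc d} (he : ‖e‖ = 1) (r : ℝ) {A : Set (Euc d)}
    (hA : MeasurableSet A) (hfin : volume A < ⊤) {ε : ℝ≥0∞} (hε : 0 < ε) :
    ∃ δ : ℝ, 0 < δ ∧ ∀ (e' : Euc d) (r' : ℝ), dist e e' < δ → dist r r' < δ →
      volume ((affIso (rot e e') (r • e) (r' • e') ⁻¹' A) ∆ A) < ε := by
  have hcont : Continuous fun z : NonAnti e × Euc d =>
      affIso (rot e z.1.1.1) (r • e) (z.1.1.2 • z.1.1.1) z.2 := by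
    simp only [affIso, rot, LinearIsometryEquiv.trans_apply]
    simp only [Submodule.reflection_singleton_apply (𝕜 := ℝ) (e + _)]
    have h1 : Continuous fun z : NonAnti e × Euc d => (ℝ ∙ e).reflection (z.2 - r • e) := by fun_prop
    have h2 : Continuous fun z : NonAnti e × Euc d => e + z.1.1.1 := by fun_prop
    have h3 : Continuous fun z : NonAnti e × Euc d =>
        ⟪e + z.1.1.1, (ℝ ∙ e).reflection (z.2 - r • e)⟫ / ‖e + z.1.1.1‖ ^ 2 :=
      (h2.inner h1).div (by fun_prop) fun z => by simpa using z.1.2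
    have h4 : Continuous fun z : NonAnti e × Euc d => z.1.1.2 • z.1.1.1 := by fun_prop
    exact h4.add (((h3.smul h2).const_smul 2).sub h1)
  let F : C(NonAnti e, C(Euc d, Euc d)) := ContinuousMap.curry ⟨_, hcont⟩
  have he0 : e ≠ 0 := norm_ne_zero_iff.1 (by simp [he])
  let q₀ : NonAnti e := ⟨(e, r), by simpa [← two_smul ℝ e] using he0⟩
  have h0 : ∀ B, F q₀ ⁻¹' B = B := by
    intro B
    ext x
    change affIso (rot e e) (r • e) (r • e) x ∈ B ↔ x ∈ B
    simp [affIso, rot_self]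
  have hlim := tendsto_measure_symmDiff_preimage_nhds_zero (μ := volume) (ν := volume)
    (F.continuous.tendsto q₀)
    (.of_forall fun q => measurePreserving_affIso (rot e q.1.1) (r • e) (q.1.2 • q.1.1))
    (measurePreserving_affIso (rot e q₀.1.1) (r • e) (q₀.1.2 • q₀.1.1))
    hA.nullMeasurableSet hfin.ne
  simp only [h0] at hlim
  obtain ⟨δ, hδ, hδ'⟩ := Metric.eventually_nhds_iff.1 (hlim.eventually (gt_mem_nhds hε))
  refine ⟨min δ 1, by positivity, fun e' r' h1 h2 => ?_⟩
  have hne : e + e' ≠ 0 := by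
    intro h
    have h3 : e - e' = (2 : ℝ) • e := by
      rw [eq_neg_of_add_eq_zero_right h]; module
    have h4 : dist e e' = 2 := by rw [dist_eq_norm, h3, norm_smul, he]; norm_num
    have := h1.trans_le (min_le_right _ _)
    linarith
  refine hδ' (y := ⟨(e', r'), hne⟩) ?_
  rw [dist_comm, Subtype.dist_eq]
  exact max_lt (h1.trans_le (min_le_left _ _)) (h2.trans_le (min_le_left _ _))

/-- The cap about `r' e'` of a set `A` is close to the one about `r e` for `(e', r')` close to
`(e, r)`: an isometry close to the identity takes one kind of caps to the other, and moves
`A` and its cap little. -/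
theorem cap_continuous {d : ℕ} [NeZero d] {e : Euc d} (he : ‖e‖ = 1) {r : ℝ} {A C : Set (Euc d)}
    (hA : MeasurableSet A) (hfin : volume A < ⊤) (hC : Cap e (r • e) C) (h : Equi (r • e) A C)
    {ε : ℝ≥0∞} (hε : 0 < ε) :
    ∃ δ : ℝ, 0 < δ ∧ ∀ (e' : Euc d) (r' : ℝ) (C' : Set (Euc d)), ‖e'‖ = 1 →
      dist e e' < δ → dist r r' < δ → Cap e' (r' • e') C' → Equi (r' • e') A C' →
      volume (C ∆ C') < ε := by
  have hε2 : 0 < ε / 2 := ENNReal.half_pos hε.ne'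
  obtain ⟨δ₁, h1, h1'⟩ := tendsto_affIso he r hA hfin hε2
  obtain ⟨δ₂, h2, h2'⟩ := tendsto_affIso he r hC.meas
    (volume_eq_of_equi hA hC.meas h ▸ hfin) hε2
  refine ⟨min δ₁ δ₂, lt_min h1 h2, fun e' r' C' he' hd1 hd2 hC' hE' => ?_⟩
  have hT := rot_apply_self he he'
  have hmp := measurePreserving_affIso (rot e e') (r • e) (r' • e')
  have hcap : Cap e (r • e) (affIso (rot e e') (r • e) (r' • e') ⁻¹' C') :=
    Cap.affIso _ (hT.symm ▸ hC')
  calc volume (C ∆ C')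
      = volume ((affIso (rot e e') (r • e) (r' • e') ⁻¹' C) ∆
          (affIso (rot e e') (r • e) (r' • e') ⁻¹' C')) := by
        rw [← preimage_symmDiff, hmp.measure_preimage
          (hC.meas.symmDiff hC'.meas).nullMeasurableSet]
    _ ≤ volume ((affIso (rot e e') (r • e) (r' • e') ⁻¹' C) ∆ C) +
          volume (C ∆ (affIso (rot e e') (r • e) (r' • e') ⁻¹' C')) :=
        measure_symmDiff_le _ _ _
    _ ≤ volume ((affIso (rot e e') (r • e) (r' • e') ⁻¹' C) ∆ C) +
          volume ((affIso (rot e e') (r • e) (r' • e') ⁻¹' A) ∆ A) := by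
        rw [symmDiff_comm _ A]
        refine add_le_add_right ?_ _
        exact volume_symmDiff_le hA (hmp.measurable hA) hC hcap h (hE'.affIso _ hA hC'.meas)
    _ < ε / 2 + ε / 2 := ENNReal.add_lt_add
        (h2' e' r' (hd1.trans_le (min_le_right _ _)) (hd2.trans_le (min_le_right _ _)))
        (h1' e' r' (hd1.trans_le (min_le_left _ _)) (hd2.trans_le (min_le_left _ _)))
    _ = ε := ENNReal.add_halves ε

/-! ### Nonlocal perimeters -/

/-- The measure of the set of pairs `(x, y)` with `x ∈ C`, `y ∉ C` at distance less than `δ`. -/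
def nlp {d : ℕ} (δ : ℝ) (C : Set (Euc d)) : ℝ≥0∞ :=
  (volume.prod volume) {q : Euc d × Euc d | q.1 ∈ C ∧ q.2 ∉ C ∧ dist q.1 q.2 < δ}

theorem measurableSet_near {d : ℕ} (δ : ℝ) :
    MeasurableSet {q : Euc d × Euc d | dist q.1 q.2 < δ} :=
  (isOpen_lt continuous_dist continuous_const).measurableSet

theorem measurableSet_nlp {d : ℕ} (δ : ℝ) {C : Set (Euc d)} (hC : MeasurableSet C) :
    MeasurableSet {q : Euc d × Euc d | q.1 ∈ C ∧ q.2 ∉ C ∧ dist q.1 q.2 < δ} :=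
  (measurable_fst hC).inter ((measurable_snd hC.compl).inter (measurableSet_near δ))

theorem volume_ball_eq {d : ℕ} (x : Euc d) (δ : ℝ) : volume (ball x δ) = volume (ball (0 : Euc d) δ) :=
  Measure.addHaar_ball_center _ _ _

theorem prod_near_fst {d : ℕ} (δ : ℝ) {A : Set (Euc d)} (hA : MeasurableSet A) :
    (volume.prod volume) {q : Euc d × Euc d | q.1 ∈ A ∧ dist q.1 q.2 < δ}
      = volume (ball (0 : Euc d) δ) * volume A := by
  have hS : MeasurableSet {q : Euc d × Euc d | q.1 ∈ A ∧ dist q.1 q.2 < δ} :=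
    (measurable_fst hA).inter (measurableSet_near δ)
  rw [Measure.prod_apply hS, ← setLIntegral_const, ← lintegral_indicator hA]
  refine lintegral_congr fun x => ?_
  by_cases hx : x ∈ A
  · rw [indicator_of_mem hx, ← volume_ball_eq x]
    congr 1; ext y; simp [hx, dist_comm]
  · simp [hx]

theorem prod_near_snd {d : ℕ} (δ : ℝ) {A : Set (Euc d)} (hA : MeasurableSet A) :
    (volume.prod volume) {q : Euc d × Euc d | q.2 ∈ A ∧ dist q.1 q.2 < δ}
      = volume (ball (0 : Euc d) δ) * volume A := by
  have hS : MeasurableSet {q : Euc d × Euc d | q.2 ∈ A ∧ dist q.1 q.2 < δ} :=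
    (measurable_snd hA).inter (measurableSet_near δ)
  rw [Measure.prod_apply_symm hS, ← setLIntegral_const, ← lintegral_indicator hA]
  refine lintegral_congr fun x => ?_
  by_cases hx : x ∈ A
  · rw [indicator_of_mem hx, ← volume_ball_eq x]
    congr 1; ext y; simp [hx]
  · simp [hx]

theorem nlp_le_add {d : ℕ} (δ : ℝ) {C C' : Set (Euc d)} (hC : MeasurableSet C)
    (hC' : MeasurableSet C') :
    nlp δ C ≤ nlp δ C' + 2 * (volume (ball (0 : Euc d) δ) * volume (C' ∆ C)) := by
  have hs := hC'.symmDiff hC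
  calc nlp δ C ≤ (volume.prod volume)
        ({q : Euc d × Euc d | q.1 ∈ C' ∧ q.2 ∉ C' ∧ dist q.1 q.2 < δ} ∪
          ({q : Euc d × Euc d | q.1 ∈ C' ∆ C ∧ dist q.1 q.2 < δ} ∪
            {q : Euc d × Euc d | q.2 ∈ C' ∆ C ∧ dist q.1 q.2 < δ})) := by
        refine measure_mono fun q hq => ?_
        simp only [mem_union, mem_ofPred_eq, mem_symmDiff] at hq ⊢
        tauto
    _ ≤ nlp δ C' + (volume (ball (0 : Euc d) δ) * volume (C' ∆ C) +
          volume (ball (0 : Euc d) δ) * volume (C' ∆ C)) := by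
        refine (measure_union_le _ _).trans (add_le_add_right ?_ _)
        refine (measure_union_le _ _).trans ?_
        rw [prod_near_fst δ hs, prod_near_snd δ hs]
    _ = _ := by rw [two_mul]

theorem tendsto_translate {d : ℕ} {A : Set (Euc d)} (hA : MeasurableSet A) (hfin : volume A < ⊤) :
    Tendsto (fun v : Euc d => volume (((fun x => x + v) ⁻¹' A) ∆ A)) (𝓝 0) (𝓝 0) := by
  have hc : Continuous fun z : Euc d × Euc d => z.2 + z.1 := by fun_prop
  let F : C(Euc d, C(Euc d, Euc d)) := ContinuousMap.curry ⟨_, hc⟩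
  have h := tendsto_measure_symmDiff_preimage_nhds_zero (μ := volume) (ν := volume)
    (F.continuous.tendsto 0) (.of_forall fun v => measurePreserving_add_right volume v)
    (measurePreserving_add_right volume 0) hA.nullMeasurableSet hfin.ne
  have h0 : F 0 ⁻¹' A = A := by
    ext x; change x + 0 ∈ A ↔ x ∈ A; rw [add_zero]
  simp only [h0] at h
  exact h

/-- `nlp δ X` is the integral over `ball 0 δ` of `v ↦ volume (X \ (X - v))`, which is small by
continuity of translations in `L¹`. -/
theorem nlp_small {d : ℕ} {X : Set (Euc d)} (hX : MeasurableSet X) (hfin : volume X < ⊤)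
    {ε : ℝ≥0∞} (hε : 0 < ε) :
    ∃ δ : ℝ, 0 < δ ∧ ∀ δ' ≤ δ, nlp δ' X ≤ ε * volume (ball (0 : Euc d) δ') := by
  obtain ⟨δ, hδ, h⟩ := Metric.eventually_nhds_iff.1
    ((tendsto_translate hX hfin).eventually (gt_mem_nhds hε))
  refine ⟨δ, hδ, fun δ' hδ' => ?_⟩
  have hmp : MeasurePreserving (fun q : Euc d × Euc d => (q.2, q.2 + q.1))
      (volume.prod volume) (volume.prod volume) :=
    (measurePreserving_prod_add volume volume).comp Measure.measurePreserving_swap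
  have hm := measurableSet_nlp δ' hX
  rw [nlp, ← hmp.measure_preimage hm.nullMeasurableSet, Measure.prod_apply (hmp.measurable hm),
    ← setLIntegral_const, ← lintegral_indicator measurableSet_ball]
  refine lintegral_mono fun v => ?_
  by_cases hv : v ∈ ball (0 : Euc d) δ'
  · rw [indicator_of_mem hv]
    refine le_trans (measure_mono ?_) (h (y := v) ((mem_ball.1 hv).trans_le hδ')).le
    intro x hx
    exact Or.inr ⟨hx.1, hx.2.1⟩
  · rw [indicator_of_notMem hv, nonpos_iff_eq_zero]
    refine measure_mono_null (t := ∅) (fun x hx => ?_) (by simp)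
    have := hx.2.2
    rw [dist_eq_norm] at this
    exact hv (mem_ball_zero_iff.2 (by simpa using this))

/-! ### A compact class of sets -/

/-- The class of sets that are no more spread out than `X`, neither at infinity nor locally. -/
structure InK {d : ℕ} (X C : Set (Euc d)) : Prop where
  meas : MeasurableSet C
  tail : ∀ R : ℝ, volume (C \ ball 0 R) ≤ volume (X \ ball 0 R)
  osc : ∀ δ : ℝ, nlp δ C ≤ nlp δ X

theorem InK.refl {d : ℕ} {X : Set (Euc d)} (hX : MeasurableSet X) : InK X X :=
  ⟨hX, fun _ => le_rfl, fun _ => le_rfl⟩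

theorem InK.volume_le {d : ℕ} {X C : Set (Euc d)} (h : InK X C) : volume C ≤ volume X := by
  simpa using h.tail 0

theorem volume_ball_ne_top {d : ℕ} (δ : ℝ) : volume (ball (0 : Euc d) δ) ≠ ⊤ :=
  measure_ball_lt_top.ne

theorem InK.of_tendsto {d : ℕ} {X C : Set (Euc d)} {F : ℕ → Set (Euc d)} (hF : ∀ n, InK X (F n))
    (hC : MeasurableSet C) (h : Tendsto (fun n => volume (F n ∆ C)) atTop (𝓝 0)) : InK X C := by
  refine ⟨hC, fun R => ?_, fun δ => ?_⟩
  · have h1 : ∀ n, volume (C \ ball 0 R) ≤ volume (X \ ball 0 R) + volume (F n ∆ C) := fun n =>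
      calc volume (C \ ball 0 R) ≤ volume ((F n \ ball 0 R) ∪ (F n ∆ C)) := by
            refine measure_mono fun x hx => ?_
            simp only [mem_union, Set.mem_sdiff, mem_symmDiff] at hx ⊢
            tauto
        _ ≤ _ := (measure_union_le _ _).trans (add_le_add_left ((hF n).tail R) _)
    have h2 := h.const_add (volume (X \ ball 0 R))
    rw [add_zero] at h2
    exact ge_of_tendsto' h2 h1
  · have h1 : ∀ n, nlp δ C
        ≤ nlp δ X + 2 * (volume (ball (0 : Euc d) δ) * volume (F n ∆ C)) := fun n =>
      (nlp_le_add δ hC (hF n).meas).trans (add_le_add_left ((hF n).osc δ) _)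
    have h2 := (ENNReal.Tendsto.const_mul (a := 2) (ENNReal.Tendsto.const_mul h
      (Or.inr (volume_ball_ne_top (d := d) δ))) (Or.inr ENNReal.ofNat_ne_top)).const_add
      (nlp δ X)
    rw [mul_zero, mul_zero, add_zero] at h2
    exact ge_of_tendsto' h2 h1

/-- Comparison of `C` and `C'` through their densities at scale `δ`. -/
theorem volume_mul_le_of_density {d : ℕ} (δ : ℝ) {C C' : Set (Euc d)} (hC : MeasurableSet C)
    (hC' : MeasurableSet C') (R : ℝ) :
    volume (ball (0 : Euc d) δ) * volume ((C \ C') ∩ ball 0 R) ≤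
      nlp δ C + nlp δ C' +
        ∫⁻ x in ball 0 R, (volume (C ∩ ball x δ) - volume (C' ∩ ball x δ)) := by
  have hD : MeasurableSet ((C \ C') ∩ ball (0 : Euc d) R) := (hC.diff hC').inter measurableSet_ball
  have hm1 := measurableSet_nlp δ hC
  have hm2 := measurableSet_nlp δ hC'
  have e1 : nlp δ C = ∫⁻ x, volume {y | x ∈ C ∧ y ∉ C ∧ dist x y < δ} :=
    Measure.prod_apply hm1
  have e2 : nlp δ C' = ∫⁻ x, volume {y | y ∈ C' ∧ x ∉ C' ∧ dist y x < δ} :=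
    Measure.prod_apply_symm hm2
  have m1 : Measurable fun x => volume {y | x ∈ C ∧ y ∉ C ∧ dist x y < δ} :=
    measurable_measure_prodMk_left hm1
  have m2 : Measurable fun x => volume {y | y ∈ C' ∧ x ∉ C' ∧ dist y x < δ} :=
    measurable_measure_prodMk_right hm2
  have m12 : Measurable fun x => volume {y | x ∈ C ∧ y ∉ C ∧ dist x y < δ} +
      volume {y | y ∈ C' ∧ x ∉ C' ∧ dist y x < δ} := m1.add m2
  rw [e1, e2, ← lintegral_add_left m1, ← lintegral_indicator measurableSet_ball,
    ← lintegral_add_left m12, ← setLIntegral_const, ← lintegral_indicator hD]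
  refine lintegral_mono fun x => ?_
  by_cases hx : x ∈ (C \ C') ∩ ball (0 : Euc d) R
  · rw [indicator_of_mem hx, indicator_of_mem hx.2, ← volume_ball_eq x]
    have h1 : {y | x ∈ C ∧ y ∉ C ∧ dist x y < δ} = ball x δ \ C := by
      ext y; simp [hx.1.1, dist_comm, and_comm]
    have h2 : {y | y ∈ C' ∧ x ∉ C' ∧ dist y x < δ} = C' ∩ ball x δ := by
      ext y; simp [hx.1.2]
    rw [h1, h2, ← measure_inter_add_sdiff (ball x δ) hC, inter_comm,
      add_comm (volume _), add_assoc]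
    exact add_le_add_right le_add_tsub _
  · rw [indicator_of_notMem hx]
    exact zero_le

theorem tendsto_volume_tail {d : ℕ} {X : Set (Euc d)} (hX : MeasurableSet X)
    (hfin : volume X < ⊤) : Tendsto (fun n : ℕ => volume (X \ ball 0 (n : ℝ))) atTop (𝓝 0) := by
  have h := tendsto_measure_iInter_atTop (μ := volume) (s := fun n : ℕ => X \ ball (0 : Euc d) n)
    (fun n => (hX.diff measurableSet_ball).nullMeasurableSet)
    (fun m n hmn => sdiff_subset_sdiff_right (ball_subset_ball (by exact_mod_cast hmn)))
    ⟨0, ((measure_mono sdiff_subset).trans_lt hfin).ne⟩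
  have h0 : ⋂ n : ℕ, X \ ball (0 : Euc d) n = ∅ := by
    refine eq_empty_of_forall_notMem fun x hx => ?_
    obtain ⟨n, hn⟩ := exists_nat_gt ‖x‖
    exact (mem_iInter.1 hx n).2 (mem_ball_zero_iff.2 hn)
  rwa [h0, measure_empty] at h

/-- Convergence of the densities at scale `δ` at the points of a dense sequence implies
convergence everywhere, by equicontinuity. -/
theorem density_tendsto {d : ℕ} {F : ℕ → Set (Euc d)} {δ : ℝ}
    (h : ∀ i : ℕ, ∃ a, Tendsto (fun n => volume (F n ∩ ball (TopologicalSpace.denseSeq (Euc d) i) δ))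
      atTop (𝓝 a)) (x : Euc d) :
    ∃ a, a ≠ ⊤ ∧ Tendsto (fun n => volume (F n ∩ ball x δ)) atTop (𝓝 a) := by
  have hlt : ∀ n x, volume (F n ∩ ball x δ) ≠ ⊤ := fun n x =>
    ((measure_mono inter_subset_right).trans_lt measure_ball_lt_top).ne
  have hcauchy : CauchySeq fun n => (volume (F n ∩ ball x δ)).toReal := by
    refine Metric.cauchySeq_iff'.2 fun ε hε => ?_
    obtain ⟨η, hη, hη'⟩ := Metric.eventually_nhds_iff.1
      ((tendsto_translate (measurableSet_ball (x := x) (ε := δ)) measure_ball_lt_top).eventually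
        (gt_mem_nhds (ENNReal.ofReal_pos.2 (show 0 < ε / 3 by positivity))))
    obtain ⟨i, hi⟩ := (TopologicalSpace.denseRange_denseSeq (Euc d)).exists_dist_lt x hη
    set z := TopologicalSpace.denseSeq (Euc d) i
    have hxz : volume (ball z δ ∆ ball x δ) < ENNReal.ofReal (ε / 3) := by
      have := hη' (y := x - z) (by rwa [dist_zero_right, ← dist_eq_norm])
      rwa [preimage_add_right_ball, sub_sub_cancel] at this
    have hclose : ∀ n, dist (volume (F n ∩ ball x δ)).toReal (volume (F n ∩ ball z δ)).toReal
        < ε / 3 := by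
      intro n
      have key : ∀ y w : Euc d, volume (ball y δ ∆ ball w δ) < ENNReal.ofReal (ε / 3) →
          (volume (F n ∩ ball y δ)).toReal - (volume (F n ∩ ball w δ)).toReal < ε / 3 := by
        intro y w hyw
        have h1 : volume (F n ∩ ball y δ) ≤ volume (F n ∩ ball w δ) + volume (ball y δ ∆ ball w δ) :=
          (measure_mono fun q hq => by
            simp only [mem_union, mem_inter_iff, mem_symmDiff] at hq ⊢
            tauto).trans (measure_union_le _ _)
        have h2 := ENNReal.toReal_mono (ENNReal.add_ne_top.2 ⟨hlt n w, hyw.ne_top⟩) h1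
        rw [ENNReal.toReal_add (hlt n w) hyw.ne_top] at h2
        have h3 := (ENNReal.lt_ofReal_iff_toReal_lt hyw.ne_top).1 hyw
        linarith
      rw [Real.dist_eq, abs_sub_lt_iff]
      exact ⟨key x z (by rwa [symmDiff_comm]), key z x hxz⟩
    obtain ⟨a, ha⟩ := h i
    have hat : a ≠ ⊤ := by
      refine ne_top_of_le_ne_top (measure_ball_lt_top (x := z) (r := δ) (μ := volume)).ne ?_
      exact le_of_tendsto' ha fun n => measure_mono inter_subset_right
    have hc := ((ENNReal.tendsto_toReal hat).comp ha).cauchySeq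
    obtain ⟨N, hN⟩ := Metric.cauchySeq_iff'.1 hc (ε / 3) (by positivity)
    refine ⟨N, fun n hn => ?_⟩
    have h1 := hclose n
    have h2 := hclose N
    have h3 : dist (volume (F n ∩ ball z δ)).toReal (volume (F N ∩ ball z δ)).toReal < ε / 3 :=
      hN n hn
    rw [dist_comm] at h2
    calc _ ≤ _ := dist_triangle4 _ _ _ _
      _ < ε / 3 + ε / 3 + ε / 3 := by gcongr
      _ = ε := by ring
  obtain ⟨a, ha⟩ := cauchySeq_tendsto_of_complete hcauchy
  refine ⟨ENNReal.ofReal a, ENNReal.ofReal_ne_top, ?_⟩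
  refine (ENNReal.tendsto_ofReal ha).congr fun n => ENNReal.ofReal_toReal (hlt n x)

theorem measurable_density {d : ℕ} {C : Set (Euc d)} (hC : MeasurableSet C) (δ : ℝ) :
    Measurable fun x : Euc d => volume (C ∩ ball x δ) := by
  have : MeasurableSet {q : Euc d × Euc d | q.2 ∈ C ∧ dist q.2 q.1 < δ} :=
    (measurable_snd hC).inter
      (isOpen_lt (by fun_prop : Continuous fun q : Euc d × Euc d => dist q.2 q.1)
        continuous_const).measurableSet
  exact measurable_measure_prodMk_left this

/-- Kolmogorov–Riesz compactness for indicator functions. -/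
theorem exists_subseq_of_inK {d : ℕ} {X : Set (Euc d)} (hX : MeasurableSet X)
    (hfin : volume X < ⊤) {F : ℕ → Set (Euc d)} (hF : ∀ n, InK X (F n)) :
    ∃ (Y : Set (Euc d)) (φ : ℕ → ℕ), MeasurableSet Y ∧ StrictMono φ ∧
      Tendsto (fun k => volume (F (φ k) ∆ Y)) atTop (𝓝 0) := by
  obtain ⟨a, φ, hφ, ha⟩ := CompactSpace.tendsto_subseq
    (fun n => fun q : ℕ × ℕ =>
      volume (F n ∩ ball (TopologicalSpace.denseSeq (Euc d) q.1) (1 / ((q.2 : ℝ) + 1))))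
  rw [tendsto_pi_nhds] at ha
  have hC : ∀ ε : ℝ≥0∞, 0 < ε → ∀ᶠ N in atTop, ∀ n ≥ N, ∀ m ≥ N,
      volume (F (φ n) \ F (φ m)) ≤ ε := by
    intro ε hε
    obtain ⟨η, hη, hη'⟩ : ∃ η : ℝ≥0∞, 0 < η ∧ η + η + (η + η) + η ≤ ε := by
      refine ⟨min 1 (ε / 5), lt_min one_pos (ENNReal.div_pos hε.ne' (by simp)), ?_⟩
      calc _ = min 1 (ε / 5) * 5 := by ring
        _ ≤ ε / 5 * 5 := by gcongr; exact min_le_right _ _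
        _ = ε := ENNReal.div_mul_cancel (by simp) (by simp)
    obtain ⟨δ₀, hδ₀, hsmall⟩ := nlp_small hX hfin hη
    obtain ⟨k, hk⟩ := exists_nat_one_div_lt hδ₀
    obtain ⟨R, hR⟩ := ((tendsto_volume_tail hX hfin).eventually (gt_mem_nhds hη)).exists
    set δ : ℝ := 1 / ((k : ℝ) + 1) with hδ
    have hδpos : 0 < δ := by positivity
    have hb0 : volume (ball (0 : Euc d) δ) ≠ 0 := (measure_ball_pos volume _ hδpos).ne'
    have hbt := volume_ball_ne_top (d := d) δ
    choose g hgt hg using density_tendsto (F := fun n => F (φ n)) (δ := δ)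
      fun i => ⟨a (i, k), ha (i, k)⟩
    have hgm : Measurable g := measurable_of_tendsto_metrizable
      (fun n => measurable_density (hF (φ n)).meas δ) (tendsto_pi_nhds.2 hg)
    have hgb : ∀ x, g x ≤ volume (ball (0 : Euc d) δ) := fun x =>
      le_of_tendsto' (hg x) fun n => by
        rw [← volume_ball_eq x]; exact measure_mono inter_subset_right
    have hfinR : ∫⁻ _ in ball (0 : Euc d) R, volume (ball (0 : Euc d) δ) ≠ ⊤ := by
      rw [setLIntegral_const]
      exact ENNReal.mul_ne_top hbt (volume_ball_ne_top _)
    have hηb : 0 < η * volume (ball (0 : Euc d) δ) := ENNReal.mul_pos hη.ne' hb0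
    have l1 : Tendsto (fun n => ∫⁻ x in ball (0 : Euc d) R,
        (volume (F (φ n) ∩ ball x δ) - g x)) atTop (𝓝 0) := by
      have := tendsto_lintegral_of_dominated_convergence
        (μ := volume.restrict (ball (0 : Euc d) R))
        (F := fun n x => volume (F (φ n) ∩ ball x δ) - g x) (f := fun _ => 0)
        (fun _ => volume (ball (0 : Euc d) δ))
        (fun n => (measurable_density (hF (φ n)).meas δ).sub hgm)
        (fun n => ae_of_all _ fun x => tsub_le_self.trans (by
          rw [← volume_ball_eq x]; exact measure_mono inter_subset_right)) hfinR
        (ae_of_all _ fun x => by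
          have := ENNReal.Tendsto.sub (hg x) (tendsto_const_nhds (x := g x)) (Or.inl (hgt x))
          rwa [tsub_self] at this)
      simpa using this
    have l2 : Tendsto (fun n => ∫⁻ x in ball (0 : Euc d) R,
        (g x - volume (F (φ n) ∩ ball x δ))) atTop (𝓝 0) := by
      have := tendsto_lintegral_of_dominated_convergence
        (μ := volume.restrict (ball (0 : Euc d) R))
        (F := fun n x => g x - volume (F (φ n) ∩ ball x δ)) (f := fun _ => 0)
        (fun _ => volume (ball (0 : Euc d) δ))
        (fun n => hgm.sub (measurable_density (hF (φ n)).meas δ))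
        (fun n => ae_of_all _ fun x => tsub_le_self.trans (hgb x)) hfinR
        (ae_of_all _ fun x => by
          have := ENNReal.Tendsto.sub (tendsto_const_nhds (x := g x)) (hg x) (Or.inl (hgt x))
          rwa [tsub_self] at this)
      simpa using this
    filter_upwards [eventually_forall_ge_atTop.2 (l1.eventually (gt_mem_nhds hηb)),
      eventually_forall_ge_atTop.2 (l2.eventually (gt_mem_nhds hηb))] with N h1 h2 n hn m hm
    have h3 := volume_mul_le_of_density δ (hF (φ n)).meas (hF (φ m)).meas R
    have h4 : ∫⁻ x in ball (0 : Euc d) R,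
        (volume (F (φ n) ∩ ball x δ) - volume (F (φ m) ∩ ball x δ)) ≤
        η * volume (ball (0 : Euc d) δ) + η * volume (ball (0 : Euc d) δ) := by
      refine le_trans ?_ (add_le_add (h1 n hn).le (h2 m hm).le)
      have hsub : Measurable fun x => volume (F (φ n) ∩ ball x δ) - g x :=
        (measurable_density (hF (φ n)).meas δ).sub hgm
      rw [← lintegral_add_left hsub]
      exact lintegral_mono fun x => tsub_le_tsub_add_tsub
    have h5 : volume (ball (0 : Euc d) δ) * volume ((F (φ n) \ F (φ m)) ∩ ball 0 R)
        ≤ volume (ball (0 : Euc d) δ) * (η + η + (η + η)) := by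
      refine h3.trans (le_trans (add_le_add (add_le_add
        (((hF _).osc δ).trans (hsmall δ hk.le)) (((hF _).osc δ).trans (hsmall δ hk.le))) h4)
        (le_of_eq ?_))
      ring
    rw [ENNReal.mul_le_mul_iff_right hb0 hbt] at h5
    calc volume (F (φ n) \ F (φ m))
        ≤ volume (((F (φ n) \ F (φ m)) ∩ ball 0 R) ∪ (F (φ n) \ ball 0 R)) := by
          refine measure_mono fun x hx => ?_
          simp only [mem_union, mem_inter_iff, Set.mem_sdiff] at hx ⊢
          tauto
      _ ≤ η + η + (η + η) + η := (measure_union_le _ _).trans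
          (add_le_add h5 (((hF _).tail R).trans hR.le))
      _ ≤ ε := hη'
  obtain ⟨ψ, hψ, hψ'⟩ := extraction_forall_of_eventually (fun k : ℕ =>
    hC (2⁻¹ ^ (k + 1)) (ENNReal.pow_pos (by simp) _))
  obtain ⟨Y, hY, hlim⟩ := exists_limit_of_fast_cauchy (μ := volume) (F := fun k => F (φ (ψ k)))
    (fun k => (hF _).meas) (fun k => by
      have hk := hψ (Nat.lt_succ_self k)
      rw [volume_symmDiff_eq_add (hF _).meas (hF _).meas]
      calc _ ≤ (2⁻¹ : ℝ≥0∞) ^ (k + 1) + 2⁻¹ ^ (k + 1) :=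
            add_le_add (hψ' k _ le_rfl _ hk.le) (hψ' k _ hk.le _ le_rfl)
        _ = 2⁻¹ ^ k := by
            rw [← two_mul, pow_succ', ← mul_assoc, ENNReal.mul_inv_cancel (by simp) (by simp),
              one_mul])
  exact ⟨Y, φ ∘ ψ, hY, hφ.comp hψ, hlim⟩

/-! ### Polarization -/

section Polarization

variable {α : Type*} {τ : α → α} {H C : Set α}

/-- The polarization of `C`: of each pair `x, τ x` with exactly one point in `C`, the point
in `H` is kept. -/
def pol (τ : α → α) (H C : Set α) : Set α :=
  {x | (x ∈ H ∧ (x ∈ C ∨ τ x ∈ C)) ∨ (x ∉ H ∧ x ∈ C ∧ τ x ∈ C)}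

theorem mem_pol {x : α} (hx : x ∈ H) : x ∈ pol τ H C ↔ x ∈ C ∨ τ x ∈ C := by
  simp [pol, hx]

variable [MeasurableSpace α]

/-- `τ` is a measure-preserving involution, like a reflection, and `H` is a closed half-space
for it: the boundary of `H` is fixed by `τ`. -/
structure IsFold (μ : Measure α) (τ : α → α) (H : Set α) : Prop where
  mp : MeasurePreserving τ μ μ
  inv : ∀ x, τ (τ x) = x
  cover : ∀ x, x ∈ H ∨ τ x ∈ H
  fix : ∀ x ∈ H, τ x ∈ H → τ x = x
  meas : MeasurableSet H

variable {μ : Measure α}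

theorem IsFold.map_mem_pol (h : IsFold μ τ H) {x : α} (hx : x ∈ H) :
    τ x ∈ pol τ H C ↔ x ∈ C ∧ τ x ∈ C := by
  by_cases hx' : τ x ∈ H
  · rw [mem_pol hx', h.inv, h.fix x hx hx']; tauto
  · simp [pol, hx', h.inv, and_comm]

theorem IsFold.measurableSet_pol (h : IsFold μ τ H) (hC : MeasurableSet C) :
    MeasurableSet (pol τ H C) := by
  have hτ := h.mp.measurable hC
  exact (h.meas.inter (hC.union hτ)).union (h.meas.compl.inter (hC.inter hτ))

/-- If in each pair `x, τ x` there are at least as many points of `T` as of `S`, then the measure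
of `S` is at most that of `T`. -/
theorem IsFold.measure_le (h : IsFold μ τ H) {S T : Set α} (hS : MeasurableSet S)
    (hT : MeasurableSet T) (h1 : ∀ x ∈ H, x ∈ S ∨ τ x ∈ S → x ∈ T ∨ τ x ∈ T)
    (h2 : ∀ x ∈ H, x ∈ S → τ x ∈ S → x ∈ T ∧ τ x ∈ T) : μ S ≤ μ T := by
  rw [← lintegral_indicator_one hS, ← lintegral_indicator_one hT]
  refine lintegral_le_of_two_point h.mp h.inv h.cover (measurable_one.indicator hS)
    (measurable_one.indicator hT) fun x hx => ?_
  have h1 := h1 x hx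
  have h2 := h2 x hx
  by_cases a : x ∈ S <;> by_cases b : τ x ∈ S <;> by_cases c : x ∈ T <;> by_cases d : τ x ∈ T <;>
    simp_all

theorem IsFold.measure_pol (h : IsFold μ τ H) (hC : MeasurableSet C) :
    μ (pol τ H C) = μ C := by
  refine le_antisymm (h.measure_le (h.measurableSet_pol hC) hC ?_ ?_)
    (h.measure_le hC (h.measurableSet_pol hC) ?_ ?_) <;> intro x hx <;>
    rw [mem_pol hx, h.map_mem_pol hx] <;> tauto

end Polarization

/-! ### Reflections that fix the centre -/

/-- The reflection in the hyperplane through `p` orthogonal to `n`. -/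
def refl {d : ℕ} (n p : Euc d) : Euc d → Euc d := affIso (ℝ ∙ n)ᗮ.reflection p p

/-- The closed half-space bounded by that hyperplane into which `n` points. -/
def half {d : ℕ} (n p : Euc d) : Set (Euc d) := {x | 0 ≤ ⟪x - p, n⟫}

theorem refl_sub {d : ℕ} (n p x : Euc d) :
    refl n p x - p = x - p - (2 * ⟪x - p, n⟫ / ‖n‖ ^ 2) • n := by
  rw [refl, affIso, add_sub_cancel_left, Submodule.reflection_orthogonal_apply,
    Submodule.reflection_singleton_apply, real_inner_comm n, two_smul, ← add_smul]
  simp only [RCLike.ofReal_real_eq_id, id_eq]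
  rw [neg_sub]
  congr 2
  ring

theorem inner_refl {d : ℕ} (n p x : Euc d) : ⟪refl n p x - p, n⟫ = -⟪x - p, n⟫ := by
  rw [refl_sub, inner_sub_left, real_inner_smul_left, real_inner_self_eq_norm_sq]
  rcases eq_or_ne n 0 with rfl | hn
  · simp
  · have := norm_ne_zero_iff.2 hn
    field_simp
    ring

theorem refl_eq_self {d : ℕ} {n p x : Euc d} (h : ⟪x - p, n⟫ = 0) : refl n p x = x := by
  have := refl_sub n p x
  rw [h] at this
  simpa using this

theorem isFold_refl {d : ℕ} (n p : Euc d) : IsFold volume (refl n p) (half n p) := by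
  refine ⟨measurePreserving_affIso _ p p, fun x => ?_, fun x => ?_, fun x hx hx' => ?_, ?_⟩
  · simp [refl, affIso]
  · simp only [half, mem_ofPred_eq, inner_refl]
    rcases le_total 0 ⟪x - p, n⟫ with h | h
    · exact Or.inl h
    · exact Or.inr (by linarith)
  · simp only [half, mem_ofPred_eq, inner_refl] at hx hx'
    exact refl_eq_self (by linarith)
  · exact measurableSet_le measurable_const (by fun_prop)

theorem dist_refl_refl {d : ℕ} (n p x y : Euc d) : dist (refl n p x) (refl n p y) = dist x y := by
  simp [refl, affIso]

theorem dist_le_dist_refl {d : ℕ} {n p x y : Euc d} (hx : x ∈ half n p) (hy : y ∈ half n p) :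
    dist x y ≤ dist x (refl n p y) := by
  have h1 : x - refl n p y = (x - y) + (2 * ⟪y - p, n⟫ / ‖n‖ ^ 2) • n := by
    have := refl_sub n p y
    rw [← sub_sub_sub_cancel_right x _ p, this]
    abel
  rw [dist_eq_norm, dist_eq_norm, h1]
  refine le_of_sq_le_sq ?_ (norm_nonneg _)
  have hxy : ⟪x - y, n⟫ = ⟪x - p, n⟫ - ⟪y - p, n⟫ := by
    rw [← inner_sub_left, sub_sub_sub_cancel_right]
  rw [norm_add_sq_real, norm_smul, mul_pow, Real.norm_eq_abs, sq_abs, real_inner_smul_right, hxy]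
  rw [half, mem_ofPred_eq] at hx hy
  rcases eq_or_ne n 0 with rfl | hn
  · simp
  · have hn := norm_pos_iff.2 hn
    have : 2 * (2 * ⟪y - p, n⟫ / ‖n‖ ^ 2 * (⟪x - p, n⟫ - ⟪y - p, n⟫)) +
        (2 * ⟪y - p, n⟫ / ‖n‖ ^ 2) ^ 2 * ‖n‖ ^ 2 = 4 * (⟪y - p, n⟫ * ⟪x - p, n⟫) / ‖n‖ ^ 2 := by
      field_simp
      ring
    have h2 : 0 ≤ 4 * (⟪y - p, n⟫ * ⟪x - p, n⟫) / ‖n‖ ^ 2 := by positivity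
    linarith

theorem sl_pol {d : ℕ} (n p : Euc d) (C : Set (Euc d)) (t : ℝ) :
    sl p (pol (refl n p) (half n p) C) t
      = pol (sphIso (ℝ ∙ n)ᗮ.reflection) (sl p (half n p) t) (sl p C t) := by
  ext u
  simp [mem_sl, pol, refl, affIso, coe_sphIso]

theorem isFold_sl {d : ℕ} (n p : Euc d) {t : ℝ} (ht : 0 < t) :
    IsFold (sig d) (sphIso (ℝ ∙ n)ᗮ.reflection) (sl p (half n p) t) := by
  have h := isFold_refl n p
  have hr : ∀ u : Sph d, refl n p (p + t • (u : Euc d))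
      = p + t • (sphIso (ℝ ∙ n)ᗮ.reflection u : Euc d) := by
    intro u
    simp [refl, affIso, coe_sphIso]
  refine ⟨measurePreserving_sphIso _, fun u => Subtype.ext ?_, fun u => ?_, fun u hu hu' => ?_,
    measurableSet_sl p h.meas t⟩
  · simp [coe_sphIso]
  · simp only [mem_sl, ← hr]
    exact h.cover _
  · rw [mem_sl] at hu hu'
    rw [← hr] at hu'
    have := h.fix _ hu hu'
    rw [hr, add_right_inj] at this
    exact Subtype.ext (smul_right_injective _ ht.ne' this)

theorem equi_pol {d : ℕ} (n p : Euc d) {C : Set (Euc d)} (hC : MeasurableSet C) :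
    Equi p (pol (refl n p) (half n p) C) C :=
  ae_of_all _ fun t => by
    rw [sl_pol]
    exact (isFold_sl n p t.2).measure_pol (measurableSet_sl p hC t.1)

theorem volume_pol_sdiff_ball_le {d : ℕ} {n p : Euc d} (h0 : 0 ∈ half n p) {C : Set (Euc d)}
    (hC : MeasurableSet C) (R : ℝ) :
    volume (pol (refl n p) (half n p) C \ ball 0 R) ≤ volume (C \ ball 0 R) := by
  have h := isFold_refl n p
  refine h.measure_le ((h.measurableSet_pol hC).diff measurableSet_ball)
    (hC.diff measurableSet_ball) ?_ ?_ <;> intro x hx <;>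
    have hd : refl n p x ∈ ball 0 R → x ∈ ball 0 R := (fun h => by
      rw [mem_ball'] at h ⊢
      exact (dist_le_dist_refl h0 hx).trans_lt h) <;>
    simp only [Set.mem_sdiff, mem_pol hx, h.map_mem_pol hx] <;> tauto

/-- Polarization lowers nonlocal perimeters: the interaction between points on the same side of
the mirror is the stronger one. -/
theorem nlp_pol_le {d : ℕ} (n p : Euc d) {C : Set (Euc d)} (hC : MeasurableSet C) (δ : ℝ) :
    nlp δ (pol (refl n p) (half n p) C) ≤ nlp δ C := by
  classical
  have h := isFold_refl n p
  have hP := h.measurableSet_pol hC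
  have hmeas : ∀ A : Set (Euc d), MeasurableSet A → ∀ x : Euc d,
      MeasurableSet {y | x ∈ A ∧ y ∉ A ∧ dist x y < δ} := fun A hA x =>
    measurable_prodMk_left (measurableSet_nlp δ hA)
  have hind : ∀ A : Set (Euc d), MeasurableSet A → ∀ x : Euc d,
      volume {y | x ∈ A ∧ y ∉ A ∧ dist x y < δ}
        = ∫⁻ y, if x ∈ A ∧ y ∉ A ∧ dist x y < δ then 1 else 0 := fun A hA x => by
    rw [← lintegral_indicator_one (hmeas A hA x)]
    refine lintegral_congr fun y => ?_
    by_cases hy : x ∈ A ∧ y ∉ A ∧ dist x y < δ <;> simp [indicator, hy]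
  have hindm : ∀ A : Set (Euc d), MeasurableSet A → ∀ x : Euc d,
      Measurable fun y => if x ∈ A ∧ y ∉ A ∧ dist x y < δ then (1 : ℝ≥0∞) else 0 := fun A hA x =>
    Measurable.ite (hmeas A hA x) measurable_const measurable_const
  have hprod : ∀ A : Set (Euc d), MeasurableSet A →
      nlp δ A = ∫⁻ x, volume {y | x ∈ A ∧ y ∉ A ∧ dist x y < δ} := fun A hA =>
    Measure.prod_apply (measurableSet_nlp δ hA)
  have hprodm : ∀ A : Set (Euc d), MeasurableSet A →
      Measurable fun x => volume {y | x ∈ A ∧ y ∉ A ∧ dist x y < δ} := fun A hA =>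
    measurable_measure_prodMk_left (measurableSet_nlp δ hA)
  rw [hprod _ hP, hprod _ hC]
  refine lintegral_le_of_two_point h.mp h.inv h.cover (hprodm _ hP) (hprodm _ hC) fun x hx => ?_
  rw [hind _ hP, hind _ hP, hind _ hC, hind _ hC, ← lintegral_add_left (hindm _ hP _),
    ← lintegral_add_left (hindm _ hC _)]
  refine lintegral_le_of_two_point h.mp h.inv h.cover ((hindm _ hP _).add (hindm _ hP _))
    ((hindm _ hC _).add (hindm _ hC _)) fun y hy => ?_
  have e1 : dist (refl n p x) (refl n p y) = dist x y := dist_refl_refl n p x y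
  have e2 : dist (refl n p x) y = dist x (refl n p y) := by
    rw [← dist_refl_refl n p x, h.inv]
  have e3 : dist x (refl n p y) < δ → dist x y < δ := (dist_le_dist_refl hx hy).trans_lt
  rw [e1, e2]
  simp only [mem_pol hx, h.map_mem_pol hx, mem_pol hy, h.map_mem_pol hy]
  by_cases hb : dist x (refl n p y) < δ
  · have ha := e3 hb
    by_cases refl n p x ∈ C <;> by_cases refl n p y ∈ C <;> by_cases x ∈ C <;>
      by_cases y ∈ C <;> simp [*]
  · by_cases dist x y < δ <;> by_cases refl n p x ∈ C <;> by_cases refl n p y ∈ C <;>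
      by_cases x ∈ C <;> by_cases y ∈ C <;> simp [*]

theorem inK_pol {d : ℕ} {X C : Set (Euc d)} (hC : InK X C) {n p : Euc d} (h0 : 0 ∈ half n p) :
    InK X (pol (refl n p) (half n p) C) :=
  ⟨(isFold_refl n p).measurableSet_pol hC.meas,
    fun R => (volume_pol_sdiff_ball_le h0 hC.meas R).trans (hC.tail R),
    fun δ => (nlp_pol_le n p hC.meas δ).trans (hC.osc δ)⟩

/-- Polarization towards the axis of the cap `Y` brings `C` closer to `Y`; the second term
measures the pairs on which it improves strictly. -/
theorem volume_pol_symmDiff_le {d : ℕ} {n e p : Euc d} (hne : ⟪n, e⟫ ≤ 0) {C Y : Set (Euc d)}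
    (hC : MeasurableSet C) (hY : Cap e p Y) :
    volume (pol (refl n p) (half n p) C ∆ Y) +
      volume (half n p ∩ (Y \ C) ∩ refl n p ⁻¹' (C \ Y)) ≤ volume (C ∆ Y) := by
  have h := isFold_refl n p
  have hg : MeasurableSet (half n p ∩ (Y \ C) ∩ refl n p ⁻¹' (C \ Y)) :=
    (h.meas.inter (hY.meas.diff hC)).inter (h.mp.measurable (hC.diff hY.meas))
  have hP := (h.measurableSet_pol hC).symmDiff hY.meas
  have hdisj : Disjoint (pol (refl n p) (half n p) C ∆ Y)
      (half n p ∩ (Y \ C) ∩ refl n p ⁻¹' (C \ Y)) := by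
    refine Set.disjoint_left.2 fun x hx hx' => ?_
    obtain ⟨⟨hxH, hxY, hxC⟩, hx1, hx2⟩ := hx'
    rw [mem_symmDiff, mem_pol hxH] at hx
    tauto
  rw [← measure_union hdisj hg]
  refine h.measure_le (hP.union hg) (hC.symmDiff hY.meas) ?_ ?_ <;> intro x hx <;>
    have hYx : refl n p x ∈ Y → x ∈ Y := (fun hy => by
      by_cases hxp : x = p
      · rwa [hxp, refl_eq_self (by simp), ← hxp] at hy
      · refine hY.mem _ _ hxp ?_ ?_ hy
        · simp only [refl, affIso, add_sub_cancel_left, LinearIsometryEquiv.norm_map]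
        · have h3 : ⟪refl n p x - p, e⟫ = ⟪x - p, e⟫ - 2 * ⟪x - p, n⟫ / ‖n‖ ^ 2 * ⟪n, e⟫ := by
            rw [refl_sub, inner_sub_left (x - p), real_inner_smul_left]
          rw [h3]
          rw [half, mem_ofPred_eq] at hx
          have : 2 * ⟪x - p, n⟫ / ‖n‖ ^ 2 * ⟪n, e⟫ ≤ 0 :=
            mul_nonpos_of_nonneg_of_nonpos (by positivity) hne
          linarith) <;>
    simp only [mem_union, mem_inter_iff, mem_preimage, Set.mem_sdiff, mem_symmDiff, mem_pol hx,
      h.map_mem_pol hx, h.inv] <;> tauto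

/-! ### Iterated polarization produces the cap symmetrization -/

/-- Almost every point of a measurable set is a density point, quantitatively. -/
theorem exists_null_density {d : ℕ} (S : Set (Euc d)) (hS : MeasurableSet S) :
    ∃ N : Set (Euc d), MeasurableSet N ∧ volume N = 0 ∧ ∀ x ∈ S, x ∉ N →
      ∀ᶠ ρ in 𝓝[>] (0 : ℝ), volume (closedBall x ρ) < 2 * volume (S ∩ closedBall x ρ) := by
  have h := (ae_restrict_iff' hS).1 (Besicovitch.ae_tendsto_measure_inter_div volume S)
  obtain ⟨N, hN, hNm, hN0⟩ := exists_measurable_superset_of_null (ae_iff.1 h)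
  refine ⟨N, hNm, hN0, fun x hx hxN => ?_⟩
  have hx' := (not_not.1 fun hc => hxN (hN hc)) hx
  filter_upwards [hx'.eventually_const_lt ENNReal.one_half_lt_one, self_mem_nhdsWithin]
    with ρ hρ h0
  have hp : volume (closedBall x ρ) ≠ 0 := (measure_closedBall_pos volume x h0).ne'
  have hf : volume (closedBall x ρ) ≠ ⊤ := measure_closedBall_lt_top.ne
  rw [ENNReal.lt_div_iff_mul_lt (Or.inl hp) (Or.inl hf), mul_comm,
    ← div_eq_mul_inv, ENNReal.div_lt_iff (Or.inl two_ne_zero) (Or.inl ENNReal.ofNat_ne_top),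
    mul_comm] at hρ
  exact hρ

theorem exists_better {d : ℕ} [NeZero d] {e : Euc d} {r : ℝ} (hr : 0 ≤ r) {X C Y : Set (Euc d)}
    (hfin : volume X < ⊤) (hC : InK X C) (hCY : Equi (r • e) C Y) (hY : Cap e (r • e) Y)
    (hne : volume (C ∆ Y) ≠ 0) :
    ∃ C', InK X C' ∧ Equi (r • e) C' Y ∧ volume (C' ∆ Y) < volume (C ∆ Y) := by
  set p := r • e with hp
  have hCfin : volume C < ⊤ := hC.volume_le.trans_lt hfin
  have hYfin : volume Y < ⊤ := by rwa [← volume_eq_of_equi hC.meas hY.meas hCY]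
  have hsfin : volume (C ∆ Y) < ⊤ :=
    (measure_mono symmDiff_subset_union).trans_lt (measure_union_lt_top hCfin hYfin)
  have hE := hY.meas.diff hC.meas
  have hD := hC.meas.diff hY.meas
  have hslice : ∀ᵐ t ∂(rad d), sig d (sl p (Y \ C) t.1) = sig d (sl p (C \ Y) t.1) := by
    filter_upwards [hCY] with t ht
    exact measure_sdiff_comm_of_eq (measurableSet_sl p hC.meas t.1) (measurableSet_sl p hY.meas t.1)
      ht (measure_ne_top _ _)
  have hE0 : volume (Y \ C) ≠ 0 := by
    intro h0
    refine hne ?_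
    rw [volume_symmDiff_eq_add hC.meas hY.meas, h0, ← volume_eq_of_equi hE hD hslice, h0, zero_add]
  obtain ⟨N₁, hN₁, hN₁0, hd₁⟩ := exists_null_density _ hE
  obtain ⟨N₂, hN₂, hN₂0, hd₂⟩ := exists_null_density _ hD
  have hnull : ∀ N : Set (Euc d), MeasurableSet N → volume N = 0 →
      ∀ᵐ t ∂(rad d), sig d (sl p N t.1) = 0 := fun N hN h0 => by
    rw [volume_eq_slices p hN, lintegral_eq_zero_iff (measurable_sl p hN)] at h0
    exact h0
  have hfreq : ∃ᵐ t ∂(rad d), sig d (sl p (Y \ C) t.1) ≠ 0 := by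
    intro h
    refine hE0 ?_
    rw [volume_eq_slices p hE, lintegral_eq_zero_iff (measurable_sl p hE)]
    filter_upwards [h] with t ht using not_not.1 ht
  obtain ⟨t, ht0, ht1, ht2, ht3⟩ :=
    (hfreq.and_eventually (hslice.and ((hnull N₁ hN₁ hN₁0).and (hnull N₂ hN₂ hN₂0)))).exists
  have hpick : ∀ S N : Set (Euc d), sig d (sl p S t.1) ≠ 0 → sig d (sl p N t.1) = 0 →
      ∃ u, u ∈ sl p S t.1 ∧ u ∉ sl p N t.1 := fun S N hS hN => by
    by_contra! h
    exact hS (measure_mono_null h hN)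
  obtain ⟨u, huE, huN⟩ := hpick _ _ ht0 ht2
  obtain ⟨v, hvD, hvN⟩ := hpick _ _ (ht1 ▸ ht0) ht3
  have huv : ⟪(u : Euc d), e⟫ < ⟪(v : Euc d), e⟫ := hY.inner_lt t.2 huE.1 hvD.2
  rw [mem_sl] at huE huN hvD hvN
  set z := p + t.1 • (u : Euc d) with hz
  set y := p + t.1 • (v : Euc d) with hy
  -- The mirror exchanges a density point `z` of `Y \ C` and a density point `y` of `C \ Y`.
  set n := z - y with hn
  have hzp : z - p = t.1 • (u : Euc d) := by rw [hz, add_sub_cancel_left]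
  have hyp : y - p = t.1 • (v : Euc d) := by rw [hy, add_sub_cancel_left]
  have hnorm : ‖z - p‖ = ‖y - p‖ := by simp [hzp, hyp, norm_smul]
  have hn' : n = (z - p) - (y - p) := by rw [hn]; abel
  have hne' : ⟪n, e⟫ < 0 := by
    rw [hn', hzp, hyp, ← smul_sub, real_inner_smul_left, inner_sub_left]
    exact mul_neg_of_pos_of_neg t.2 (by linarith)
  have hn0 : n ≠ 0 := by rintro h; simp [h] at hne'
  have h0 : 0 ∈ half n p := by
    rw [half, mem_ofPred_eq, hp, zero_sub, inner_neg_left, real_inner_smul_left, real_inner_comm]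
    nlinarith
  have hrefl : refl n p z = y := by
    rw [refl, affIso, hn', Submodule.reflection_sub hnorm]
    abel
  have hzn : 0 < ⟪z - p, n⟫ := by
    have h1 := inner_refl n p z
    rw [hrefl] at h1
    have h2 : ⟪z - p, n⟫ - ⟪y - p, n⟫ = ‖n‖ ^ 2 := by
      rw [← inner_sub_left, ← hn', real_inner_self_eq_norm_sq]
    have h3 : 0 < ‖n‖ ^ 2 := by positivity
    linarith
  have hhalf : half n p ∈ 𝓝 z := by
    have : ∀ᶠ x in 𝓝 z, 0 < ⟪x - p, n⟫ :=
      (by fun_prop : Continuous fun x : Euc d => ⟪x - p, n⟫).continuousAt.eventually_const_lt hzn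
    filter_upwards [this] with x hx using hx.le
  obtain ⟨ρ₀, hρ₀, hball⟩ := nhds_basis_closedBall.mem_iff.1 hhalf
  obtain ⟨ρ, ⟨h1, h2⟩, hρ0, hρ⟩ := (((hd₁ z huE huN).and (hd₂ y hvD hvN)).and
    (Ioc_mem_nhdsGT hρ₀)).exists
  have hfold := isFold_refl n p
  have hpre : refl n p ⁻¹' (closedBall y ρ) = closedBall z ρ := by
    ext x
    rw [mem_preimage, mem_closedBall, mem_closedBall, ← hrefl, dist_refl_refl]
  have hvol : volume (closedBall y ρ) = volume (closedBall z ρ) := by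
    rw [← hpre, hfold.mp.measure_preimage measurableSet_closedBall.nullMeasurableSet]
  have hD2 : volume ((C \ Y) ∩ closedBall y ρ)
      = volume (refl n p ⁻¹' (C \ Y) ∩ closedBall z ρ) := by
    rw [← hpre, ← preimage_inter, hfold.mp.measure_preimage
      (hD.inter measurableSet_closedBall).nullMeasurableSet]
  have hgain : volume (half n p ∩ (Y \ C) ∩ refl n p ⁻¹' (C \ Y)) ≠ 0 := by
    intro hzero
    have h3 := measure_union_add_inter (μ := volume) ((Y \ C) ∩ closedBall z ρ)
      ((hfold.mp.measurable hD).inter (measurableSet_closedBall (x := z) (ε := ρ)))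
    have h4 : volume (((Y \ C) ∩ closedBall z ρ) ∩ (refl n p ⁻¹' (C \ Y) ∩ closedBall z ρ)) = 0 :=
      measure_mono_null (t := half n p ∩ (Y \ C) ∩ refl n p ⁻¹' (C \ Y))
        (fun x hx => ⟨⟨hball (closedBall_subset_closedBall hρ hx.1.2), hx.1.1⟩, hx.2.1⟩) hzero
    have h5 : volume (((Y \ C) ∩ closedBall z ρ) ∪ (refl n p ⁻¹' (C \ Y) ∩ closedBall z ρ))
        ≤ volume (closedBall z ρ) :=
      measure_mono (union_subset inter_subset_right inter_subset_right)
    rw [h4, add_zero] at h3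
    rw [h3] at h5
    rw [hD2, hvol] at h2
    have h6 := ENNReal.add_lt_add h1 h2
    rw [← two_mul, ← mul_add] at h6
    exact absurd (mul_le_mul_right h5 2) (not_le.2 h6)
  have hle := volume_pol_symmDiff_le (n := n) hne'.le hC.meas hY
  refine ⟨_, inK_pol hC h0, (equi_pol n p hC.meas).trans hCY, lt_of_lt_of_le ?_ hle⟩
  refine ENNReal.lt_add_right (ne_top_of_le_ne_top hsfin.ne (le_self_add.trans hle)) hgain

theorem equi_of_tendsto {d : ℕ} [NeZero d] {p : Euc d} {F : ℕ → Set (Euc d)} {C Y : Set (Euc d)}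
    (hF : ∀ n, MeasurableSet (F n)) (hC : MeasurableSet C) (hFY : ∀ n, Equi p (F n) Y)
    (hY : MeasurableSet Y)
    (h : Tendsto (fun n => volume (F n ∆ C)) atTop (𝓝 0)) : Equi p C Y := by
  have hsub : ∀ A B : Set (Euc d), ∀ t, sig d (sl p A t) - sig d (sl p B t)
      ≤ sig d (sl p (B ∆ A) t) := fun A B t => by
    rw [tsub_le_iff_right]
    refine (measure_mono fun u hu => ?_).trans (measure_union_le _ _)
    by_cases hb : u ∈ sl p B t
    · exact Or.inr hb
    · exact Or.inl (Or.inr ⟨hu, hb⟩)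
  have key : ∀ n, ∫⁻ t, (sig d (sl p C t.1) - sig d (sl p Y t.1)) +
      (sig d (sl p Y t.1) - sig d (sl p C t.1)) ∂(rad d) ≤ 2 * volume (F n ∆ C) := fun n => by
    rw [volume_eq_slices p ((hF n).symmDiff hC), ← lintegral_const_mul _
      (measurable_sl p ((hF n).symmDiff hC))]
    refine lintegral_mono_ae ?_
    filter_upwards [hFY n] with t ht
    rw [← ht, two_mul]
    refine add_le_add ?_ ?_
    · exact hsub C (F n) t.1
    · rw [symmDiff_comm]; exact hsub (F n) C t.1
  have hz : ∫⁻ t, (sig d (sl p C t.1) - sig d (sl p Y t.1)) +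
      (sig d (sl p Y t.1) - sig d (sl p C t.1)) ∂(rad d) = 0 := by
    have h2 := ENNReal.Tendsto.const_mul h (Or.inr (ENNReal.ofNat_ne_top (n := 2)))
    rw [mul_zero] at h2
    exact le_antisymm (ge_of_tendsto' h2 key) zero_le
  have hmC := measurable_sl p hC
  have hmY := measurable_sl p hY
  have hm : Measurable fun t : Ioi (0 : ℝ) => (sig d (sl p C t.1) - sig d (sl p Y t.1)) +
      (sig d (sl p Y t.1) - sig d (sl p C t.1)) := (hmC.sub hmY).add (hmY.sub hmC)
  rw [lintegral_eq_zero_iff hm] at hz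
  filter_upwards [hz] with t ht
  simp only [Pi.zero_apply, add_eq_zero, tsub_eq_zero_iff_le] at ht
  exact le_antisymm ht.1 ht.2

/-- The cap symmetrization `Y` of `C₀` is at distance zero from a set closest to it in the
compact class of members of `InK X` with the same slice measures, hence lies in `InK X`. -/
theorem inK_of_cap {d : ℕ} [NeZero d] {e : Euc d} {r : ℝ} (hr : 0 ≤ r) {X C₀ Y : Set (Euc d)}
    (hX : MeasurableSet X) (hfin : volume X < ⊤) (hC : InK X C₀) (hCY : Equi (r • e) C₀ Y)
    (hY : Cap e (r • e) Y) : InK X Y := by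
  set V : Set ℝ≥0∞ := {v | ∃ C, InK X C ∧ Equi (r • e) C Y ∧ volume (C ∆ Y) = v} with hV
  obtain ⟨a, -, ha, haV⟩ :=
    exists_seq_tendsto_sInf (S := V) ⟨_, C₀, hC, hCY, rfl⟩ (OrderBot.bddBelow _)
  choose F hF hFY hFa using haV
  obtain ⟨C, φ, hCm, hφ, hlim⟩ := exists_subseq_of_inK hX hfin hF
  have hCK : InK X C := InK.of_tendsto (fun n => hF (φ n)) hCm hlim
  have hCE : Equi (r • e) C Y :=
    equi_of_tendsto (fun n => (hF (φ n)).meas) hCm (fun n => hFY (φ n)) hY.meas hlim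
  have hle : volume (C ∆ Y) ≤ sInf V := by
    have h1 : ∀ k, volume (C ∆ Y) ≤ volume (F (φ k) ∆ C) + a (φ k) := fun k => by
      rw [← hFa, symmDiff_comm (F (φ k)) C]
      exact measure_symmDiff_le _ _ _
    have h2 := hlim.add (ha.comp hφ.tendsto_atTop)
    rw [zero_add] at h2
    exact ge_of_tendsto' h2 h1
  by_cases hne : volume (C ∆ Y) = 0
  · exact InK.of_tendsto (F := fun _ => C) (fun _ => hCK) hY.meas (by simp [hne])
  · obtain ⟨C', hK', hE', hlt⟩ := exists_better hr hfin hCK hCE hY hne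
    have hmem : volume (C' ∆ Y) ∈ V := ⟨C', hK', hE', rfl⟩
    exact absurd (sInf_le hmem) (not_le.2 (hlt.trans_le hle))

/-! ### Cap symmetrization operators -/

section Op

variable {d : ℕ} {op : sphere (0 : Euc d) 1 × ℝ≥0 → Set (Euc d) → Set (Euc d)}

theorem cap_op (hop : IsCapOp op) (s : sphere (0 : Euc d) 1 × ℝ≥0) {A : Set (Euc d)}
    (hA : MeasurableSet A) : Cap (s.1 : Euc d) ((s.2 : ℝ) • (s.1 : Euc d)) (op s A) :=
  cap_of_isCapSymmOf (hop s.1 s.2 A hA)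

variable [NeZero d]

theorem equi_op (hop : IsCapOp op) (s : sphere (0 : Euc d) 1 × ℝ≥0) {A : Set (Euc d)}
    (hA : MeasurableSet A) : Equi ((s.2 : ℝ) • (s.1 : Euc d)) A (op s A) :=
  equi_of_isCapSymmOf (hop s.1 s.2 A hA)

theorem volume_op (hop : IsCapOp op) (s : sphere (0 : Euc d) 1 × ℝ≥0) {A : Set (Euc d)}
    (hA : MeasurableSet A) : volume (op s A) = volume A :=
  (volume_eq_of_equi hA (cap_op hop s hA).meas (equi_op hop s hA)).symm

theorem volume_op_symmDiff_le (hop : IsCapOp op) (s : sphere (0 : Euc d) 1 × ℝ≥0)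
    {A B : Set (Euc d)} (hA : MeasurableSet A) (hB : MeasurableSet B) :
    volume (op s A ∆ op s B) ≤ volume (A ∆ B) :=
  volume_symmDiff_le hA hB (cap_op hop s hA) (cap_op hop s hB) (equi_op hop s hA)
    (equi_op hop s hB)

theorem op_continuous (hop : IsCapOp op) {A : Set (Euc d)} (hA : MeasurableSet A)
    (hfin : volume A < ⊤) (s : sphere (0 : Euc d) 1 × ℝ≥0) {ε : ℝ} (hε : 0 < ε) :
    ∃ δ : ℝ, 0 < δ ∧ ∀ (B : Set (Euc d)) (t : sphere (0 : Euc d) 1 × ℝ≥0), MeasurableSet B →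
      volume (A ∆ B) < ENNReal.ofReal δ → dist s t < δ →
      volume (op s A ∆ op t B) < ENNReal.ofReal ε := by
  obtain ⟨δ, hδ, h⟩ := cap_continuous (norm_eq_of_mem_sphere s.1) hA hfin (cap_op hop s hA)
    (equi_op hop s hA) (ENNReal.ofReal_pos.2 (half_pos hε))
  refine ⟨min δ (ε / 2), lt_min hδ (half_pos hε), fun B t hB hAB hst => ?_⟩
  have hst' : dist s t < δ := hst.trans_le (min_le_left _ _)
  rw [Prod.dist_eq, max_lt_iff] at hst'
  have h1 := h t.1 t.2 (op t A) (norm_eq_of_mem_sphere t.1) hst'.1 hst'.2 (cap_op hop t hA)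
    (equi_op hop t hA)
  have h2 : volume (op t A ∆ op t B) < ENNReal.ofReal (ε / 2) :=
    (volume_op_symmDiff_le hop t hA hB).trans_lt
      (hAB.trans_le (ENNReal.ofReal_le_ofReal (min_le_right _ _)))
  calc volume (op s A ∆ op t B) ≤ volume (op s A ∆ op t A) + volume (op t A ∆ op t B) :=
        measure_symmDiff_le _ _ _
    _ < ENNReal.ofReal (ε / 2) + ENNReal.ofReal (ε / 2) := ENNReal.add_lt_add h1 h2
    _ = ENNReal.ofReal ε := by
        rw [← ENNReal.ofReal_add (half_pos hε).le (half_pos hε).le, add_halves]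

theorem inK_of_inOrbit (hop : IsCapOp op) {X Y : Set (Euc d)} (hX : MeasurableSet X)
    (hfin : volume X < ⊤) (h : InOrbit op X Y) : InK X Y := by
  obtain ⟨l, -, rfl⟩ := h
  suffices ∀ C, InK X C → InK X (l.foldl (fun B s => op s B) C) from this X (InK.refl hX)
  induction l with
  | nil => exact fun C hC => hC
  | cons s l ih =>
    exact fun C hC => ih _ (inK_of_cap s.2.2 hX hfin hC (equi_op hop s hC.meas)
      (cap_op hop s hC.meas))

end Op

end CapSymm

/-- Cap symmetrizations on `(ℳ(ℝ^d), d₁)` form a `⋆`-compatible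
symmetrization space with compact orbit closures, and `J` is a `⋆`-compatible asymmetry
function on it, strict on `𝕊^{d-1} × (0, ∞)`. -/
theorem statement14 {d : ℕ} (hd : 1 ≤ d)
    (op : Metric.sphere (0 : Euc d) 1 × ℝ≥0 → Set (Euc d) → Set (Euc d))
    (hop : IsCapOp op)
    (star : Set (Euc d) → Set (Euc d)) (hstar : IsSphericalRearrangement star) :
    -- nonexpansiveness
    (∀ (s : Metric.sphere (0 : Euc d) 1 × ℝ≥0) (A B : Set (Euc d)),
      MeasurableSet A → volume A < ⊤ → MeasurableSet B → volume B < ⊤ →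
      volume (symmDiff (op s A) (op s B)) ≤ volume (symmDiff A B)) ∧
    -- idempotence (in `ℳ(ℝ^d)`)
    (∀ (s : Metric.sphere (0 : Euc d) 1 × ℝ≥0) (A : Set (Euc d)),
      MeasurableSet A → volume A < ⊤ →
      volume (symmDiff (op s (op s A)) (op s A)) = 0) ∧
    -- joint continuity of the action in `(X, s)`
    (∀ (A : Set (Euc d)), MeasurableSet A → volume A < ⊤ →
      ∀ (s : Metric.sphere (0 : Euc d) 1 × ℝ≥0) (ε : ℝ), 0 < ε → ∃ δ : ℝ, 0 < δ ∧
        ∀ (B : Set (Euc d)) (t : Metric.sphere (0 : Euc d) 1 × ℝ≥0),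
          MeasurableSet B → volume B < ⊤ →
          volume (symmDiff A B) < ENNReal.ofReal δ → dist s t < δ →
          volume (symmDiff (op s A) (op t B)) < ENNReal.ofReal ε) ∧
    -- `⋆`-compatibility of the symmetrization space
    (∀ (s : Metric.sphere (0 : Euc d) 1 × ℝ≥0) (A : Set (Euc d)),
      MeasurableSet A → volume A < ⊤ →
      volume (symmDiff (star (op s A)) (star A)) = 0 ∧
      volume (symmDiff (op s (star A)) (star A)) = 0) ∧
    (∀ A : Set (Euc d), MeasurableSet A → volume A < ⊤ →
      (∀ s : Metric.sphere (0 : Euc d) 1 × ℝ≥0, volume (symmDiff (op s A) A) = 0) →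
      volume (symmDiff A (star A)) = 0) ∧
    -- compact closure of orbits
    (∀ (X : Set (Euc d)), MeasurableSet X → volume X < ⊤ →
      ∀ F : ℕ → Set (Euc d), (∀ n, InOrbit op X (F n)) →
        ∃ (Y : Set (Euc d)) (φ : ℕ → ℕ), MeasurableSet Y ∧ volume Y < ⊤ ∧
          StrictMono φ ∧
          Tendsto (fun k => volume (symmDiff (F (φ k)) Y)) atTop (nhds 0)) ∧
    -- `J` is continuous on `(ℳ(ℝ^d), d₁)`
    (∀ A : Set (Euc d), MeasurableSet A → volume A < ⊤ → ∀ ε : ℝ, 0 < ε → ∃ δ : ℝ,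
      0 < δ ∧ ∀ B : Set (Euc d), MeasurableSet B → volume B < ⊤ →
        volume (symmDiff A B) < ENNReal.ofReal δ → |asymmetryJ A - asymmetryJ B| < ε) ∧
    -- `J` decreases along cap symmetrizations, strictly when `r > 0`
    (∀ (s : Metric.sphere (0 : Euc d) 1 × ℝ≥0) (A : Set (Euc d)),
      MeasurableSet A → volume A < ⊤ →
      asymmetryJ (op s A) ≤ asymmetryJ A ∧
      (0 < s.2 → asymmetryJ (op s A) = asymmetryJ A →
        volume (symmDiff (op s A) A) = 0)) ∧
    -- `J` is `⋆`-compatible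
    (∀ A : Set (Euc d), MeasurableSet A → volume A < ⊤ →
      asymmetryJ A ≤ asymmetryJ (star A) → volume (symmDiff A (star A)) = 0) := by
  have : NeZero d := ⟨by omega⟩
  refine ⟨fun s A B hA _ hB _ => CapSymm.volume_op_symmDiff_le hop s hA hB, fun s A hA _ => ?_,
    fun A hA hfin s ε hε => ?_, fun s A hA hfin => ?_, fun A hA hfin h => ?_,
    fun X hX hfin F hF => ?_, fun A _ hfin ε hε => ?_, fun s A hA hfin => ⟨?_, fun hs hJ => ?_⟩,
    fun A hA hfin hJ => ?_⟩
  · have hm := (CapSymm.cap_op hop s hA).meas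
    exact CapSymm.cap_unique (CapSymm.cap_op hop s hm) (CapSymm.cap_op hop s hA)
      (CapSymm.equi_op hop s hm).symm
  · obtain ⟨δ, hδ, h⟩ := CapSymm.op_continuous hop hA hfin s hε
    exact ⟨δ, hδ, fun B t hB _ => h B t hB⟩
  · have hv := CapSymm.volume_op hop s hA
    obtain ⟨⟨R, hR⟩, hRv⟩ := hstar A hA hfin
    obtain ⟨⟨R', hR'⟩, hRv'⟩ := hstar _ (CapSymm.cap_op hop s hA).meas (hv.trans_lt hfin)
    rw [hR] at hRv ⊢
    rw [hR'] at hRv' ⊢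
    refine ⟨CapSymm.symmDiff_ball_eq_zero (by rw [hRv, hRv', hv]), ?_⟩
    exact CapSymm.cap_unique (CapSymm.cap_op hop s measurableSet_ball)
      (CapSymm.cap_ball s.2.2 R) (CapSymm.equi_op hop s measurableSet_ball).symm
  · obtain ⟨⟨R, hR⟩, hRv⟩ := hstar A hA hfin
    rw [hR] at hRv ⊢
    refine CapSymm.ball_of_fixed hA hfin hRv fun e he r hr => ?_
    let s : Metric.sphere (0 : Euc d) 1 × ℝ≥0 := (⟨e, mem_sphere_zero_iff_norm.2 he⟩, ⟨r, hr⟩)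
    exact ⟨op s A, CapSymm.cap_op hop s hA, h s⟩
  · have hK := fun n => CapSymm.inK_of_inOrbit hop hX hfin (hF n)
    obtain ⟨Y, φ, hY, hφ, hlim⟩ := CapSymm.exists_subseq_of_inK hX hfin hK
    exact ⟨Y, φ, hY, (CapSymm.InK.of_tendsto (fun n => hK (φ n)) hY hlim).volume_le.trans_lt hfin,
      hφ, hlim⟩
  · refine ⟨ε, hε, fun B _ hBfin hAB => (CapSymm.abs_asymmetryJ_sub_le hfin hBfin).trans_lt ?_⟩
    exact ENNReal.toReal_lt_of_lt_ofReal hAB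
  · exact CapSymm.J_le_of_cap s.2.2 hA hfin (CapSymm.cap_op hop s hA) (CapSymm.equi_op hop s hA)
  · exact CapSymm.J_strict_of_cap hs hA hfin (CapSymm.cap_op hop s hA)
      (CapSymm.equi_op hop s hA) hJ
  · obtain ⟨⟨R, hR⟩, hRv⟩ := hstar A hA hfin
    rw [hR] at hRv hJ ⊢
    exact CapSymm.J_star hA hfin hRv hJ
end
end
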